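/- arXiv:2006.01774 — 3 statements merged into one kernel-verified Lean document; each statement's English description precedes it below -/
import Mathlib

section
/- The set of rational points on the curve x⁴ + y⁴ = 17 is exactly the eight points (±2, ±1) and (±1, ±2); that is, {(x, y) ∈ ℚ × ℚ : x⁴ + y⁴ = 17} = {(2,1), (2,−1), (−2,1), (−2,−1), (1,2), (1,−2), (−1,2), (−1,−2)}. -/
/-!
A rational point gives coprime integers with `X⁴ + Y⁴ = 17 Z⁴`, and one may take `X` odd and `Y`
even. The identity `(17 Z² - 4 Y² - X²) (17 Z² + 4 Y² + X²) = (4 X² - Y²)²` and a congruence modulo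
`3` lead to coprime `a` and `b` with `X² = a² - 8 a b - b²`, `Y² = 4 a² + 2 a b - 4 b²` and
`Z² = a² + b²`, and everything reduces to showing `b = 0`.

If `b ≠ 0`, then `16 ∣ b`, and elementary descents in `ℤ[i]` and `ℤ[√17]` show that `a + r b` is a
square in `ℚ(i, √17)` for `r = i, -4 - √17, -4 + √17, (1 + √17) / 4`. If `g₁, g₂, g₃, g₄` are the
square roots, the sums `g₁ g₂ + g₃ g₄`, `g₁ g₃ + g₂ g₄` and `g₁ g₄ + g₂ g₃`, divided by `b`, are the
coordinates of a point `(a, b, c)` on a fixed intersection of two quadrics, a curve of genus one.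
Such points are halved by taking square roots of `(a + b) (a + c)`, `(a + b) (b + c)` and
`(a + c) (b + c)`. These products have even valuation away from `2` and `4 - i`, and two facts
control an element with this property.

* Product formula: the norms to `ℚ₂` of its images at the two places above `2` have a square as
  their product. This rests on unique factorization in `ℤ[i]` and on `1 + i` being a nonsquare
  modulo `4 + i`.
* Local-global principle: if it is `1` modulo `4 (1 + i)` at both places above `2`, it is a square.

When the signs of the `gᵢ` are compatible at both places, the point has denominator exactly `2 ^ m`
there and satisfies a congruence modulo `2`. By the two facts it can be halved, giving a point with
`m` replaced by `m - 1`, until `m = 2`, where the product formula fails modulo `8`. The other sign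
patterns violate the product formula at once.
-/

open IsDedekindDomain WithZero
open scoped QuadraticAlgebra

namespace QuarticSeventeen

/-! ### Even valuations -/

section EvenValuations

variable {Γ : Type*} [LinearOrderedCommGroupWithZero Γ]

lemma eq_of_le_of_le_of_mul_eq_sq {a b r : Γ} (ha : a ≤ r) (hb : b ≤ r) (hr : r ≠ 0)
    (h : a * b = r ^ 2) : a = r := by
  by_contra hne
  have : a * b < r * r :=
    mul_lt_mul_of_lt_of_le_of_nonneg_of_pos (ha.lt_of_ne hne) hb zero_le (zero_lt_iff.2 hr)
  exact this.ne (h.trans (pow_two r))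

lemma lt_of_lt_of_mul_eq_sq {a b r : Γ} (ha : r < a) (hr : r ≠ 0) (h : a * b = r ^ 2) :
    b < r := by
  by_contra! hb
  have : r * r < a * b :=
    mul_lt_mul_of_lt_of_le_of_nonneg_of_pos ha hb zero_le ((zero_lt_iff.2 hr).trans_le hb)
  exact this.ne' (h.trans (pow_two r))

variable {L : Type*} [Field L] (v : Valuation L Γ)

lemma map_add_le_or_lt_of_map_mul_eq_sq {x y : L} {r : Γ} (hr : r ≠ 0)
    (h : v (x * y) = r ^ 2) :
    (v (x + y) ≤ r ∧ v x = r) ∨ (r < v (x + y) ∧ (v x = v (x + y) ∨ v y = v (x + y))) := by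
  rw [map_mul] at h
  rcases lt_or_ge r (v x) with hx | hx
  · have hxy := v.map_add_eq_of_lt_left ((lt_of_lt_of_mul_eq_sq hx hr h).trans hx)
    exact .inr ⟨hxy ▸ hx, .inl hxy.symm⟩
  rcases lt_or_ge r (v y) with hy | hy
  · have hxy := v.map_add_eq_of_lt_right
      ((lt_of_lt_of_mul_eq_sq hy hr ((mul_comm _ _).trans h)).trans hy)
    exact .inr ⟨hxy ▸ hy, .inr hxy.symm⟩
  · exact .inl ⟨(v.map_add x y).trans (max_le hx hy), eq_of_le_of_le_of_mul_eq_sq hx hy hr h⟩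

-- The smaller of the valuations of `A`, `A'` agrees with the smaller of those of `B`, `B'`.
lemma isSquare_map_mul_of_add_eq_add {A A' B B' : L} {r : Γ} (hr : r ≠ 0)
    (h : A + A' = B + B') (hA : v (A * A') = r ^ 2) (hB : v (B * B') = r ^ 2) :
    IsSquare (v (A * B)) := by
  have hA' := map_add_le_or_lt_of_map_mul_eq_sq v hr hA
  have hB' := map_add_le_or_lt_of_map_mul_eq_sq v hr hB
  rw [← h] at hB'
  rw [map_mul] at hA hB ⊢
  rcases hA' with ⟨hle, hAr⟩ | ⟨hlt, hA'⟩ <;> rcases hB' with ⟨hle', hBr⟩ | ⟨hlt', hB'⟩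
  · exact ⟨r, by rw [hAr, hBr]⟩
  · exact absurd hle hlt'.not_ge
  · exact absurd hle' hlt.not_ge
  rcases hA' with hA' | hA' <;> rcases hB' with hB' | hB'
  · exact ⟨v A, by rw [hB', hA']⟩
  · exact ⟨r, by rw [hA', ← hB', mul_comm, hB, pow_two]⟩
  · exact ⟨r, by rw [hB', ← hA', hA, pow_two]⟩
  · have hv : v A' ≠ 0 := by rw [hA']; exact (zero_le.trans_lt hlt).ne'
    have : v A = v B := mul_right_cancel₀ hv (by rw [hA, hA', ← hB', hB])
    exact ⟨v A, by rw [this]⟩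

lemma map_natCast_le_one (n : ℕ) : v n ≤ 1 := natCast_mem v.integer n

lemma map_eq_one_of_sq_eq_neg_one {I : L} (hI : I ^ 2 = -1) : v I = 1 := by
  have : v I ^ 2 = 1 := by rw [← map_pow, hI, v.map_neg, map_one]
  exact (pow_eq_one_iff_of_nonneg zero_le two_ne_zero).1 this

lemma map_four_add_le_one {I : L} (hI : I ^ 2 = -1) : v (4 + I) ≤ 1 :=
  (v.map_add _ _).trans
    (max_le (map_natCast_le_one v 4) (map_eq_one_of_sq_eq_neg_one v hI).le)

lemma map_four_add_eq_map_sq {I t : L} (hI : I ^ 2 = -1) (ht : t ^ 2 = 17)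
    (h4 : v (4 - I) = 1) : v (4 + I) = v t ^ 2 := by
  rw [← map_pow, ht, show (17 : L) = (4 + I) * (4 - I) by linear_combination hI, map_mul, h4,
    mul_one]

/-- `x` has even valuation wherever all the elements of `S` are units: up to squares, `x` is an
ideal supported on the primes dividing `S`. -/
def EvenOutside (S : Set L) (x : L) : Prop :=
  ∀ v : Valuation L ℤᵐ⁰, (∀ s ∈ S, v s = 1) → IsSquare (v x)

variable {S : Set L} {x y : L}

lemma EvenOutside.mul (hx : EvenOutside S x) (hy : EvenOutside S y) : EvenOutside S (x * y) :=
  fun v hv ↦ by rw [map_mul]; exact (hx v hv).mul (hy v hv)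

lemma evenOutside_sq (x : L) : EvenOutside S (x ^ 2) :=
  fun v _ ↦ ⟨v x, by rw [map_pow, pow_two]⟩

lemma EvenOutside.of_mul_eq_sq {u : L} (hx : EvenOutside S x) (hx0 : x ≠ 0) (h : x * y = u ^ 2) :
    EvenOutside S y := by
  have hy : y = x * (u / x) ^ 2 := by
    rw [div_pow, ← h]
    field_simp
  exact hy ▸ hx.mul (evenOutside_sq _)

end EvenValuations

section Quadrics

variable {L Γ : Type*} [Field L] [LinearOrderedCommGroupWithZero Γ] {I t a b c : L}

/-- `(a, b, c)` lies on the intersection of two quadrics attached to the chosen square roots `I` of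
`-1` and `t` of `17`. The constants are those of the points arising from the curve. -/
structure OnQuadrics (I t a b c : L) : Prop where
  sq_sub_sq_snd : a ^ 2 - b ^ 2 = t * (1 + t - 4 * I) / 2
  sq_sub_sq_trd : a ^ 2 - c ^ 2 = t * (t + 5) * (t - 4 - I) / 4

lemma OnQuadrics.snd_sq_sub_sq_trd [CharZero L] (ht : t ^ 2 = 17) (h : OnQuadrics I t a b c) :
    b ^ 2 - c ^ 2 = t * (3 - t) * (4 + I + t) / 4 := by
  linear_combination h.sq_sub_sq_trd - h.sq_sub_sq_snd + t / 2 * ht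

variable (v : Valuation L Γ) (hI : I ^ 2 = -1) (ht : t ^ 2 = 17) (h2 : v 2 = 1)
  (h4 : v (4 - I) = 1)

lemma map_sub_eq_and_map_add_eq {x t : L} {r : Γ} (hr : r ≠ 0) (hx : v x ≤ r) (ht : v t ≤ r)
    (h : v (x ^ 2 - t ^ 2) = r ^ 2) : v (x - t) = r ∧ v (x + t) = r := by
  have hsub : v (x - t) ≤ r := (v.map_sub _ _).trans (max_le hx ht)
  have hadd : v (x + t) ≤ r := (v.map_add _ _).trans (max_le hx ht)
  rw [sq_sub_sq, map_mul] at h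
  exact ⟨eq_of_le_of_le_of_mul_eq_sq hsub hadd hr ((mul_comm _ _).trans h),
    eq_of_le_of_le_of_mul_eq_sq hadd hsub hr h⟩

include ht

lemma map_sqrt_ne_zero [CharZero L] : v t ≠ 0 := by
  rw [v.ne_zero_iff]
  rintro rfl
  norm_num at ht

lemma map_sqrt_le_one : v t ≤ 1 := by
  have : v t ^ 2 ≤ 1 := by rw [← map_pow, ht]; exact map_natCast_le_one v 17
  exact (pow_le_one_iff_of_nonneg zero_le two_ne_zero).1 this

include h2 in
lemma map_natCast_sub_eq_one {n : ℕ} (hn : (n : L) ^ 2 - 17 = 2 ^ 3 ∨ (n : L) ^ 2 - 17 = -2 ^ 3) :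
    v (n - t) = 1 ∧ v (n + t) = 1 := by
  refine map_sub_eq_and_map_add_eq v one_ne_zero (map_natCast_le_one v n) (map_sqrt_le_one v ht) ?_
  rcases hn with hn | hn <;> simp only [ht, hn, v.map_neg, map_pow, h2, one_pow]

include hI h2 h4

variable [CharZero L]

lemma map_four_add_sub_sqrt : v (4 + I - t) = v t ∧ v (4 + I + t) = v t := by
  have hI1 := map_eq_one_of_sq_eq_neg_one v hI
  have h4t := map_four_add_eq_map_sq v hI ht h4
  refine map_sub_eq_and_map_add_eq v (map_sqrt_ne_zero v ht) ?_ le_rfl ?_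
  · rw [h4t]; exact pow_le_of_le_one zero_le (map_sqrt_le_one v ht) two_ne_zero
  · rw [show (4 + I) ^ 2 - t ^ 2 = 2 * I * (4 + I) by linear_combination -hI - ht,
      map_mul, map_mul, h2, hI1, h4t, one_mul, one_mul]

lemma map_one_add_sqrt_sub : v (1 + t - 4 * I) = v t := by
  have hI1 := map_eq_one_of_sq_eq_neg_one v hI
  have h4t := map_four_add_eq_map_sq v hI ht h4
  have h1 : 1 - 4 * I = -(I * (4 + I)) := by linear_combination hI
  have hv : v (1 - 4 * I) = v t ^ 2 := by rw [h1, v.map_neg, map_mul, hI1, h4t, one_mul]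
  rw [add_sub_right_comm]
  refine (map_sub_eq_and_map_add_eq v (map_sqrt_ne_zero v ht) ?_ le_rfl ?_).2
  · rw [hv]; exact pow_le_of_le_one zero_le (map_sqrt_le_one v ht) two_ne_zero
  · rw [show (1 - 4 * I) ^ 2 - t ^ 2 = -(2 ^ 3 * (4 + I)) by linear_combination 16 * hI - ht,
      v.map_neg, map_mul, map_pow, h2, h4t, one_pow, one_mul]

namespace OnQuadrics

variable (h : OnQuadrics I t a b c)
include h

lemma map_sq_sub_sq_snd : v (a ^ 2 - b ^ 2) = v t ^ 2 := by
  rw [h.sq_sub_sq_snd, map_div₀, map_mul, h2, map_one_add_sqrt_sub v hI ht h2 h4, div_one,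
    pow_two]

lemma map_sq_sub_sq_trd : v (a ^ 2 - c ^ 2) = v t ^ 2 := by
  have h5 := (map_natCast_sub_eq_one v ht h2 (n := 5) (.inl (by norm_num))).2
  rw [add_comm, Nat.cast_ofNat] at h5
  have hv4 : v 4 = 1 := by rw [show (4 : L) = 2 ^ 2 by norm_num, map_pow, h2, one_pow]
  rw [h.sq_sub_sq_trd, sub_sub, v.map_div, map_mul, map_mul, h5, hv4, v.map_sub_swap,
    (map_four_add_sub_sqrt v hI ht h2 h4).1, mul_one, div_one, pow_two]

lemma map_snd_sq_sub_sq_trd : v (b ^ 2 - c ^ 2) = v t ^ 2 := by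
  have h3 := (map_natCast_sub_eq_one v ht h2 (n := 3) (.inr (by norm_num))).1
  rw [Nat.cast_ofNat] at h3
  have hv4 : v 4 = 1 := by rw [show (4 : L) = 2 ^ 2 by norm_num, map_pow, h2, one_pow]
  rw [h.snd_sq_sub_sq_trd ht, map_div₀, map_mul, map_mul, h3, hv4,
    (map_four_add_sub_sqrt v hI ht h2 h4).2, mul_one, div_one, pow_two]

lemma isSquare_map_fst_mul : IsSquare (v ((a + b) * (a + c))) := by
  refine isSquare_map_mul_of_add_eq_add v (map_sqrt_ne_zero v ht) (A' := a - b) (B' := a - c)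
    (by ring) ?_ ?_
  · rw [← sq_sub_sq, h.map_sq_sub_sq_snd v hI ht h2 h4]
  · rw [← sq_sub_sq, h.map_sq_sub_sq_trd v hI ht h2 h4]

lemma isSquare_map_snd_mul : IsSquare (v ((a + b) * (b + c))) := by
  rw [add_comm a b]
  refine isSquare_map_mul_of_add_eq_add v (map_sqrt_ne_zero v ht) (A' := b - a) (B' := b - c)
    (by ring) ?_ ?_
  · rw [← sq_sub_sq, v.map_sub_swap, h.map_sq_sub_sq_snd v hI ht h2 h4]
  · rw [← sq_sub_sq, h.map_snd_sq_sub_sq_trd v hI ht h2 h4]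

end OnQuadrics

end Quadrics

/-! ### The field `ℚ(i, √17)` -/

section Fields

/-- The field `ℚ(i)`. -/
abbrev F : Type := FractionRing GaussianInt

lemma sq_ne_seventeen (z : GaussianInt) : z ^ 2 ≠ 17 := by
  intro h
  have hre : z.re * z.re - z.im * z.im = 17 := by
    have := congrArg Zsqrtd.re h
    rw [pow_two, Zsqrtd.re_mul] at this
    change _ = (17 : ℤ) at this
    linarith
  have him : z.re * z.im = 0 := by
    have := congrArg Zsqrtd.im h
    rw [pow_two, Zsqrtd.im_mul] at this
    change _ = (0 : ℤ) at this
    linarith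
  rcases mul_eq_zero.1 him with h0 | h0 <;> rw [h0] at hre
  · nlinarith [mul_self_nonneg z.im]
  · have : z.re ≤ 4 := by nlinarith
    have : -4 ≤ z.re := by nlinarith
    interval_cases z.re <;> omega

lemma sq_ne_seventeen_of_fractionRing (r : F) : r ^ 2 ≠ 17 := by
  intro h
  rw [← map_ofNat (algebraMap GaussianInt F) 17] at h
  obtain ⟨z, rfl⟩ := IsIntegrallyClosed.exists_algebraMap_eq_of_isIntegral_pow (R := GaussianInt)
    two_pos (h ▸ isIntegral_algebraMap)
  exact sq_ne_seventeen z (IsFractionRing.injective GaussianInt F (by rw [map_pow, h]))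

instance : Fact (∀ r : F, r ^ 2 ≠ 17 + 0 * r) :=
  ⟨fun r h ↦ sq_ne_seventeen_of_fractionRing r (by rwa [zero_mul, add_zero] at h)⟩

/-- The field `ℚ(i, √17)`, as a quadratic extension of `ℚ(i)`. -/
abbrev K : Type := QuadraticAlgebra F 17 0

/-- The square root of `17` in `ℚ(i, √17)`. -/
abbrev sqrt17 : K := QuadraticAlgebra.omega

/-- The square root of `-1` in `ℚ(i, √17)`. -/
noncomputable abbrev I : K := algebraMap GaussianInt K ⟨0, 1⟩

lemma sqrt17_sq : sqrt17 ^ 2 = 17 := by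
  rw [pow_two, QuadraticAlgebra.omega_mul_omega_eq_mk]
  rfl

lemma I_sq : I ^ 2 = -1 := by
  rw [← map_pow, ← map_one (algebraMap GaussianInt K), ← map_neg]
  rfl

lemma four_sub_I : 4 - I = algebraMap GaussianInt K ⟨4, -1⟩ := by
  rw [← map_ofNat (algebraMap GaussianInt K) 4, ← map_sub]
  rfl

end Fields

/-! ### Valuations of `ℚ(i, √17)` -/

section RingOfIntegers

/-- The ring of integers of `ℚ(i, √17)`. -/
abbrev R : Type := integralClosure GaussianInt K

instance : IsFractionRing R K := integralClosure.isFractionRing_of_finite_extension F K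

instance : Module.Finite GaussianInt R := IsIntegralClosure.finite GaussianInt F K R

instance : IsDedekindDomain R := inferInstance

lemma isIntegral_sqrt17 : IsIntegral GaussianInt sqrt17 := by
  refine .of_pow two_pos ?_
  rw [sqrt17_sq, ← map_ofNat (algebraMap GaussianInt K) 17]
  exact isIntegral_algebraMap

/-- `√17` as an algebraic integer. -/
def integralSqrt17 : R := ⟨sqrt17, isIntegral_sqrt17⟩

lemma adjoin_sqrt17 : Algebra.adjoin F {sqrt17} = ⊤ := by
  refine Algebra.eq_top_iff.2 fun x ↦ ?_
  rw [show x = ⟨x.re, x.im⟩ from rfl, QuadraticAlgebra.mk_eq_add_smul_omega]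
  exact add_mem (algebraMap_mem _ _)
    (Subalgebra.smul_mem _ (Algebra.self_mem_adjoin_singleton F _) _)

open Polynomial in
lemma minpoly_integralSqrt17 : minpoly GaussianInt integralSqrt17 = X ^ 2 - 17 := by
  have hirr : Irreducible (X ^ 2 - C (17 : F)) :=
    (X_pow_sub_C_irreducible_iff_of_prime Nat.prime_two).2 sq_ne_seventeen_of_fractionRing
  have hroot : aeval sqrt17 (X ^ 2 - C (17 : F)) = 0 := by
    rw [map_sub, map_pow, aeval_X, sqrt17_sq, aeval_C, map_ofNat, sub_self]
  have hF := minpoly.eq_of_irreducible_of_monic hirr hroot (monic_X_pow_sub_C _ two_ne_zero)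
  have hintegral : IsIntegral GaussianInt integralSqrt17 := Algebra.IsIntegral.isIntegral _
  apply map_injective (algebraMap GaussianInt F) (IsFractionRing.injective _ _)
  rw [← minpoly.isIntegrallyClosed_eq_field_fractions F K hintegral]
  change minpoly F sqrt17 = _
  rw [← hF, Polynomial.map_sub, Polynomial.map_pow, map_X, Polynomial.map_ofNat, map_ofNat]

open Polynomial in
lemma two_mul_sqrt17_mem_differentIdeal :
    2 * integralSqrt17 ∈ differentIdeal GaussianInt R := by
  have := aeval_derivative_mem_differentIdeal GaussianInt F K integralSqrt17 adjoin_sqrt17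
  rw [minpoly_integralSqrt17] at this
  rwa [derivative_sub, derivative_X_pow, derivative_ofNat, sub_zero, map_mul, aeval_C,
    Nat.cast_ofNat, map_ofNat, pow_one, aeval_X] at this

lemma exists_liesOver (p : HeightOneSpectrum GaussianInt) :
    ∃ P : HeightOneSpectrum R, P.asIdeal.LiesOver p.asIdeal := by
  have := p.isMaximal
  obtain ⟨Q, hQ, hQp⟩ := Ideal.exists_maximal_ideal_liesOver_of_isIntegral (S := R) p.asIdeal
  exact ⟨⟨Q, hQ.isPrime, Ideal.ne_bot_of_liesOver_of_ne_bot p.ne_bot Q⟩, hQp⟩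

attribute [local instance] FractionRing.liftAlgebra in
lemma valuation_two_mul_sqrt17_le (p : HeightOneSpectrum GaussianInt) (P : HeightOneSpectrum R)
    [P.asIdeal.LiesOver p.asIdeal] :
    P.valuation K (2 * sqrt17) ≤ exp (-((p.asIdeal.ramificationIdx' P.asIdeal - 1 : ℕ) : ℤ)) := by
  have := p.isMaximal
  have hdvd := pow_sub_one_dvd_differentIdeal GaussianInt P.asIdeal
    (p.asIdeal.ramificationIdx' P.asIdeal) p.ne_bot
    (Ideal.dvd_iff_le.2 Ideal.le_pow_ramificationIdx')
  have hmem := Ideal.dvd_iff_le.1 hdvd two_mul_sqrt17_mem_differentIdeal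
  rwa [← P.intValuation_le_pow_iff_mem, ← P.valuation_of_algebraMap (K := K)] at hmem

lemma map_sqrt17_sq {Γ : Type*} [LinearOrderedCommGroupWithZero Γ] (v : Valuation K Γ) :
    v sqrt17 ^ 2 = v 17 := by
  rw [← map_pow, sqrt17_sq]

lemma exists_valuation_over (p : HeightOneSpectrum GaussianInt) (h2 : p.valuation F 2 = 1)
    (h17 : p.valuation F 17 = 1) :
    ∃ v : Valuation K ℤᵐ⁰, ∀ x : F, v (algebraMap F K x) = p.valuation F x := by
  obtain ⟨P, hP⟩ := exists_liesOver p
  have hmap := HeightOneSpectrum.valuation_liesOver (K := F) K p P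
  have hle := valuation_two_mul_sqrt17_le p P
  have he := Ideal.IsDedekindDomain.ramificationIdx'_ne_zero_of_liesOver P.asIdeal p.ne_bot
  generalize p.asIdeal.ramificationIdx' P.asIdeal = e at hmap hle he
  have hv2 : P.valuation K 2 = 1 := by
    rw [← map_ofNat (algebraMap F K) 2, ← hmap, h2, one_pow]
  have hvs : P.valuation K sqrt17 = 1 := by
    have : P.valuation K sqrt17 ^ 2 = 1 := by
      rw [map_sqrt17_sq, ← map_ofNat (algebraMap F K) 17, ← hmap, h17, one_pow]
    exact (pow_eq_one_iff_of_nonneg zero_le two_ne_zero).1 this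
  rw [map_mul, hv2, hvs, one_mul, ← exp_zero, exp_le_exp] at hle
  obtain rfl : e = 1 := by omega
  exact ⟨P.valuation K, fun x ↦ by rw [← hmap, pow_one]⟩

end RingOfIntegers

section PrimeSpan

variable {A : Type*} [CommRing A] [IsDedekindDomain A] {q : A} (hq : Prime q)

/-- The place of a Dedekind domain given by a prime element. -/
def primePlace : HeightOneSpectrum A := .ofPrime (Ideal.prime_span_singleton_iff.2 hq)

variable {k : Type*} [Field k] [Algebra A k] [IsFractionRing A k]

lemma primePlace_valuation_self :
    (primePlace hq).valuation k (algebraMap A k q) = exp (-1 : ℤ) := by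
  rw [HeightOneSpectrum.valuation_of_algebraMap,
    HeightOneSpectrum.intValuation_singleton _ hq.ne_zero rfl]

lemma primePlace_valuation_eq_one_iff {z : A} :
    (primePlace hq).valuation k (algebraMap A k z) = 1 ↔ ¬ q ∣ z := by
  rw [HeightOneSpectrum.valuation_eq_one_iff_notMem]
  exact Ideal.mem_span_singleton.not

end PrimeSpan

section GaussianPrimes

lemma gaussianInt_prime_of_norm {z : GaussianInt} (h : z.norm.natAbs.Prime) : Prime z := by
  rw [← irreducible_iff_prime]
  refine ⟨fun hu ↦ ?_, fun a b hab ↦ ?_⟩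
  · rw [← Zsqrtd.norm_eq_one_iff] at hu
    exact Nat.not_prime_one (hu ▸ h)
  · rw [hab, Zsqrtd.norm_mul, Int.natAbs_mul, Nat.prime_mul_iff] at h
    rcases h with h | h
    · exact .inr (Zsqrtd.norm_eq_one_iff.1 h.2)
    · exact .inl (Zsqrtd.norm_eq_one_iff.1 h.2)

lemma prime_four_add_I : Prime (⟨4, 1⟩ : GaussianInt) :=
  gaussianInt_prime_of_norm (by norm_num [Zsqrtd.norm])

lemma four_add_I_dvd_iff (z : GaussianInt) : ⟨4, 1⟩ ∣ z ↔ (17 : ℤ) ∣ z.re - 4 * z.im := by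
  constructor
  · rintro ⟨k, rfl⟩
    rw [Zsqrtd.re_mul, Zsqrtd.im_mul]
    exact ⟨-k.im, by ring⟩
  · rintro ⟨k, hk⟩
    refine ⟨⟨4 * k + z.im, -k⟩, ?_⟩
    ext
    · rw [Zsqrtd.re_mul]
      linarith
    · rw [Zsqrtd.im_mul]
      linarith

lemma seventeen_eq_mul :
    (17 : F) = algebraMap GaussianInt F ⟨4, 1⟩ * algebraMap GaussianInt F ⟨4, -1⟩ := by
  rw [← map_mul, ← map_ofNat (algebraMap GaussianInt F) 17]
  rfl

lemma eq_exp_neg_one_of_sq_eq {x : ℤᵐ⁰} {e : ℕ} (he : e ≠ 0)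
    (hx : x ^ 2 = exp (-1 : ℤ) ^ e) (hle : x ≤ exp (-((e - 1 : ℕ) : ℤ))) : x = exp (-1 : ℤ) := by
  have hx0 : x ≠ 0 := by
    rintro rfl
    rw [← exp_nsmul, zero_pow two_ne_zero] at hx
    exact exp_ne_zero hx.symm
  rw [← exp_log hx0, ← exp_nsmul, ← exp_nsmul, exp_inj] at hx
  rw [← exp_log hx0, exp_le_exp] at hle
  rw [← exp_log hx0, exp_inj]
  simp only [nsmul_eq_mul] at hx
  omega

lemma exists_valuation_sqrt17_eq :
    ∃ v : Valuation K ℤᵐ⁰, v sqrt17 = exp (-1 : ℤ) ∧ v 2 = 1 ∧ v (4 - I) = 1 := by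
  let p := primePlace prime_four_add_I
  have hv (z : GaussianInt) (hz : ¬ (17 : ℤ) ∣ z.re - 4 * z.im) :
      p.valuation F (algebraMap GaussianInt F z) = 1 :=
    (primePlace_valuation_eq_one_iff _).2 ((four_add_I_dvd_iff z).not.2 hz)
  have h17 : p.valuation F 17 = exp (-1 : ℤ) := by
    rw [seventeen_eq_mul, map_mul, hv ⟨4, -1⟩ (by decide), mul_one, primePlace_valuation_self]
  obtain ⟨P, hP⟩ := exists_liesOver p
  have hmap := HeightOneSpectrum.valuation_liesOver (K := F) K p P
  have hle := valuation_two_mul_sqrt17_le p P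
  have he := Ideal.IsDedekindDomain.ramificationIdx'_ne_zero_of_liesOver P.asIdeal p.ne_bot
  generalize p.asIdeal.ramificationIdx' P.asIdeal = e at hmap hle he
  have hV (z : GaussianInt) (hz : ¬ (17 : ℤ) ∣ z.re - 4 * z.im) :
      P.valuation K (algebraMap GaussianInt K z) = 1 := by
    rw [IsScalarTower.algebraMap_apply GaussianInt F K, ← hmap, hv z hz, one_pow]
  have hV2 : P.valuation K 2 = 1 := by
    rw [← map_ofNat (algebraMap GaussianInt K) 2, hV 2 (by decide)]
  rw [map_mul, hV2, one_mul] at hle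
  refine ⟨P.valuation K, eq_exp_neg_one_of_sq_eq he ?_ hle, hV2, ?_⟩
  · rw [map_sqrt17_sq, ← map_ofNat (algebraMap F K) 17, ← hmap, h17]
  · rw [← hV ⟨4, -1⟩ (by decide), four_sub_I]

end GaussianPrimes

/-! ### Gaussian numbers modulo squares -/

section SquarefreePart

variable {A : Type*} [CommRing A] [WfDvdMonoid A]

lemma exists_squarefree_mul_sq_of_ne_zero {z : A} (hz : z ≠ 0) :
    ∃ s y : A, Squarefree s ∧ z = s * y ^ 2 := by
  induction z using (wellFounded_dvdNotUnit (α := A)).induction with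
  | _ z ih =>
  by_cases hsq : Squarefree z
  · exact ⟨z, 1, hsq, by rw [one_pow, mul_one]⟩
  simp only [Squarefree, not_forall] at hsq
  obtain ⟨d, ⟨c, rfl⟩, hd⟩ := hsq
  have hc : c ≠ 0 := right_ne_zero_of_mul hz
  obtain ⟨s, y, hs, hcy⟩ := ih c
    ⟨hc, d * d, fun hu ↦ hd (isUnit_of_mul_isUnit_left hu), mul_comm _ _⟩ hc
  exact ⟨s, d * y, hs, by rw [hcy]; ring⟩

variable [IsDomain A] {k : Type*} [Field k] [Algebra A k] [IsFractionRing A k]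

lemma exists_squarefree_mul_sq {f : k} (hf : f ≠ 0) :
    ∃ s : A, ∃ y : k, Squarefree s ∧ y ≠ 0 ∧ f = algebraMap A k s * y ^ 2 := by
  obtain ⟨x, d, hd, rfl⟩ := IsFractionRing.div_surjective (A := A) f
  have hd0 : algebraMap A k d ≠ 0 := IsFractionRing.to_map_ne_zero_of_mem_nonZeroDivisors hd
  have hxd : x * d ≠ 0 := by
    rintro h
    have := congrArg (algebraMap A k) h
    rw [map_mul, map_zero] at this
    exact (div_ne_zero_iff.1 hf).1 ((mul_eq_zero.1 this).resolve_right hd0)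
  obtain ⟨s, y, hs, h⟩ := exists_squarefree_mul_sq_of_ne_zero hxd
  have hfy : algebraMap A k x / algebraMap A k d =
      algebraMap A k s * (algebraMap A k y / algebraMap A k d) ^ 2 := by
    have := congrArg (algebraMap A k) h
    rw [map_mul, map_mul, map_pow] at this
    field_simp
    exact this
  refine ⟨s, _, hs, fun hy ↦ hf ?_, hfy⟩
  rw [hfy, hy, zero_pow two_ne_zero, mul_zero]

end SquarefreePart

lemma not_isSquare_exp_neg_one : ¬ IsSquare (exp (-1 : ℤ)) := by
  rintro ⟨r, hr⟩
  have hr0 : r ≠ 0 := by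
    rintro rfl
    exact exp_ne_zero (hr.trans (mul_zero 0))
  rw [← exp_log hr0, ← exp_add, exp_inj] at hr
  lia

lemma not_isSquare_valuation_of_squarefree {A k : Type*} [CommRing A] [IsDedekindDomain A]
    [Field k] [Algebra A k] [IsFractionRing A k] {q s : A} (hq : Prime q) (hs : Squarefree s)
    (hqs : q ∣ s) : ¬ IsSquare ((primePlace hq).valuation k (algebraMap A k s)) := by
  obtain ⟨t, rfl⟩ := hqs
  have hqt : ¬ q ∣ t := fun h ↦ hq.not_isUnit (hs q (mul_dvd_mul_left q h))
  rw [map_mul, map_mul, primePlace_valuation_self, (primePlace_valuation_eq_one_iff hq).2 hqt,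
    mul_one]
  exact not_isSquare_exp_neg_one

section PowProd

/-- The Gaussian integer `i ^ a * (1 + i) ^ c * (4 + i) ^ b * (4 - i) ^ e`: up to squares, these are
the Gaussian numbers with even valuation away from `34`. -/
def powProd (a c b e : ℕ) : GaussianInt := ⟨0, 1⟩ ^ a * ⟨1, 1⟩ ^ c * ⟨4, 1⟩ ^ b * ⟨4, -1⟩ ^ e

lemma powProd_add (a c b e a' c' b' e' : ℕ) :
    powProd (a + a') (c + c') (b + b') (e + e') = powProd a c b e * powProd a' c' b' e' := by
  simp only [powProd, pow_add]
  ring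

lemma exists_eq_I_pow_of_isUnit {z : GaussianInt} (hz : IsUnit z) : ∃ a : ℕ, z = ⟨0, 1⟩ ^ a := by
  have hnorm := Zsqrtd.norm_eq_one_iff.2 hz
  have h1 : z.re * z.re + z.im * z.im = 1 := by
    have := GaussianInt.abs_natCast_norm z
    rw [hnorm, Zsqrtd.norm_def] at this
    push_cast at this
    linarith
  obtain ⟨x, y⟩ := z
  simp only at h1
  have : x ≤ 1 := by nlinarith
  have : -1 ≤ x := by nlinarith
  have : y ≤ 1 := by nlinarith
  have : -1 ≤ y := by nlinarith
  interval_cases x <;> interval_cases y <;> first | omega | skip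
  · exact ⟨2, by decide⟩
  · exact ⟨3, by decide⟩
  · exact ⟨1, by decide⟩
  · exact ⟨0, by decide⟩

lemma prime_one_add_I : Prime (⟨1, 1⟩ : GaussianInt) := gaussianInt_prime_of_norm (by decide)

lemma prime_four_sub_I : Prime (⟨4, -1⟩ : GaussianInt) :=
  gaussianInt_prime_of_norm (by norm_num [Zsqrtd.norm])

lemma exists_eq_powProd_of_prime {q : GaussianInt} (hq : Prime q) (h34 : q ∣ 34) :
    ∃ a c b e : ℕ, q = powProd a c b e := by
  have hassoc {p : GaussianInt} (hp : Prime p) (hqp : q ∣ p) : ∃ a : ℕ, q = ⟨0, 1⟩ ^ a * p := by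
    obtain ⟨u, rfl⟩ := hp.associated_of_dvd hq
      (((hq.irreducible.dvd_irreducible_iff_associated hp.irreducible).1 hqp).dvd')
    obtain ⟨a, ha⟩ := exists_eq_I_pow_of_isUnit u.isUnit
    exact ⟨a, by rw [ha, mul_comm]⟩
  rw [show (34 : GaussianInt) = ⟨0, -1⟩ * ⟨1, 1⟩ ^ 2 * (⟨4, 1⟩ * ⟨4, -1⟩) by decide] at h34
  have hnot : ¬ q ∣ ⟨0, -1⟩ := fun h ↦
    hq.not_isUnit (isUnit_of_dvd_unit h (.of_mul_eq_one ⟨0, 1⟩ (by decide)))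
  rcases hq.dvd_or_dvd h34 with h | h
  · obtain ⟨a, ha⟩ := hassoc prime_one_add_I
      (hq.dvd_of_dvd_pow ((hq.dvd_or_dvd h).resolve_left hnot))
    exact ⟨a, 1, 0, 0, by rw [ha, powProd]; ring⟩
  rcases hq.dvd_or_dvd h with h | h
  · obtain ⟨a, ha⟩ := hassoc prime_four_add_I h
    exact ⟨a, 0, 1, 0, by rw [ha, powProd]; ring⟩
  · obtain ⟨a, ha⟩ := hassoc prime_four_sub_I h
    exact ⟨a, 0, 0, 1, by rw [ha, powProd]; ring⟩

lemma exists_eq_powProd {z : GaussianInt} (hz : z ≠ 0)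
    (h : ∀ q, Prime q → q ∣ z → q ∣ 34) : ∃ a c b e : ℕ, z = powProd a c b e := by
  induction z using UniqueFactorizationMonoid.induction_on_prime with
  | h₁ => exact absurd rfl hz
  | h₂ x hx =>
    obtain ⟨a, rfl⟩ := exists_eq_I_pow_of_isUnit hx
    exact ⟨a, 0, 0, 0, by simp only [powProd, pow_zero, mul_one]⟩
  | h₃ x q hx hq ih =>
    obtain ⟨a, c, b, e, rfl⟩ := ih hx fun p hp hpx ↦ h p hp (hpx.mul_left q)
    obtain ⟨a', c', b', e', hqp⟩ := exists_eq_powProd_of_prime hq (h q hq (dvd_mul_right q _))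
    exact ⟨_, _, _, _, by rw [hqp, ← powProd_add]⟩

lemma EvenOutside.exists_powProd_mul_sq {f : F} (hf : f ≠ 0)
    (h : EvenOutside {2, 17} (algebraMap F K f)) :
    ∃ a c b e : ℕ, ∃ y : F, y ≠ 0 ∧ f = algebraMap _ F (powProd a c b e) * y ^ 2 := by
  obtain ⟨s, y, hs, hy, hfs⟩ := exists_squarefree_mul_sq (A := GaussianInt) hf
  suffices ∃ a c b e : ℕ, s = powProd a c b e by
    obtain ⟨a, c, b, e, rfl⟩ := this
    exact ⟨a, c, b, e, y, hy, hfs⟩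
  refine exists_eq_powProd hs.ne_zero fun q hq hqs ↦ ?_
  by_contra h34
  have hq1 (n : ℕ) [n.AtLeastTwo] (hn : n ∣ 34) :
      (primePlace hq).valuation F (OfNat.ofNat n) = 1 := by
    rw [← map_ofNat (algebraMap GaussianInt F) n, primePlace_valuation_eq_one_iff]
    refine fun hqn ↦ h34 (hqn.trans ?_)
    exact_mod_cast Nat.cast_dvd_cast (α := GaussianInt) hn
  obtain ⟨v, hv⟩ := exists_valuation_over (primePlace hq) (hq1 2 (by decide)) (hq1 17 (by decide))
  have heven : IsSquare (v (algebraMap F K f)) := by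
    refine h v fun n hn ↦ ?_
    rcases hn with rfl | rfl
    · rw [← map_ofNat (algebraMap F K), hv, hq1 2 (by decide)]
    · rw [← map_ofNat (algebraMap F K), hv, hq1 17 (by decide)]
  rw [hv, hfs, map_mul, map_pow] at heven
  refine not_isSquare_valuation_of_squarefree (k := F) hq hs hqs ?_
  have hvy : (primePlace hq).valuation F y ^ 2 ≠ 0 :=
    pow_ne_zero 2 ((Valuation.ne_zero_iff _).2 hy)
  rw [← mul_div_cancel_right₀ ((primePlace hq).valuation F _) hvy]
  exact heven.div (.sq _)

end PowProd

/-! ### Norms from `ℚ(i, √17)` modulo `4 + i` -/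

section Norm

instance : Fact (Nat.Prime 17) := ⟨by norm_num⟩

/-- Reduction modulo `4 + i`. -/
def modFourAddI : GaussianInt →+* ZMod 17 := Zsqrtd.lift ⟨-4, by decide⟩

lemma modFourAddI_eq_zero_iff (z : GaussianInt) : modFourAddI z = 0 ↔ ⟨4, 1⟩ ∣ z := by
  have : modFourAddI z = ((z.re - 4 * z.im : ℤ) : ZMod 17) := by
    change (z.re : ZMod 17) + z.im * (-4) = _
    push_cast
    ring
  rw [this, ZMod.intCast_zmod_eq_zero_iff_dvd, four_add_I_dvd_iff]
  rfl

lemma four_add_I_dvd_of_norm_eq {k : GaussianInt}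
    (hk : ∀ x y : ZMod 17, x ^ 2 = modFourAddI k * y ^ 2 → y = 0) {α β h : GaussianInt}
    (e : α ^ 2 - 17 * β ^ 2 = k * h ^ 2) : ⟨4, 1⟩ ∣ α ∧ ⟨4, 1⟩ ∣ β ∧ ⟨4, 1⟩ ∣ h := by
  have h17 : (17 : GaussianInt) = ⟨4, 1⟩ * ⟨4, -1⟩ := by decide
  have hp := prime_four_add_I
  have emod : modFourAddI α ^ 2 = modFourAddI k * modFourAddI h ^ 2 := by
    have := congrArg modFourAddI e
    rwa [map_sub, map_mul modFourAddI 17, (modFourAddI_eq_zero_iff 17).2 ⟨_, h17⟩, zero_mul,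
      sub_zero, map_mul, map_pow, map_pow] at this
  have hh := hk _ _ emod
  rw [hh, zero_pow two_ne_zero, mul_zero, sq_eq_zero_iff] at emod
  obtain ⟨h', rfl⟩ := (modFourAddI_eq_zero_iff h).1 hh
  obtain ⟨α', rfl⟩ := (modFourAddI_eq_zero_iff α).1 emod
  refine ⟨dvd_mul_right _ _, ?_, dvd_mul_right _ _⟩
  have hβ : ⟨4, -1⟩ * β ^ 2 = (⟨4, 1⟩ : GaussianInt) * (α' ^ 2 - k * h' ^ 2) := by
    refine mul_left_cancel₀ hp.ne_zero ?_
    rw [h17] at e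
    linear_combination -e
  exact hp.dvd_of_dvd_pow ((hp.dvd_or_dvd ⟨_, hβ⟩).resolve_left
    ((four_add_I_dvd_iff _).not.2 (by decide)))

lemma eq_zero_of_norm_eq {k : GaussianInt}
    (hk : ∀ x y : ZMod 17, x ^ 2 = modFourAddI k * y ^ 2 → y = 0) {α β h : GaussianInt}
    (e : α ^ 2 - 17 * β ^ 2 = k * h ^ 2) : h = 0 := by
  by_contra hh
  induction h using (wellFounded_dvdNotUnit (α := GaussianInt)).induction generalizing α β with
  | _ h ih =>
  obtain ⟨⟨α, rfl⟩, ⟨β, rfl⟩, ⟨h, rfl⟩⟩ := four_add_I_dvd_of_norm_eq hk e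
  have hp := prime_four_add_I
  have hh' : h ≠ 0 := right_ne_zero_of_mul hh
  refine ih h ⟨hh', _, hp.not_isUnit, mul_comm _ _⟩ (α := α) (β := β) ?_ hh'
  refine mul_left_cancel₀ (pow_ne_zero 2 hp.ne_zero) ?_
  linear_combination e

-- Modulo `4 + i`, the elements `i` and `4 - i` are squares and `1 + i` is not.
lemma modFourAddI_powProd_nonsquare {a c e : ℕ} (hc : Odd c) (x y : ZMod 17)
    (h : x ^ 2 = modFourAddI (powProd a c 0 e) * y ^ 2) : y = 0 := by
  obtain ⟨c, rfl⟩ := hc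
  obtain ⟨p, hp0, hp⟩ : ∃ p, p ≠ 0 ∧ modFourAddI ⟨0, 1⟩ = p ^ 2 := ⟨8, by decide, by decide⟩
  obtain ⟨q, hq0, hq⟩ : ∃ q, q ≠ 0 ∧ modFourAddI ⟨1, 1⟩ = 3 * q ^ 2 :=
    ⟨4, by decide, by decide⟩
  obtain ⟨r, hr0, hr⟩ : ∃ r, r ≠ 0 ∧ modFourAddI ⟨4, -1⟩ = r ^ 2 := ⟨5, by decide, by decide⟩
  have hk : modFourAddI (powProd a (2 * c + 1) 0 e) =
      3 * (p ^ a * (3 * q ^ 2) ^ c * r ^ e * q) ^ 2 := by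
    simp only [powProd, map_mul, map_pow, hp, hq, hr]
    ring
  rw [hk, mul_assoc, ← mul_pow] at h
  have h3 : ∀ x y : ZMod 17, x ^ 2 = 3 * y ^ 2 → y = 0 := by decide
  have h30 : (3 : ZMod 17) ≠ 0 := by decide
  exact (mul_eq_zero.1 (h3 _ _ h)).resolve_left (mul_ne_zero (mul_ne_zero (mul_ne_zero
    (pow_ne_zero _ hp0) (pow_ne_zero _ (mul_ne_zero h30 (pow_ne_zero _ hq0)))) (pow_ne_zero _ hr0))
    hq0)

lemma even_of_norm_eq_powProd_mul_sq {α β h : GaussianInt} {a c b e : ℕ} (hh : h ≠ 0)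
    (H : α ^ 2 - 17 * β ^ 2 = powProd a c b e * h ^ 2) : Even c := by
  wlog hb : Even b generalizing α β a b e
  · -- multiply by `i√17`, whose norm is `17 = (4 + i) * (4 - i)`
    refine this (α := 17 * β) (β := α) (a := a + 2) (b := b + 1) (e := e + 1) ?_
      (Nat.not_even_iff_odd.1 hb).add_one
    have h17 : (-17 : GaussianInt) = ⟨0, 1⟩ ^ 2 * (⟨4, 1⟩ * ⟨4, -1⟩) := by decide
    have : powProd (a + 2) c (b + 1) (e + 1) = -17 * powProd a c b e := by
      rw [h17, powProd, powProd]
      ring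
    rw [this]
    linear_combination (-17) * H
  by_contra hc
  obtain ⟨b, rfl⟩ := hb
  refine mul_ne_zero (pow_ne_zero b prime_four_add_I.ne_zero) hh
    (eq_zero_of_norm_eq (k := powProd a c 0 e) (α := α) (β := β)
      (modFourAddI_powProd_nonsquare (Nat.not_even_iff_odd.1 hc)) ?_)
  rw [H, powProd, powProd]
  ring

lemma even_of_norm_eq {α β h : F} {a c b e : ℕ} (hh : h ≠ 0)
    (H : α ^ 2 - 17 * β ^ 2 = algebraMap _ F (powProd a c b e) * h ^ 2) : Even c := by
  obtain ⟨⟨d, hd⟩, hmul⟩ := IsLocalization.exist_integer_multiples_of_finset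
    (nonZeroDivisors GaussianInt) ({α, β, h} : Finset F)
  obtain ⟨α', hα⟩ := hmul α (by simp)
  obtain ⟨β', hβ⟩ := hmul β (by simp)
  obtain ⟨h', hh'⟩ := hmul h (by simp)
  simp only [Algebra.smul_def] at hα hβ hh'
  have hne : h' ≠ 0 := by
    rintro rfl
    rw [map_zero] at hh'
    exact mul_ne_zero (IsFractionRing.to_map_ne_zero_of_mem_nonZeroDivisors hd) hh hh'.symm
  refine even_of_norm_eq_powProd_mul_sq (α := α') (β := β') (a := a) (b := b) (e := e) hne ?_
  apply IsFractionRing.injective GaussianInt F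
  simp only [map_sub, map_mul, map_pow, map_ofNat, hα, hβ, hh']
  linear_combination (algebraMap _ F d) ^ 2 * H

end Norm

section Conj

/-- The nontrivial automorphism of `ℚ(i, √17)` over `ℚ(i)`. -/
noncomputable abbrev conj : K →+* K := starRingEnd K

lemma conj_mk (a b : F) : conj (⟨a, b⟩ : K) = ⟨a, -b⟩ := by
  rw [starRingEnd_apply, QuadraticAlgebra.star_mk, zero_mul, add_zero]

lemma conj_algebraMap (f : F) : conj (algebraMap F K f) = algebraMap F K f := by
  have h : algebraMap F K f = ⟨f, 0⟩ := rfl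
  rw [h, conj_mk, neg_zero]

lemma conj_I : conj I = I := conj_algebraMap (algebraMap GaussianInt F ⟨0, 1⟩)

lemma conj_sqrt17 : conj sqrt17 = -sqrt17 := by
  change (starRingEnd K ⟨0, 1⟩ : K) = -(⟨0, 1⟩ : K)
  rw [conj_mk, QuadraticAlgebra.neg_mk, neg_zero]

lemma mul_conj (w : K) : w * conj w = algebraMap F K (w.re ^ 2 - 17 * w.im ^ 2) := by
  rw [starRingEnd_apply, ← QuadraticAlgebra.algebraMap_norm_eq_mul_star,
    QuadraticAlgebra.norm_def, zero_mul, zero_mul, add_zero, pow_two, pow_two, mul_assoc]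

lemma add_conj (w : K) : w + conj w = algebraMap F K (2 * w.re) := by
  rw [starRingEnd_apply, ← QuadraticAlgebra.algebraMap_trace_eq_add_star,
    QuadraticAlgebra.trace_def, zero_mul, add_zero]

protected lemma EvenOutside.conj {w : K} (h : EvenOutside {2, 4 - I} w) :
    EvenOutside {2, 4 - I} (conj w) := by
  intro v hv
  refine h (v.comap conj) fun s hs ↦ ?_
  rw [Valuation.comap_apply, ← hv s hs]
  rcases hs with rfl | rfl
  · rw [map_ofNat]
  · rw [map_sub, map_ofNat, conj_I]

lemma map_four_sub_I_eq_one (v : Valuation K ℤᵐ⁰) (h17 : v 17 = 1) : v (4 - I) = 1 := by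
  have hmul : v (4 - I) * v (4 + I) = 1 ^ 2 := by
    rw [← map_mul, one_pow, ← h17]
    congr 1
    linear_combination -I_sq
  have hle : v (4 - I) ≤ 1 := by
    rw [sub_eq_add_neg]
    exact map_four_add_le_one v (by rw [neg_sq, I_sq])
  exact eq_of_le_of_le_of_mul_eq_sq hle (map_four_add_le_one v I_sq) one_ne_zero hmul

lemma EvenOutside.two_seventeen {w : K} (h : EvenOutside {2, 4 - I} w) : EvenOutside {2, 17} w :=
  fun v hv ↦ h v fun s hs ↦ by
    rcases hs with rfl | rfl
    · exact hv 2 (.inl rfl)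
    · exact map_four_sub_I_eq_one v (hv 17 (.inr rfl))

-- `w * conj w` is the norm to `ℚ(i)`, so the parity of `c` is controlled modulo `4 + i`.
lemma EvenOutside.exists_mul_conj_eq {w : K} (hw : w ≠ 0) (h : EvenOutside {2, 4 - I} w) :
    ∃ a c b e : ℕ, ∃ y : F, y ≠ 0 ∧ Even c ∧
      w * conj w =
        algebraMap F K (algebraMap _ F (powProd a c b e) * y ^ 2) := by
  have hw' : w * conj w ≠ 0 := mul_ne_zero hw ((map_ne_zero _).2 hw)
  have heven := (h.mul h.conj).two_seventeen
  rw [mul_conj] at hw' heven ⊢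
  obtain ⟨a, c, b, e, y, hy, hk⟩ := EvenOutside.exists_powProd_mul_sq
    (fun h0 ↦ hw' (by rw [h0, map_zero])) heven
  exact ⟨a, c, b, e, y, hy, even_of_norm_eq hy hk, by rw [hk]⟩

end Conj

/-! ### The ring of `2`-adic integers -/

/-- Reduction modulo `8` on `ℤ₂`. -/
noncomputable def mod8 : ℤ_[2] →+* ZMod 8 := PadicInt.toZModPow 3

lemma isUnit_iff_not_two_dvd {x : ℤ_[2]} : IsUnit x ↔ ¬ 2 ∣ x := by
  rw [← not_iff_not, not_not, PadicInt.not_isUnit_iff, PadicInt.norm_lt_one_iff_dvd]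
  rfl

lemma isUnit_iff_two_dvd_sub_one {x : ℤ_[2]} : IsUnit x ↔ 2 ∣ x - 1 := by
  constructor
  · intro hx
    obtain ⟨n, hn, h⟩ := PadicInt.exists_mem_range x
    rw [PadicInt.maximalIdeal_eq_span_p, Ideal.mem_span_singleton] at h
    interval_cases n
    · exact absurd (by simpa using h) (isUnit_iff_not_two_dvd.1 hx)
    · simpa using h
  · intro h
    rw [isUnit_iff_not_two_dvd]
    intro h2
    exact isUnit_iff_not_two_dvd.1 isUnit_one (by simpa using dvd_sub h2 h)

lemma isUnit_one_add_two_mul (x : ℤ_[2]) : IsUnit (1 + 2 * x) :=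
  isUnit_iff_two_dvd_sub_one.2 ⟨x, by ring⟩

lemma exists_eq_one_add_two_mul_of_isUnit {x : ℤ_[2]} (hx : IsUnit x) : ∃ y, x = 1 + 2 * y := by
  obtain ⟨y, hy⟩ := isUnit_iff_two_dvd_sub_one.1 hx
  exact ⟨y, by rw [← hy, add_sub_cancel]⟩

lemma mod8_sq_of_isUnit {x : ℤ_[2]} (hx : IsUnit x) : mod8 x ^ 2 = 1 := by
  have h := hx.map mod8
  revert h
  generalize mod8 x = r
  revert r
  decide

/-- The square class of a `2`-adic integer, in the form `x = 2 ^ k * u` with `u` a unit congruent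
to `r` modulo `8`. -/
def HasTwoAdicForm (x : ℤ_[2]) (k : ℕ) (r : ZMod 8) : Prop :=
  ∃ u, IsUnit u ∧ x = 2 ^ k * u ∧ mod8 u = r

namespace HasTwoAdicForm

variable {x y : ℤ_[2]} {k l : ℕ} {r s : ZMod 8}

lemma mul (hx : HasTwoAdicForm x k r) (hy : HasTwoAdicForm y l s) :
    HasTwoAdicForm (x * y) (k + l) (r * s) := by
  obtain ⟨u, hu, rfl, rfl⟩ := hx
  obtain ⟨v, hv, rfl, rfl⟩ := hy
  exact ⟨u * v, hu.mul hv, by ring, map_mul _ _ _⟩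

lemma ne_zero (hx : HasTwoAdicForm x k r) : x ≠ 0 := by
  obtain ⟨u, hu, rfl, -⟩ := hx
  exact mul_ne_zero (pow_ne_zero _ two_ne_zero) hu.ne_zero

lemma unique (hk : HasTwoAdicForm x k r) (hl : HasTwoAdicForm x l s) : k = l ∧ r = s := by
  obtain ⟨u, hu, rfl, rfl⟩ := hk
  obtain ⟨v, hv, h, rfl⟩ := hl
  have hval : ∀ (n : ℕ) {w : ℤ_[2]}, IsUnit w → (2 ^ n * w).valuation = n := fun n w hw ↦ by
    have h0 := PadicInt.norm_eq_zpow_neg_valuation hw.ne_zero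
    rw [PadicInt.isUnit_iff.1 hw, eq_comm, zpow_eq_one_iff_right₀ (by simp) (by simp)] at h0
    have := PadicInt.valuation_p_pow_mul (p := 2) n w hw.ne_zero
    push_cast at this
    omega
  obtain rfl : k = l := by rw [← hval k hu, h, hval l hv]
  exact ⟨rfl, by rw [mul_left_cancel₀ (pow_ne_zero k two_ne_zero) h]⟩

end HasTwoAdicForm

lemma exists_hasTwoAdicForm_sq {x : ℤ_[2]} (hx : x ≠ 0) :
    ∃ k, HasTwoAdicForm (x ^ 2) (2 * k) 1 := by
  have hu := (PadicInt.unitCoeff hx).isUnit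
  refine ⟨x.valuation, PadicInt.unitCoeff hx ^ 2, hu.pow 2, ?_, ?_⟩
  · conv_lhs => rw [PadicInt.unitCoeff_spec hx]
    push_cast
    ring
  · rw [map_pow, mod8_sq_of_isUnit hu]

lemma HasTwoAdicForm.even_and_eq_one_of_isSquare {x : ℤ_[2]} {k : ℕ} {r : ZMod 8}
    (hx : HasTwoAdicForm x k r) (h : IsSquare (x : ℚ_[2])) : Even k ∧ r = 1 := by
  obtain ⟨y, hy⟩ := h
  have hy1 : ‖y‖ ≤ 1 := by
    have := x.norm_le_one
    rw [PadicInt.norm_def, hy, norm_mul] at this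
    nlinarith only [this, norm_nonneg y]
  obtain ⟨y, rfl⟩ : ∃ z : ℤ_[2], (z : ℚ_[2]) = y := ⟨⟨y, hy1⟩, rfl⟩
  have hxy : x = y ^ 2 := PadicInt.ext (by rw [hy]; push_cast; ring)
  have hy0 : y ≠ 0 := by
    rintro rfl
    exact hx.ne_zero (by rw [hxy, zero_pow two_ne_zero])
  obtain ⟨l, hl⟩ := exists_hasTwoAdicForm_sq hy0
  rw [← hxy] at hl
  exact ⟨(hx.unique hl).1 ▸ even_two_mul l, (hx.unique hl).2⟩

-- Hensel's lemma needs a simple root modulo 2, so it is applied to the equation of (√17 - 9)/2.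
lemma exists_sq_eq_seventeen : ∃ t : ℤ_[2], t ^ 2 = 17 ∧ 32 ∣ t - 9 := by
  have h16 : (16 : ℤ_[2]) ∈ IsLocalRing.maximalIdeal ℤ_[2] := by
    rw [PadicInt.maximalIdeal_eq_span_p, Ideal.mem_span_singleton]
    exact ⟨8, by norm_num⟩
  have h9 : IsUnit (9 : ℤ_[2]) := isUnit_iff_two_dvd_sub_one.2 ⟨4, by norm_num⟩
  obtain ⟨v, hv, hv2⟩ := HenselianRing.is_henselian (I := IsLocalRing.maximalIdeal ℤ_[2])
    (.X ^ 2 + .C 9 * .X + .C 16) (by monicity!) 0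
    (by simpa using h16)
    (by simpa using h9.map _)
  have hv0 : v * (v + 9) = -16 := by
    simp only [Polynomial.IsRoot.def, Polynomial.eval_add, Polynomial.eval_pow, Polynomial.eval_X,
      Polynomial.eval_mul, Polynomial.eval_C] at hv
    linear_combination hv
  have hu : IsUnit (v + 9) := by
    rw [sub_zero, PadicInt.maximalIdeal_eq_span_p, Ideal.mem_span_singleton] at hv2
    obtain ⟨w, rfl⟩ := hv2
    exact isUnit_iff_two_dvd_sub_one.2 ⟨w + 4, by push_cast; ring⟩
  obtain ⟨w, hw⟩ := hu.exists_right_inv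
  exact ⟨9 + 2 * v, by linear_combination 4 * hv0, -w, by
    linear_combination 2 * w * hv0 - 2 * v * hw⟩

/-- The square root of `17` in `ℤ₂` congruent to `9` modulo `32`. -/
noncomputable def root17 : ℤ_[2] := exists_sq_eq_seventeen.choose

lemma root17_sq : root17 ^ 2 = 17 := exists_sq_eq_seventeen.choose_spec.1

lemma exists_root17_eq : ∃ u, root17 = 9 + 32 * u := by
  obtain ⟨u, hu⟩ := exists_sq_eq_seventeen.choose_spec.2
  exact ⟨u, by rw [← hu]; exact (add_sub_cancel _ _).symm⟩

/-! ### The local field `ℚ₂(i)` and the two places above `2` -/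

section AdjoinI

/-- The ring `A[i]` with `i ^ 2 = -1`. -/
abbrev AdjoinI (A : Type*) [CommRing A] : Type _ := QuadraticAlgebra A (-1) 0

variable {A B : Type*} [CommRing A] [CommRing B]

lemma norm_eq_sq_add_sq (x : AdjoinI A) : QuadraticAlgebra.norm x = x.re ^ 2 + x.im ^ 2 := by
  rw [QuadraticAlgebra.norm_def]
  ring

/-- The homomorphism `A[i] → B[i]` induced by a homomorphism `A → B`. -/
def adjoinIMap (f : A →+* B) : AdjoinI A →+* AdjoinI B where
  toFun x := ⟨f x.re, f x.im⟩
  map_one' := by ext <;> simp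
  map_zero' := by ext <;> simp
  map_mul' x y := by ext <;> simp
  map_add' x y := by ext <;> simp

variable {f : A →+* B}

lemma adjoinIMap_injective (hf : Function.Injective f) : Function.Injective (adjoinIMap f) :=
  fun _ _ h ↦ QuadraticAlgebra.ext (hf (congrArg QuadraticAlgebra.re h))
    (hf (congrArg QuadraticAlgebra.im h))

lemma norm_adjoinIMap (x : AdjoinI A) :
    QuadraticAlgebra.norm (adjoinIMap f x) = f (QuadraticAlgebra.norm x) := by
  simp only [norm_eq_sq_add_sq, adjoinIMap, RingHom.coe_mk, MonoidHom.coe_mk, OneHom.coe_mk,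
    map_add, map_pow]

end AdjoinI

/-- The ring `ℤ₂[i]`. -/
abbrev O₂ : Type := AdjoinI ℤ_[2]

/-- The field `ℚ₂(i)`. -/
abbrev K₂ : Type := AdjoinI ℚ_[2]

lemma sq_ne_neg_one (r : ℚ_[2]) : r ^ 2 ≠ -1 := by
  intro h
  have h1 : ‖r‖ ≤ 1 := by
    have : ‖r‖ ^ 2 = 1 := by rw [← norm_pow, h, norm_neg, norm_one]
    exact (sq_le_one_iff₀ (norm_nonneg r)).1 this.le
  obtain ⟨x, rfl⟩ : ∃ x : ℤ_[2], (x : ℚ_[2]) = r := ⟨⟨r, h1⟩, rfl⟩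
  have h2 : x ^ 2 = -1 := PadicInt.ext (by push_cast; exact h)
  have h8 := congrArg mod8 h2
  rw [map_pow, map_neg, map_one] at h8
  revert h8
  generalize mod8 x = y
  revert y
  decide

instance : Fact (∀ r : ℚ_[2], r ^ 2 ≠ -1 + 0 * r) :=
  ⟨fun r ↦ by rw [zero_mul, add_zero]; exact sq_ne_neg_one r⟩

/-- The inclusion of `ℤ₂[i]` in `ℚ₂(i)`. -/
noncomputable def incl : O₂ →+* K₂ := adjoinIMap PadicInt.Coe.ringHom

lemma incl_injective : Function.Injective incl :=
  adjoinIMap_injective Subtype.val_injective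

lemma norm_incl (x : O₂) :
    QuadraticAlgebra.norm (incl x) = ((QuadraticAlgebra.norm x : ℤ_[2]) : ℚ_[2]) :=
  norm_adjoinIMap x

lemma incl_ne_zero {x : O₂} (h : x ≠ 0) : incl x ≠ 0 :=
  (map_ne_zero_iff incl incl_injective).2 h

instance : IsDomain O₂ := incl_injective.isDomain incl

lemma padicNorm_le_one_of_norm_two_mul_sq_le_one {r : ℚ_[2]} (h : ‖2 * r ^ 2‖ ≤ 1) : ‖r‖ ≤ 1 := by
  have h2 : ‖(2 : ℚ_[2])‖ = 2⁻¹ := by simpa using Padic.norm_p (p := 2)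
  rw [norm_mul, norm_pow, h2] at h
  have hlt : ‖r‖ < 2 := by nlinarith [norm_nonneg r]
  simpa using (Padic.norm_le_pow_iff_norm_lt_pow_add_one r 0).2 (by simpa using hlt)

-- If `x = r + s * i`, then `r ^ 2 - s ^ 2` and `r ^ 2 + s ^ 2` are integral, hence so are
-- `2 * r ^ 2` and `2 * s ^ 2`.
lemma exists_incl_eq_of_sq_eq {x : K₂} {y : O₂} (h : x ^ 2 = incl y) :
    ∃ z : O₂, incl z = x ∧ z ^ 2 = y := by
  have hsub : x.re ^ 2 - x.im ^ 2 = y.re := by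
    have : (x ^ 2).re = y.re := congrArg QuadraticAlgebra.re h
    rw [← this, pow_two x, QuadraticAlgebra.re_mul]
    ring
  have hadd : ‖x.re ^ 2 + x.im ^ 2‖ ≤ 1 := by
    rw [← norm_eq_sq_add_sq, ← sq_le_one_iff₀ (norm_nonneg _), ← norm_pow, ← map_pow, h, norm_incl]
    exact PadicInt.norm_le_one _
  obtain ⟨s, hs⟩ : ∃ s : ℤ_[2], (s : ℚ_[2]) = x.re ^ 2 + x.im ^ 2 := ⟨⟨_, hadd⟩, rfl⟩
  have hre : ‖x.re‖ ≤ 1 := padicNorm_le_one_of_norm_two_mul_sq_le_one <| by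
    have : 2 * x.re ^ 2 = ((s + y.re : ℤ_[2]) : ℚ_[2]) := by
      push_cast; linear_combination hsub - hs
    rw [this]; exact PadicInt.norm_le_one _
  have him : ‖x.im‖ ≤ 1 := padicNorm_le_one_of_norm_two_mul_sq_le_one <| by
    have : 2 * x.im ^ 2 = ((s - y.re : ℤ_[2]) : ℚ_[2]) := by
      push_cast; linear_combination -hsub - hs
    rw [this]; exact PadicInt.norm_le_one _
  refine ⟨⟨⟨x.re, hre⟩, ⟨x.im, him⟩⟩, rfl, incl_injective ?_⟩
  rw [map_pow, ← h]
  rfl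

/-- The embedding of `ℤ[i]` in `ℤ₂[i]`. -/
noncomputable def gaussianIntToO₂ : GaussianInt →+* O₂ :=
  Zsqrtd.lift ⟨⟨0, 1⟩, by ext <;> simp⟩

lemma gaussianIntToO₂_apply (z : GaussianInt) : gaussianIntToO₂ z = ⟨z.re, z.im⟩ := by
  change (z.re : O₂) + z.im * (⟨0, 1⟩ : O₂) = _
  ext <;> simp

lemma gaussianIntToO₂_injective : Function.Injective gaussianIntToO₂ := by
  intro x y h
  rw [gaussianIntToO₂_apply, gaussianIntToO₂_apply, QuadraticAlgebra.mk.injEq] at h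
  exact Zsqrtd.ext (by exact_mod_cast h.1) (by exact_mod_cast h.2)

/-- The embedding of `ℚ(i)` in `ℚ₂(i)`. -/
noncomputable def embedF : F →+* K₂ :=
  IsFractionRing.lift (A := GaussianInt) (g := incl.comp gaussianIntToO₂)
    (incl_injective.comp gaussianIntToO₂_injective)

lemma embedF_algebraMap (z : GaussianInt) :
    embedF (algebraMap GaussianInt F z) = incl (gaussianIntToO₂ z) := by
  rw [embedF, IsFractionRing.lift_algebraMap, RingHom.comp_apply]

/-- The embedding of `ℚ(i, √17)` in `ℚ₂(i)` that extends `embedF` and sends `√17` to `t`. -/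
noncomputable def placeOf (t : K₂) (ht : t ^ 2 = 17) : K →+* K₂ where
  toFun x := embedF x.re + embedF x.im * t
  map_one' := by simp
  map_zero' := by simp
  map_mul' x y := by
    simp only [QuadraticAlgebra.re_mul, QuadraticAlgebra.im_mul, map_add, map_mul, map_ofNat,
      map_zero]
    linear_combination (-embedF x.im * embedF y.im) * ht
  map_add' x y := by
    simp only [QuadraticAlgebra.re_add, QuadraticAlgebra.im_add, map_add]
    ring

lemma incl_root17_sq : incl ⟨root17, 0⟩ ^ 2 = 17 := by
  have : (⟨root17, 0⟩ : O₂) ^ 2 = 17 := by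
    ext
    · simp [pow_two, ← root17_sq]
    · simp [pow_two]
  rw [← map_pow, this, map_ofNat]

/-- The place of `ℚ(i, √17)` above `2` at which `√17 = root17`. -/
noncomputable def place₀ : K →+* K₂ := placeOf (incl ⟨root17, 0⟩) incl_root17_sq

/-- The place of `ℚ(i, √17)` above `2` at which `√17 = -root17`. -/
noncomputable def place₁ : K →+* K₂ :=
  placeOf (-incl ⟨root17, 0⟩) (by rw [neg_sq, incl_root17_sq])

lemma place₀_conj (x : K) : place₀ (conj x) = place₁ x := by
  obtain ⟨a, b⟩ := x
  rw [conj_mk]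
  change embedF a + embedF (-b) * _ = embedF a + embedF b * _
  rw [map_neg]
  ring

lemma place₀_algebraMap (f : F) : place₀ (algebraMap F K f) = embedF f := by
  change embedF f + embedF 0 * _ = _
  rw [map_zero, zero_mul, add_zero]

lemma place₁_algebraMap (f : F) : place₁ (algebraMap F K f) = embedF f := by
  rw [← place₀_conj, conj_algebraMap, place₀_algebraMap]

lemma place₀_sqrt17 : place₀ sqrt17 = incl ⟨root17, 0⟩ := by
  change embedF 0 + embedF 1 * _ = _
  rw [map_zero, map_one, zero_add, one_mul]

lemma place₁_sqrt17 : place₁ sqrt17 = -incl ⟨root17, 0⟩ := by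
  rw [← place₀_conj, conj_sqrt17, map_neg, place₀_sqrt17]

/-- The element `i` of `ℤ₂[i]`. -/
noncomputable def I₂ : O₂ := ⟨0, 1⟩

lemma place₀_I : place₀ I = incl I₂ := by
  refine (place₀_algebraMap (algebraMap GaussianInt F ⟨0, 1⟩)).trans ?_
  rw [embedF_algebraMap, gaussianIntToO₂_apply, Int.cast_zero, Int.cast_one, I₂]

lemma place₁_I : place₁ I = incl I₂ := by
  refine (place₁_algebraMap (algebraMap GaussianInt F ⟨0, 1⟩)).trans ?_
  rw [embedF_algebraMap, gaussianIntToO₂_apply, Int.cast_zero, Int.cast_one, I₂]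

/-! ### Square classes in `ℚ₂(i)` -/

/-- The uniformizer `1 + i` of `ℤ₂[i]`. -/
noncomputable def ϖ : O₂ := ⟨1, 1⟩

lemma I₂_sq : I₂ ^ 2 = -1 := by
  rw [pow_two]
  ext <;> simp [I₂]

lemma ϖ_eq : ϖ = 1 + I₂ := by
  ext <;> simp [ϖ, I₂]

lemma ϖ_sq : ϖ ^ 2 = 2 * I₂ := by
  rw [ϖ_eq]
  linear_combination I₂_sq

lemma two_eq_ϖ_mul : (2 : O₂) = ϖ * (1 - I₂) := by
  rw [ϖ_eq]
  linear_combination I₂_sq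

lemma norm_ϖ : QuadraticAlgebra.norm ϖ = 2 := by
  rw [norm_eq_sq_add_sq]
  norm_num [ϖ]

lemma norm_I₂ : QuadraticAlgebra.norm I₂ = 1 := by
  simp [norm_eq_sq_add_sq, I₂]

lemma norm_four_add_I₂ : QuadraticAlgebra.norm (4 + I₂) = 17 := by
  rw [norm_eq_sq_add_sq]
  norm_num [I₂]

lemma norm_four_sub_I₂ : QuadraticAlgebra.norm (4 - I₂) = 17 := by
  rw [norm_eq_sq_add_sq]
  norm_num [I₂]

lemma isUnit_iff_isUnit_norm {x : O₂} : IsUnit x ↔ IsUnit (QuadraticAlgebra.norm x) :=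
  QuadraticAlgebra.isUnit_iff_norm_isUnit

lemma ϖ_dvd_iff {x : O₂} : ϖ ∣ x ↔ 2 ∣ x.re + x.im := by
  constructor
  · rintro ⟨y, rfl⟩
    exact ⟨y.re, by simp [ϖ]; ring⟩
  · rintro ⟨k, hk⟩
    refine ⟨⟨k, k - x.re⟩, ?_⟩
    ext
    · simp [ϖ]
    · simp [ϖ]
      linear_combination hk

lemma isUnit_iff_not_ϖ_dvd {x : O₂} : IsUnit x ↔ ¬ ϖ ∣ x := by
  have hprime : Prime (2 : ℤ_[2]) := PadicInt.prime_p
  rw [isUnit_iff_isUnit_norm, isUnit_iff_not_two_dvd, ϖ_dvd_iff, norm_eq_sq_add_sq,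
    ← hprime.dvd_pow_iff_dvd (a := x.re + x.im) two_ne_zero,
    show (x.re + x.im) ^ 2 = x.re ^ 2 + x.im ^ 2 + 2 * (x.re * x.im) by ring,
    dvd_add_left (dvd_mul_right 2 _)]

lemma isUnit_iff_ϖ_dvd_sub_one {x : O₂} : IsUnit x ↔ ϖ ∣ x - 1 := by
  rw [isUnit_iff_not_ϖ_dvd, ϖ_dvd_iff, ϖ_dvd_iff, ← isUnit_iff_not_two_dvd,
    isUnit_iff_two_dvd_sub_one, QuadraticAlgebra.re_sub, QuadraticAlgebra.im_sub,
    QuadraticAlgebra.re_one, QuadraticAlgebra.im_one, sub_zero, sub_add_eq_add_sub]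

lemma ϖ_dvd_or_ϖ_dvd_sub_one (x : O₂) : ϖ ∣ x ∨ ϖ ∣ x - 1 := by
  rw [← isUnit_iff_ϖ_dvd_sub_one, isUnit_iff_not_ϖ_dvd]
  exact em _

lemma not_isUnit_ϖ_mul (x : O₂) : ¬ IsUnit (ϖ * x) := fun h ↦
  isUnit_iff_not_ϖ_dvd.1 h (dvd_mul_right _ _)

lemma isUnit_I₂ : IsUnit I₂ := IsUnit.of_mul_eq_one (-I₂) (by linear_combination -I₂_sq)

lemma not_four_dvd_two : ¬ (4 : O₂) ∣ 2 := by
  rintro ⟨k, hk⟩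
  have h : (1 : O₂) = 2 * k := mul_left_cancel₀ two_ne_zero (by linear_combination hk)
  rw [two_eq_ϖ_mul, mul_assoc] at h
  exact not_isUnit_ϖ_mul _ (h ▸ isUnit_one)

lemma ϖ_dvd_sq_add_mul {ε : O₂} (hε : IsUnit ε) (y : O₂) : ϖ ∣ y ^ 2 + ε * y := by
  rw [pow_two, ← add_mul]
  rcases ϖ_dvd_or_ϖ_dvd_sub_one y with h | h
  · exact h.mul_left _
  · have h2 : ϖ ∣ 2 := ⟨_, two_eq_ϖ_mul⟩
    refine Dvd.dvd.mul_right ?_ _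
    convert (h.add (isUnit_iff_ϖ_dvd_sub_one.1 hε)).add h2 using 1
    ring

lemma two_dvd_sub_one_or_sub_I₂_of_isUnit {x : O₂} (hx : IsUnit x) : 2 ∣ x - 1 ∨ 2 ∣ x - I₂ := by
  obtain ⟨y, hy⟩ := isUnit_iff_ϖ_dvd_sub_one.1 hx
  rcases ϖ_dvd_or_ϖ_dvd_sub_one y with ⟨z, hz⟩ | ⟨z, hz⟩
  · exact Or.inl ⟨I₂ * z, by linear_combination hy + ϖ * hz + z * ϖ_sq⟩
  · exact Or.inr ⟨I₂ * z + 1, by linear_combination hy + ϖ * hz + z * ϖ_sq + ϖ_eq⟩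

/-- Membership in the group `1 + (1 + i) ^ 5 ℤ₂[i]`, where `(1 + i) ^ 4 = -4`. By Hensel's lemma its
elements are squares in `ℚ₂(i)`. -/
def MemU5 (x : O₂) : Prop := 4 * ϖ ∣ x - 1

lemma MemU5.mul {x y : O₂} (hx : MemU5 x) (hy : MemU5 y) : MemU5 (x * y) := by
  have h := (hx.mul_left y).add hy
  rwa [show y * (x - 1) + (y - 1) = x * y - 1 by ring] at h

lemma MemU5.isUnit {x : O₂} (hx : MemU5 x) : IsUnit x :=
  isUnit_iff_ϖ_dvd_sub_one.2 ((dvd_mul_left _ _).trans hx)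

lemma two_dvd_sub_one_of_memU5_sq {x : O₂} (hx : MemU5 (x ^ 2)) : 2 ∣ x - 1 := by
  have hu : IsUnit x := (isUnit_pow_iff two_ne_zero).1 hx.isUnit
  refine (two_dvd_sub_one_or_sub_I₂_of_isUnit hu).resolve_right ?_
  rintro ⟨y, hy⟩
  obtain ⟨a, ha⟩ := hx
  exact not_four_dvd_two ⟨y * I₂ + y ^ 2 - ϖ * a, by
    linear_combination (x + 2 * y + I₂) * hy - ha + I₂_sq⟩

section Reduction

/-- The ring `(ℤ/8)[i]`. -/
abbrev A₈ := AdjoinI (ZMod 8)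

/-- Reduction modulo `8` on `ℤ₂[i]`. -/
noncomputable def reduction : O₂ →+* A₈ := adjoinIMap mod8

lemma reduction_I₂ : reduction I₂ = ⟨0, 1⟩ := by
  ext <;> simp [reduction, adjoinIMap, I₂]

lemma reduction_ϖ : reduction ϖ = ⟨1, 1⟩ := by
  ext <;> simp [reduction, adjoinIMap, ϖ]

lemma MemU5.reduction_mul {T : O₂} (hT : MemU5 T) : reduction T * ⟨1, 1⟩ = (⟨1, 1⟩ : A₈) := by
  obtain ⟨x, hx⟩ := hT
  have h : T * ϖ = ϖ + 8 * (I₂ * x) := by linear_combination ϖ * hx + 4 * x * ϖ_sq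
  have h8 : (8 : A₈) = 0 := by decide
  rw [← reduction_ϖ, ← map_mul, h, map_add, map_mul, map_ofNat, h8, zero_mul, add_zero]

lemma reduction_sq_mul {y : O₂} (hy : IsUnit y) :
    reduction y ^ 2 * ⟨1, 1⟩ = (⟨1, 1⟩ : A₈) ∨ reduction y ^ 2 * ⟨1, 1⟩ = -(⟨1, 1⟩ : A₈) := by
  have h := (isUnit_iff_isUnit_norm.1 hy).map mod8
  rw [norm_eq_sq_add_sq, map_add, map_pow, map_pow] at h
  change (⟨mod8 y.re, mod8 y.im⟩ : A₈) ^ 2 * ⟨1, 1⟩ = _ ∨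
    (⟨mod8 y.re, mod8 y.im⟩ : A₈) ^ 2 * ⟨1, 1⟩ = _
  generalize mod8 y.re = p at h ⊢
  generalize mod8 y.im = q at h ⊢
  revert p q
  decide

-- In `(ℤ/8)[i]` the three elements `i`, `4 + i`, `4 - i` have order dividing `4`.
lemma even_and_even_of_reduction_eq {n b e : ℕ}
    (h : (⟨0, 1⟩ : A₈) ^ n * (4 + ⟨0, 1⟩) ^ b * (4 - ⟨0, 1⟩) ^ e * ⟨1, 1⟩ = ⟨1, 1⟩ ∨
      (⟨0, 1⟩ : A₈) ^ n * (4 + ⟨0, 1⟩) ^ b * (4 - ⟨0, 1⟩) ^ e * ⟨1, 1⟩ = -⟨1, 1⟩) :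
    Even (b + e) ∧ Even n := by
  have key : ∀ n b e : Fin 4,
      ((⟨0, 1⟩ : A₈) ^ n.1 * (4 + ⟨0, 1⟩) ^ b.1 * (4 - ⟨0, 1⟩) ^ e.1 * ⟨1, 1⟩ = ⟨1, 1⟩ ∨
        (⟨0, 1⟩ : A₈) ^ n.1 * (4 + ⟨0, 1⟩) ^ b.1 * (4 - ⟨0, 1⟩) ^ e.1 * ⟨1, 1⟩ = -⟨1, 1⟩) →
      Even (b.1 + e.1) ∧ Even n.1 := by decide
  have hlt (m : ℕ) : m % 4 < 4 := Nat.mod_lt _ four_pos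
  rw [pow_eq_pow_mod (n := 4) n (by decide), pow_eq_pow_mod (n := 4) b (by decide),
    pow_eq_pow_mod (n := 4) e (by decide)] at h
  have := key ⟨n % 4, hlt n⟩ ⟨b % 4, hlt b⟩ ⟨e % 4, hlt e⟩ h
  simp only [Nat.even_iff] at this ⊢
  omega

end Reduction

lemma even_of_sq_eq_of_isUnit {y T : O₂} {n b e : ℕ} (hT : MemU5 T) (hy : IsUnit y)
    (h : y ^ 2 = I₂ ^ n * (4 + I₂) ^ b * (4 - I₂) ^ e * T) : Even (b + e) ∧ Even n := by
  have hred := reduction_sq_mul hy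
  rw [← map_pow, h, map_mul, mul_assoc, hT.reduction_mul] at hred
  simp only [map_mul, map_pow, map_add, map_sub, map_ofNat, reduction_I₂] at hred
  exact even_and_even_of_reduction_eq hred

lemma isUnit_seventeen : IsUnit (17 : ℤ_[2]) :=
  isUnit_iff_two_dvd_sub_one.2 ⟨8, by norm_num⟩

lemma isUnit_I₂_pow_mul (n b e : ℕ) : IsUnit (I₂ ^ n * (4 + I₂) ^ b * (4 - I₂) ^ e) := by
  refine ((isUnit_I₂.pow n).mul (IsUnit.pow b ?_)).mul (IsUnit.pow e ?_)
  · exact isUnit_iff_isUnit_norm.2 (norm_four_add_I₂ ▸ isUnit_seventeen)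
  · exact isUnit_iff_isUnit_norm.2 (norm_four_sub_I₂ ▸ isUnit_seventeen)

lemma even_of_sq_eq {Z : K₂} {T : O₂} {n c b e : ℕ} (hT : MemU5 T)
    (h : Z ^ 2 = incl (ϖ ^ c * (I₂ ^ n * (4 + I₂) ^ b * (4 - I₂) ^ e * T))) :
    Even c ∧ Even (b + e) ∧ Even n := by
  have hu : IsUnit (I₂ ^ n * (4 + I₂) ^ b * (4 - I₂) ^ e * T) :=
    (isUnit_I₂_pow_mul n b e).mul hT.isUnit
  obtain ⟨d, rfl⟩ : Even c := by
    have hN : IsSquare ((2 ^ c * QuadraticAlgebra.norm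
        (I₂ ^ n * (4 + I₂) ^ b * (4 - I₂) ^ e * T) : ℤ_[2]) : ℚ_[2]) := by
      refine ⟨QuadraticAlgebra.norm Z, ?_⟩
      have hnorm := map_mul QuadraticAlgebra.norm (ϖ ^ c)
        (I₂ ^ n * (4 + I₂) ^ b * (4 - I₂) ^ e * T)
      rw [map_pow, norm_ϖ] at hnorm
      rw [← pow_two, ← map_pow, h, norm_incl, hnorm]
    exact (HasTwoAdicForm.even_and_eq_one_of_isSquare
      ⟨_, isUnit_iff_isUnit_norm.1 hu, rfl, rfl⟩ hN).1
  have hϖ : incl ϖ ≠ 0 := incl_ne_zero fun h0 ↦ by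
    have := norm_ϖ
    rw [h0, QuadraticAlgebra.norm_zero] at this
    exact two_ne_zero this.symm
  obtain ⟨y, -, hy⟩ := exists_incl_eq_of_sq_eq (x := Z / incl ϖ ^ d)
    (y := I₂ ^ n * (4 + I₂) ^ b * (4 - I₂) ^ e * T) (by
      rw [div_pow, h, map_mul, map_pow, ← pow_mul, mul_two, mul_div_cancel_left₀]
      exact pow_ne_zero _ hϖ)
  have hyu : IsUnit y := (isUnit_pow_iff two_ne_zero).1 (hy ▸ hu)
  exact ⟨⟨d, rfl⟩, even_of_sq_eq_of_isUnit hT hyu hy⟩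

lemma embedF_powProd (a c b e : ℕ) : embedF (algebraMap GaussianInt F (powProd a c b e)) =
    incl (I₂ ^ a * ϖ ^ c * (4 + I₂) ^ b * (4 - I₂) ^ e) := by
  have h1 : gaussianIntToO₂ ⟨0, 1⟩ = I₂ := by ext <;> simp [gaussianIntToO₂_apply, I₂]
  have h2 : gaussianIntToO₂ ⟨1, 1⟩ = ϖ := by ext <;> simp [gaussianIntToO₂_apply, ϖ]
  have h3 : gaussianIntToO₂ ⟨4, 1⟩ = 4 + I₂ := by ext <;> simp [gaussianIntToO₂_apply, I₂]
  have h4 : gaussianIntToO₂ ⟨4, -1⟩ = 4 - I₂ := by ext <;> simp [gaussianIntToO₂_apply, I₂]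
  simp only [embedF_algebraMap, powProd, map_mul, map_pow, h1, h2, h3, h4]

lemma even_of_embedF_powProd_eq {a c b e k : ℕ} {T : O₂} {z : K₂} (hT : MemU5 T)
    (h : embedF (algebraMap GaussianInt F (powProd a c b e)) = incl (I₂ ^ k * T) * z ^ 2) :
    Even c ∧ Even (b + e) ∧ Even (a + k) := by
  refine even_of_sq_eq (Z := incl (I₂ ^ k * T) * z) hT ?_
  have hO : I₂ ^ k * T * (I₂ ^ a * ϖ ^ c * (4 + I₂) ^ b * (4 - I₂) ^ e) =
      ϖ ^ c * (I₂ ^ (a + k) * (4 + I₂) ^ b * (4 - I₂) ^ e * T) := by ring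
  rw [← hO, map_mul incl (I₂ ^ k * T) (I₂ ^ a * ϖ ^ c * (4 + I₂) ^ b * (4 - I₂) ^ e),
    ← embedF_powProd, h]
  ring

/-! ### The product formula and the local-global principle for squares -/

lemma sqrt17_ne_zero : sqrt17 ≠ 0 := fun h ↦ by
  have := sqrt17_sq
  rw [h] at this
  norm_num at this

lemma I_ne_zero : I ≠ 0 := fun h ↦ by
  have := I_sq
  rw [h] at this
  norm_num at this

lemma isSquare_pow_mul_pow {M : Type*} [CommMonoid M] {x y : M} {m n : ℕ} (hxy : IsSquare (x * y))
    (hmn : Even (m + n)) : IsSquare (x ^ m * y ^ n) := by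
  rcases Nat.even_or_odd m with hm | hm
  · exact (hm.isSquare_pow x).mul (((Nat.even_add.1 hmn).1 hm).isSquare_pow y)
  · obtain ⟨j, rfl⟩ : Odd n := by
      rw [← Nat.not_even_iff_odd] at hm ⊢
      rwa [← Nat.even_add.1 hmn]
    obtain ⟨i, rfl⟩ := hm
    rw [pow_succ x, pow_succ y, mul_mul_mul_comm]
    exact (((even_two_mul i).isSquare_pow x).mul ((even_two_mul j).isSquare_pow y)).mul hxy

lemma isSquare_powProd {a c b e : ℕ} (ha : Even a) (hc : Even c) (hbe : Even (b + e)) :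
    IsSquare (algebraMap F K (algebraMap _ F (powProd a c b e))) := by
  have hP : IsSquare (algebraMap F K (algebraMap GaussianInt F ⟨4, 1⟩) *
      algebraMap F K (algebraMap GaussianInt F ⟨4, -1⟩)) :=
    ⟨sqrt17, by rw [← map_mul, ← seventeen_eq_mul, map_ofNat, ← pow_two, sqrt17_sq]⟩
  simp only [powProd, map_mul, map_pow, mul_assoc _ (_ ^ b)]
  exact ((ha.isSquare_pow _).mul (hc.isSquare_pow _)).mul (isSquare_pow_mul_pow hP hbe)

lemma powProd_ne_zero (a c b e : ℕ) : powProd a c b e ≠ 0 := by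
  simp only [powProd, ne_eq, mul_eq_zero, not_or]
  exact ⟨⟨⟨pow_ne_zero _ (by decide), pow_ne_zero _ (by decide)⟩, pow_ne_zero _ (by decide)⟩,
    pow_ne_zero _ (by decide)⟩

lemma EvenOutside.isSquare_norm_mul {w : K} (hw : w ≠ 0) (h : EvenOutside {2, 4 - I} w) :
    IsSquare (QuadraticAlgebra.norm (place₀ w) * QuadraticAlgebra.norm (place₁ w)) := by
  obtain ⟨a, c, b, e, y, -, ⟨d, rfl⟩, hk⟩ := h.exists_mul_conj_eq hw
  refine ⟨((2 ^ d * root17 ^ (b + e) : ℤ_[2]) : ℚ_[2]) * QuadraticAlgebra.norm (embedF y), ?_⟩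
  have hnorm : QuadraticAlgebra.norm
      (I₂ ^ a * ϖ ^ (d + d) * (4 + I₂) ^ b * (4 - I₂) ^ e) = (2 ^ d * root17 ^ (b + e)) ^ 2 := by
    rw [map_mul QuadraticAlgebra.norm _ ((4 - I₂) ^ e),
      map_mul QuadraticAlgebra.norm _ ((4 + I₂) ^ b), map_mul QuadraticAlgebra.norm _ (ϖ ^ (d + d))]
    simp only [map_pow, norm_I₂, norm_ϖ, norm_four_add_I₂, norm_four_sub_I₂, ← root17_sq]
    ring
  rw [← map_mul, ← place₀_conj, ← map_mul, hk, place₀_algebraMap, map_mul, embedF_powProd, map_mul,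
    map_pow, map_pow, norm_incl, hnorm]
  push_cast
  ring

lemma EvenOutside.even_and_mul_eq_one {w : K} {P₀ P₁ : O₂} {k l : ℕ} {r s : ZMod 8}
    (h : EvenOutside {2, 4 - I} w) (h₀ : place₀ w = incl P₀) (h₁ : place₁ w = incl P₁)
    (hr : HasTwoAdicForm (QuadraticAlgebra.norm P₀) k r)
    (hs : HasTwoAdicForm (QuadraticAlgebra.norm P₁) l s) : Even (k + l) ∧ r * s = 1 := by
  have hw : w ≠ 0 := by
    rintro rfl
    have hP₀ : P₀ = 0 := incl_injective (by rw [← h₀, map_zero, map_zero])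
    exact hr.ne_zero (by rw [hP₀, QuadraticAlgebra.norm_zero])
  have hsq := h.isSquare_norm_mul hw
  rw [h₀, h₁, norm_incl, norm_incl, ← PadicInt.coe_mul] at hsq
  exact (hr.mul hs).even_and_eq_one_of_isSquare hsq

lemma memU5_root17 : MemU5 (⟨root17, 0⟩ : O₂) := by
  obtain ⟨u, hu⟩ := exists_root17_eq
  refine ⟨⟨1 + 4 * u, -(1 + 4 * u)⟩, ?_⟩
  ext
  · simp [ϖ, hu]
    ring
  · simp [ϖ]
    ring

lemma exists_mul_eq_sq_of_mul_conj_eq {w : K} {n : F} (hw : w ≠ 0)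
    (hn : w * conj w = algebraMap F K (n ^ 2)) :
    ∃ g : F, g ≠ 0 ∧ ∃ u, w * algebraMap F K g = u ^ 2 := by
  have hn0 : n ≠ 0 := by
    rintro rfl
    rw [zero_pow two_ne_zero, map_zero] at hn
    exact mul_ne_zero hw ((map_ne_zero conj).2 hw) hn
  obtain ⟨m, hm, hg⟩ : ∃ m : F, m ^ 2 = n ^ 2 ∧ 2 * w.re + 2 * m ≠ 0 := by
    by_cases h0 : 2 * w.re + 2 * n = 0
    · refine ⟨-n, by ring, fun h1 ↦ hn0 ?_⟩
      have h4 : (4 : F) * n = 0 := by linear_combination h0 - h1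
      exact (mul_eq_zero.1 h4).resolve_left (by norm_num)
    · exact ⟨n, rfl, h0⟩
  refine ⟨2 * w.re + 2 * m, hg, w + algebraMap F K m, ?_⟩
  rw [← hm, map_pow] at hn
  rw [map_add, ← add_conj, map_mul _ 2 m, map_ofNat]
  linear_combination hn

-- The norm being a square, `w` is in the class of an element `g` of `ℚ(i)`, which is determined
-- by its image at one place above `2`.
lemma EvenOutside.exists_eq_I_pow_mul_sq {w : K} {k : ℕ} {T : O₂} {n : F} (hw : w ≠ 0)
    (h : EvenOutside {2, 17} w) (hn : w * conj w = algebraMap F K (n ^ 2))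
    (hT : MemU5 T) (hwT : place₀ w = incl (I₂ ^ k * T)) : ∃ y, w = I ^ k * y ^ 2 := by
  obtain ⟨g, hg, u, hu⟩ := exists_mul_eq_sq_of_mul_conj_eq hw hn
  obtain ⟨a, c, b, e, y, hy, rfl⟩ :=
    EvenOutside.exists_powProd_mul_sq hg (h.of_mul_eq_sq hw hu)
  have hy₂ : embedF y ≠ 0 := (map_ne_zero embedF).2 hy
  have hwT0 : incl (I₂ ^ k * T) ≠ 0 := hwT ▸ (map_ne_zero place₀).2 hw
  obtain ⟨hc, hbe, ha⟩ := even_of_embedF_powProd_eq (a := a) (c := c) (b := b) (e := e)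
    (z := place₀ u / (incl (I₂ ^ k * T) * embedF y)) hT (by
      have hu₂ := congrArg place₀ hu
      rw [map_mul, map_pow, hwT, place₀_algebraMap, map_mul embedF, map_pow embedF] at hu₂
      rw [div_pow, ← hu₂]
      field_simp)
  obtain ⟨r, hr⟩ := isSquare_powProd ha hc hbe
  have hr0 : r ≠ 0 := by
    rintro rfl
    rw [mul_zero, map_eq_zero, map_eq_zero_iff _ (IsFractionRing.injective GaussianInt F)] at hr
    exact powProd_ne_zero _ _ _ _ hr
  have hIr : algebraMap F K (algebraMap _ F (powProd a c b e)) * I ^ k = r ^ 2 := by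
    have hadd := powProd_add a c b e k 0 0 0
    simp only [add_zero] at hadd
    rw [pow_two, ← hr, hadd, map_mul, map_mul]
    simp only [powProd, pow_zero, mul_one, map_pow]
    rfl
  have hy0 : algebraMap F K y ≠ 0 := (map_ne_zero (algebraMap F K)).2 hy
  refine ⟨u / (r * algebraMap F K y), ?_⟩
  rw [map_mul, map_pow] at hu
  rw [div_pow, mul_pow, ← hIr, ← hu]
  have hg0 : algebraMap F K (algebraMap _ F (powProd a c b e)) ≠ 0 :=
    (map_ne_zero (algebraMap F K)).2 (left_ne_zero_of_mul hg)
  have hI := pow_ne_zero k I_ne_zero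
  field_simp

lemma evenOutside_I_mul_sqrt17 : EvenOutside {2, 17} (I * sqrt17) := fun v hv ↦ by
  have hsqrt : v sqrt17 = 1 := by
    have := congrArg v sqrt17_sq
    rw [map_pow, hv 17 (.inr rfl)] at this
    exact (pow_eq_one_iff.1 this).resolve_right two_ne_zero
  rw [map_mul, map_eq_one_of_sq_eq_neg_one v I_sq, hsqrt, mul_one]
  exact IsSquare.one

lemma EvenOutside.sqrt17_mul_ne_sq {w : K} (hw : w ≠ 0) (h : EvenOutside {2, 4 - I} w) (s : K) :
    sqrt17 * w ≠ s ^ 2 := fun hs ↦ by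
  have hs17 : EvenOutside {2, 4 - I} sqrt17 := h.of_mul_eq_sq hw (mul_comm w sqrt17 ▸ hs)
  obtain ⟨v, hv, hv2, hv4⟩ := exists_valuation_sqrt17_eq
  refine not_isSquare_exp_neg_one (hv ▸ hs17 v ?_)
  rintro s (rfl | rfl)
  exacts [hv2, hv4]

section SquareNorm

variable {w : K} {T : O₂} {a c b e : ℕ} {y : F}

lemma isSquare_of_even (hw : w ≠ 0) (h : EvenOutside {2, 17} w) (hwT : place₀ w = incl T)
    (hT : MemU5 T)
    (hk : w * conj w = algebraMap F K
      (algebraMap _ F (powProd (a + a) (c + c) (b + b) (e + e)) * y ^ 2)) : IsSquare w := by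
  obtain ⟨s, hs⟩ := h.exists_eq_I_pow_mul_sq (k := 0) (n := algebraMap _ F (powProd a c b e) * y) hw
    (by rw [hk, powProd_add, map_mul (algebraMap GaussianInt F)]; congr 1; ring) hT
    (by rw [hwT, pow_zero, one_mul])
  exact ⟨s, by rw [hs, pow_zero, one_mul, pow_two]⟩

lemma isSquare_sqrt17_mul_of_odd (hw : w ≠ 0) (h : EvenOutside {2, 17} w)
    (hwT : place₀ w = incl T) (hT : MemU5 T)
    (hk : w * conj w = algebraMap F K
      (algebraMap _ F (powProd (a + a) (c + c) (2 * b + 1) (2 * e + 1)) * y ^ 2)) :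
    IsSquare (sqrt17 * w) := by
  have hnorm : I * sqrt17 * w * conj (I * sqrt17 * w) = 17 * (w * conj w) := by
    rw [map_mul, map_mul, conj_I, conj_sqrt17]
    linear_combination (-sqrt17 ^ 2 * w * conj w) * I_sq + (w * conj w) * sqrt17_sq
  have hpow : algebraMap _ F (powProd (a + a) (c + c) (2 * b + 1) (2 * e + 1)) =
      17 * algebraMap _ F (powProd a c b e) ^ 2 := by
    simp only [powProd, map_mul, map_pow, seventeen_eq_mul]
    ring
  obtain ⟨s, hs⟩ := (evenOutside_I_mul_sqrt17.mul h).exists_eq_I_pow_mul_sq (k := 1)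
    (T := ⟨root17, 0⟩ * T) (n := 17 * (algebraMap _ F (powProd a c b e) * y))
    (mul_ne_zero (mul_ne_zero I_ne_zero sqrt17_ne_zero) hw) (by
      have h17 : (17 : K) = algebraMap F K 17 := (map_ofNat _ 17).symm
      rw [hnorm, hk, hpow, h17, ← map_mul]
      congr 1
      ring) (memU5_root17.mul hT) (by
      rw [map_mul, map_mul, place₀_I, place₀_sqrt17, hwT, pow_one, ← map_mul, ← map_mul, mul_assoc])
  refine ⟨s, mul_left_cancel₀ I_ne_zero ?_⟩
  linear_combination hs

end SquareNorm

lemma EvenOutside.isSquare {w : K} {T₀ T₁ : O₂} (hw : w ≠ 0) (h : EvenOutside {2, 4 - I} w)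
    (h₀ : place₀ w = incl T₀) (h₁ : place₁ w = incl T₁) (hT₀ : MemU5 T₀) (hT₁ : MemU5 T₁) :
    IsSquare w := by
  obtain ⟨a, c, b, e, y, hy, ⟨c, rfl⟩, hk⟩ := h.exists_mul_conj_eq hw
  have hy₂ : embedF y ≠ 0 := (map_ne_zero embedF).2 hy
  obtain ⟨-, hbe, a, rfl⟩ := even_of_embedF_powProd_eq (a := a) (c := c + c) (b := b) (e := e)
    (k := 0) (z := (embedF y)⁻¹) (hT₀.mul hT₁) (by
      have hk₂ := congrArg place₀ hk
      rw [map_mul, place₀_conj, h₀, h₁, place₀_algebraMap, map_mul, map_pow] at hk₂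
      rw [pow_zero, one_mul, map_mul, hk₂]
      field_simp)
  rcases Nat.even_or_odd b with hb | hb
  · obtain ⟨e, rfl⟩ : Even e := (Nat.even_add.1 hbe).1 hb
    obtain ⟨b, rfl⟩ := hb
    exact isSquare_of_even hw h.two_seventeen h₀ hT₀ hk
  · obtain ⟨e, rfl⟩ : Odd e := by
      rw [← Nat.not_even_iff_odd] at hb ⊢
      rwa [← Nat.even_add.1 hbe]
    obtain ⟨b, rfl⟩ := hb
    obtain ⟨s, hs⟩ := isSquare_sqrt17_mul_of_odd hw h.two_seventeen h₀ hT₀ hk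
    exact (h.sqrt17_mul_ne_sq hw s (hs.trans (pow_two s).symm)).elim

/-! ### Units and norms in `ℤ₂[i]` -/

lemma isUnit_of_two_dvd_sub_one {x : O₂} (hx : 2 ∣ x - 1) : IsUnit x :=
  isUnit_iff_ϖ_dvd_sub_one.2 (Dvd.dvd.trans ⟨_, two_eq_ϖ_mul⟩ hx)

lemma isUnit_or_isUnit_sub {x y : O₂} (hx : IsUnit x) : IsUnit y ∨ IsUnit (x - y) := by
  by_contra! h
  simp only [isUnit_iff_not_ϖ_dvd, not_not] at h hx
  exact hx (add_sub_cancel y x ▸ dvd_add h.1 h.2)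

lemma isUnit_add_sub {x y z : O₂} (hx : IsUnit x) (hy : IsUnit y) (hz : IsUnit z) :
    IsUnit (x + y - z) := by
  rw [isUnit_iff_ϖ_dvd_sub_one] at *
  convert (hx.add hy).sub hz using 1
  ring

lemma hasTwoAdicForm_norm_of_isUnit {x : O₂} (hx : IsUnit x) :
    HasTwoAdicForm (QuadraticAlgebra.norm x) 0 (mod8 (QuadraticAlgebra.norm x)) :=
  ⟨_, isUnit_iff_isUnit_norm.1 hx, by rw [pow_zero, one_mul], rfl⟩

lemma MemU5.mod8_norm {x : O₂} (hx : MemU5 x) : mod8 (QuadraticAlgebra.norm x) = 1 := by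
  obtain ⟨y, hy⟩ := hx
  have h8 : (8 : ZMod 8) = 0 := rfl
  have hnorm : QuadraticAlgebra.norm x =
      1 + 8 * (y.re - y.im + 2 * (y.re - y.im) ^ 2 + 2 * (y.re + y.im) ^ 2) := by
    rw [eq_add_of_sub_eq hy, norm_eq_sq_add_sq]
    simp [ϖ]
    ring
  rw [hnorm, map_add, map_mul, map_one, map_ofNat, h8, zero_mul, add_zero]

lemma MemU5.hasTwoAdicForm_norm {x : O₂} (hx : MemU5 x) :
    HasTwoAdicForm (QuadraticAlgebra.norm x) 0 1 :=
  hx.mod8_norm ▸ hasTwoAdicForm_norm_of_isUnit hx.isUnit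

lemma mod8_norm_one_add {ε : O₂} (hε : IsUnit ε) :
    mod8 (QuadraticAlgebra.norm (1 + 2 * ϖ * ε)) = 5 := by
  rw [isUnit_iff_ϖ_dvd_sub_one, ϖ_dvd_iff] at hε
  obtain ⟨k, hk⟩ := hε
  simp only [QuadraticAlgebra.re_sub, QuadraticAlgebra.im_sub, QuadraticAlgebra.re_one,
    QuadraticAlgebra.im_one] at hk
  have him : ε.im = 2 * k + 1 - ε.re := by linear_combination hk
  have h8 : (8 : ZMod 8) = 0 := rfl
  have hnorm : QuadraticAlgebra.norm (1 + 2 * ϖ * ε) =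
      5 + 8 * (2 * ε.re ^ 2 - ε.re - 4 * ε.re * k + 3 * k + 4 * k ^ 2) := by
    rw [norm_eq_sq_add_sq]
    simp [ϖ, him]
    ring
  rw [hnorm, map_add, map_mul, map_ofNat, map_ofNat, h8, zero_mul, add_zero]

lemma exists_sq_eq_one_add_of_two_dvd_sub_one {x : O₂} (hx : 2 ∣ x - 1) :
    ∃ y, x ^ 2 = 1 + 4 * ϖ * y := by
  obtain ⟨z, hz⟩ := hx
  obtain ⟨y, hy⟩ := ϖ_dvd_sq_add_mul isUnit_one z
  exact ⟨y, by linear_combination (x + 1 + 2 * z) * hz + 4 * hy⟩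

lemma memU5_mul_of_dvd_sub {x y z : O₂} (hx : 2 ∣ x - 1) (hy : 4 * ϖ ∣ x - y)
    (hz : 4 * ϖ ∣ x - z) : MemU5 (y * z) := by
  obtain ⟨k, hk⟩ := exists_sq_eq_one_add_of_two_dvd_sub_one hx
  obtain ⟨l, hl⟩ := hy
  obtain ⟨m, hm⟩ := hz
  exact ⟨k - l * z - x * m, by linear_combination hk - z * hl - x * hm⟩

lemma mod8_norm_mul_eq_five {x y z ε : O₂} (hx : 2 ∣ x - 1) (hy : 4 ∣ x - y)
    (hz : x - z = 2 * ϖ * ε) (hε : IsUnit ε) : mod8 (QuadraticAlgebra.norm (y * z)) = 5 := by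
  obtain ⟨k, hk⟩ := exists_sq_eq_one_add_of_two_dvd_sub_one hx
  obtain ⟨l, hl⟩ := hy
  have hxε : IsUnit (-(x * ε) - ϖ * (-I₂ * l * z - (1 - I₂) * k)) := by
    have h := ((isUnit_of_two_dvd_sub_one hx).mul hε).neg
    rw [isUnit_iff_ϖ_dvd_sub_one] at h ⊢
    rw [sub_right_comm]
    exact dvd_sub h (dvd_mul_right _ _)
  have hyz : y * z = 1 + 2 * ϖ * (-(x * ε) - ϖ * (-I₂ * l * z - (1 - I₂) * k)) := by
    linear_combination hk - z * hl - x * hz + 2 * ϖ * k * two_eq_ϖ_mul -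
      2 * l * z * (I₂ * ϖ_sq + 2 * I₂_sq)
  rw [hyz, mod8_norm_one_add hxε]

/-! ### The quadrics at the two places above `2` -/

section HalfSums

variable {φ : K →+* K₂} {x y : K} {X P κ : O₂} {j : ℕ}

lemma mul_sub_eq_of_map_sq_sub_sq_eq (hX : φ (2 ^ (j + 2) * x) = incl X)
    (hP : φ (2 ^ (j + 1) * (x + y)) = incl P) (hκ : φ (4 * (x ^ 2 - y ^ 2)) = incl κ) :
    P * (X - P) = 4 ^ j * κ := by
  apply incl_injective
  have h4 : (4 : K) ^ j = (2 ^ j) ^ 2 := by rw [← pow_mul, mul_comm, pow_mul]; norm_num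
  have hpow : incl (4 ^ j) = φ (4 ^ j) := by rw [map_pow, map_pow, map_ofNat, map_ofNat]
  rw [map_mul incl P, map_sub, map_mul incl (4 ^ j), hpow, ← hX, ← hP, ← hκ, ← map_sub, ← map_mul,
    ← map_mul, h4]
  congr 1
  ring

/-- `2 ^ m * x` is integral and congruent to `1` modulo `2` at both places above `2`. -/
def HasPoleOrder (m : ℕ) (x : K) : Prop :=
  ∀ φ ∈ ({place₀, place₁} : Set (K →+* K₂)), ∃ X, φ (2 ^ m * x) = incl X ∧ 2 ∣ X - 1

lemma HasPoleOrder.neg {m : ℕ} (hx : HasPoleOrder m x) : HasPoleOrder m (-x) := fun φ hφ ↦ by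
  obtain ⟨X, hX, k, hk⟩ := hx φ hφ
  exact ⟨-X, by rw [mul_neg, map_neg, map_neg, hX], -k - 1, by linear_combination -hk⟩

lemma HasPoleOrder.exists_half_add (hX : φ (2 ^ (j + 2) * x) = incl X) (h2X : 2 ∣ X - 1)
    (hφ : φ ∈ ({place₀, place₁} : Set (K →+* K₂))) (hy : HasPoleOrder (j + 2) y) :
    ∃ P, φ (2 ^ (j + 1) * (x + y)) = incl P := by
  obtain ⟨Y, hY, l, hl⟩ := hy φ hφ
  obtain ⟨k, hk⟩ := h2X
  have h2 : (2 : K₂) ≠ 0 := two_ne_zero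
  refine ⟨1 + k + l, mul_left_cancel₀ h2 ?_⟩
  have hXY : 2 * (1 + k + l) = X + Y := by linear_combination -hk - hl
  have hsum : 2 * (2 ^ (j + 1) * (x + y)) = 2 ^ (j + 2) * x + 2 ^ (j + 2) * y := by ring
  rw [← map_ofNat φ 2, ← map_mul, hsum, map_add, hX, hY, ← map_add, ← hXY, map_mul incl, map_ofNat,
    map_ofNat]

end HalfSums

section Quadrics

variable {φ : K →+* K₂} {a b c : K} {τ : O₂}

lemma OnQuadrics.of_sq_eq {b' c' : K} (h : OnQuadrics I sqrt17 a b c) (hb : b' ^ 2 = b ^ 2)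
    (hc : c' ^ 2 = c ^ 2) : OnQuadrics I sqrt17 a b' c' :=
  ⟨hb ▸ h.sq_sub_sq_snd, hc ▸ h.sq_sub_sq_trd⟩

namespace OnQuadrics

variable (h : OnQuadrics I sqrt17 a b c)
include h

lemma map_fst_sub_snd (hτ : φ sqrt17 = incl τ) (hI : φ I = incl I₂) :
    φ (4 * (a ^ 2 - b ^ 2)) = incl (2 * τ * (1 + τ - 4 * I₂)) := by
  have h4 : 4 * (a ^ 2 - b ^ 2) = 2 * sqrt17 * (1 + sqrt17 - 4 * I) := by
    rw [h.sq_sub_sq_snd]; ring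
  simp only [h4, map_mul, map_sub, map_add, map_one, map_ofNat, hτ, hI]

lemma map_fst_sub_trd (hτ : φ sqrt17 = incl τ) (hI : φ I = incl I₂) :
    φ (4 * (a ^ 2 - c ^ 2)) = incl (τ * (τ + 5) * (τ - 4 - I₂)) := by
  have h4 : 4 * (a ^ 2 - c ^ 2) = sqrt17 * (sqrt17 + 5) * (sqrt17 - 4 - I) := by
    rw [h.sq_sub_sq_trd]; ring
  simp only [h4, map_mul, map_sub, map_add, map_ofNat, hτ, hI]

lemma map_snd_sub_trd (hτ : φ sqrt17 = incl τ) (hI : φ I = incl I₂) :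
    φ (4 * (b ^ 2 - c ^ 2)) = incl (τ * (3 - τ) * (4 + I₂ + τ)) := by
  have h4 : 4 * (b ^ 2 - c ^ 2) = sqrt17 * (3 - sqrt17) * (4 + I + sqrt17) := by
    rw [h.snd_sq_sub_sq_trd sqrt17_sq]; ring
  simp only [h4, map_mul, map_sub, map_add, map_ofNat, hτ, hI]

end OnQuadrics

lemma exists_mk_root17_eq : ∃ u : O₂, (⟨root17, 0⟩ : O₂) = 9 + 32 * u := by
  obtain ⟨u, hu⟩ := exists_root17_eq
  refine ⟨⟨u, 0⟩, ?_⟩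
  rw [hu]
  ext <;> simp

lemma place₁_sqrt17_eq_incl : place₁ sqrt17 = incl (-⟨root17, 0⟩) := by
  rw [place₁_sqrt17, map_neg]

lemma isUnit_O₂_one_add_two_mul (x : O₂) : IsUnit (1 + 2 * x) :=
  isUnit_of_two_dvd_sub_one ⟨x, add_sub_cancel_left _ _⟩

lemma isUnit_I₂_add_two_mul (x : O₂) : IsUnit (I₂ + 2 * x) := by
  have h : I₂ + 2 * x = I₂ * (1 + 2 * (-I₂ * x)) := by linear_combination (2 * x) * I₂_sq
  rw [h]
  exact isUnit_I₂.mul (isUnit_O₂_one_add_two_mul _)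

variable (h : OnQuadrics I sqrt17 a b c)
include h

namespace OnQuadrics

lemma exists_place₀_fst_sub_snd : ∃ ε, IsUnit ε ∧ place₀ (4 * (a ^ 2 - b ^ 2)) = incl (4 * ε) := by
  obtain ⟨u, hu⟩ := exists_mk_root17_eq
  refine ⟨(1 + 2 * (4 + 16 * u)) * (1 + 2 * (2 + 8 * u - I₂)),
    (isUnit_O₂_one_add_two_mul _).mul (isUnit_O₂_one_add_two_mul _), ?_⟩
  rw [h.map_fst_sub_snd place₀_sqrt17 place₀_I, hu]
  congr 1
  ring

lemma exists_place₀_fst_sub_trd :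
    ∃ ε, IsUnit ε ∧ place₀ (4 * (a ^ 2 - c ^ 2)) = incl (2 * ϖ * ε) := by
  obtain ⟨u, hu⟩ := exists_mk_root17_eq
  refine ⟨(1 + 2 * (4 + 16 * u)) * (1 + 2 * (3 + 8 * u)) *
    (I₂ + 2 * (1 - 2 * I₂ + 8 * (1 - I₂) * u)),
    ((isUnit_O₂_one_add_two_mul _).mul (isUnit_O₂_one_add_two_mul _)).mul
      (isUnit_I₂_add_two_mul _), ?_⟩
  rw [h.map_fst_sub_trd place₀_sqrt17 place₀_I, hu, ϖ_eq]
  congr 1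
  linear_combination (2 * (9 + 32 * u) * (7 + 16 * u) * (3 + 16 * u)) * I₂_sq

lemma exists_place₀_snd_sub_trd :
    ∃ ε, IsUnit ε ∧ place₀ (4 * (b ^ 2 - c ^ 2)) = incl (2 * ϖ * ε) := by
  obtain ⟨u, hu⟩ := exists_mk_root17_eq
  refine ⟨-((1 + 2 * (4 + 16 * u)) * (1 + 2 * (1 + 8 * u)) *
    (1 + 2 * (3 - 3 * I₂ + 8 * (1 - I₂) * u))), (((isUnit_O₂_one_add_two_mul _).mul
    (isUnit_O₂_one_add_two_mul _)).mul (isUnit_O₂_one_add_two_mul _)).neg, ?_⟩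
  rw [h.map_snd_sub_trd place₀_sqrt17 place₀_I, hu, ϖ_eq]
  congr 1
  linear_combination (-2 * (9 + 32 * u) * (3 + 16 * u) * (6 + 16 * u)) * I₂_sq

lemma exists_place₁_fst_sub_snd : ∃ κ, 4 * ϖ ∣ κ ∧ place₁ (4 * (a ^ 2 - b ^ 2)) = incl κ := by
  obtain ⟨u, hu⟩ := exists_mk_root17_eq
  refine ⟨_, ⟨(1 - I₂) * (9 + 32 * u) * (2 + 8 * u + I₂), ?_⟩,
    h.map_fst_sub_snd place₁_sqrt17_eq_incl place₁_I⟩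
  rw [hu]
  linear_combination (4 * (9 + 32 * u) * (2 + 8 * u + I₂)) * two_eq_ϖ_mul

lemma exists_place₁_fst_sub_trd : ∃ κ, 4 * ϖ ∣ κ ∧ place₁ (4 * (a ^ 2 - c ^ 2)) = incl κ := by
  obtain ⟨u, hu⟩ := exists_mk_root17_eq
  refine ⟨_, ⟨(9 + 32 * u) * (-1 - 8 * u) * (7 - 6 * I₂ + 16 * (1 - I₂) * u), ?_⟩,
    h.map_fst_sub_trd place₁_sqrt17_eq_incl place₁_I⟩
  rw [hu, ϖ_eq]
  linear_combination (4 * (9 + 32 * u) * (-1 - 8 * u) * (6 + 16 * u)) * I₂_sq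

end OnQuadrics

end Quadrics

/-! ### The descent -/

/-- At the place `φ` above `2`, the elements `2 ^ (j + 2) * a`, `2 ^ (j + 1) * (a + b)` and
`2 ^ (j + 1) * (a + c)` have the integral images `A`, `P` and `Q`, and `A` is `1` modulo `2`. -/
structure HalfSums (φ : K →+* K₂) (j : ℕ) (a b c : K) (A P Q : O₂) : Prop where
  map_fst : φ (2 ^ (j + 2) * a) = incl A
  two_dvd : 2 ∣ A - 1
  map_fst_add_snd : φ (2 ^ (j + 1) * (a + b)) = incl P
  map_fst_add_trd : φ (2 ^ (j + 1) * (a + c)) = incl Q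

section HalfSums

variable {φ : K →+* K₂} {j : ℕ} {a b c : K} {A P Q κ : O₂}

namespace HalfSums

variable (h : HalfSums φ j a b c A P Q)
include h

lemma map_snd : φ (2 ^ (j + 2) * b) = incl (2 * P - A) := by
  rw [map_sub, ← h.map_fst, map_mul incl, ← h.map_fst_add_snd, map_ofNat, ← map_ofNat φ 2,
    ← map_mul, ← map_sub]
  congr 1
  ring

lemma map_snd_add_trd : φ (2 ^ (j + 1) * (b + c)) = incl (P + Q - A) := by
  rw [map_sub, map_add, ← h.map_fst, ← h.map_fst_add_snd, ← h.map_fst_add_trd, ← map_add, ← map_sub]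
  congr 1
  ring

lemma two_dvd_snd : 2 ∣ 2 * P - A - 1 := by
  obtain ⟨k, hk⟩ := h.two_dvd
  exact ⟨P - k - 1, by linear_combination -hk⟩

lemma map_fst_mul : φ (2 ^ (j + 1) * (a + b) * (2 ^ (j + 1) * (a + c))) = incl (P * Q) := by
  rw [map_mul, map_mul incl, h.map_fst_add_snd, h.map_fst_add_trd]

lemma map_snd_mul :
    φ (2 ^ (j + 1) * (a + b) * (2 ^ (j + 1) * (b + c))) = incl (P * (P + Q - A)) := by
  rw [map_mul, map_mul incl, h.map_fst_add_snd, h.map_snd_add_trd]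

lemma map_trd_mul :
    φ (2 ^ (j + 1) * (a + c) * (2 ^ (j + 1) * (b + c))) = incl (Q * (P + Q - A)) := by
  rw [map_mul, map_mul incl, h.map_fst_add_trd, h.map_snd_add_trd]

lemma memU5 {κ κ' : O₂} (hP : IsUnit P) (hQ : IsUnit Q)
    (hκ : φ (4 * (a ^ 2 - b ^ 2)) = incl κ) (hκ' : φ (4 * (a ^ 2 - c ^ 2)) = incl κ')
    (hd : 4 * ϖ ∣ 4 ^ j * κ) (hd' : 4 * ϖ ∣ 4 ^ j * κ') :
    MemU5 (P * Q) ∧ MemU5 (P * (P + Q - A)) ∧ MemU5 (Q * (P + Q - A)) := by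
  rw [← mul_sub_eq_of_map_sq_sub_sq_eq h.map_fst h.map_fst_add_snd hκ, hP.dvd_mul_left] at hd
  rw [← mul_sub_eq_of_map_sq_sub_sq_eq h.map_fst h.map_fst_add_trd hκ', hQ.dvd_mul_left] at hd'
  have hR : 4 * ϖ ∣ A - (P + Q - A) := by
    convert dvd_add hd hd' using 1
    ring
  exact ⟨memU5_mul_of_dvd_sub h.two_dvd hd hd', memU5_mul_of_dvd_sub h.two_dvd hd hR,
    memU5_mul_of_dvd_sub h.two_dvd hd' hR⟩

end HalfSums

lemma HasPoleOrder.exists_halfSums (ha : HasPoleOrder (j + 2) a)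
    (hφ : φ ∈ ({place₀, place₁} : Set (K →+* K₂))) (hb : HasPoleOrder (j + 2) b)
    (hc : HasPoleOrder (j + 2) c) : ∃ A P Q, HalfSums φ j a b c A P Q := by
  obtain ⟨A, hA, hA1⟩ := ha φ hφ
  obtain ⟨P, hP⟩ := hb.exists_half_add hA hA1 hφ
  obtain ⟨Q, hQ⟩ := hc.exists_half_add hA hA1 hφ
  exact ⟨A, P, Q, hA, hA1, hP, hQ⟩

-- Of `2 ^ (j + 1) * (a + b)` and `2 ^ (j + 1) * (a - b)` one is a unit, as their sum is a unit.
lemma HasPoleOrder.exists_sign (hφ : φ ∈ ({place₀, place₁} : Set (K →+* K₂)))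
    (hA : φ (2 ^ (j + 2) * a) = incl A) (h2A : 2 ∣ A - 1) (hb : HasPoleOrder (j + 2) b) :
    ∃ b', b' ^ 2 = b ^ 2 ∧ HasPoleOrder (j + 2) b' ∧
      ∃ P, φ (2 ^ (j + 1) * (a + b')) = incl P ∧ IsUnit P := by
  obtain ⟨P, hP⟩ := hb.exists_half_add hA h2A hφ
  rcases isUnit_or_isUnit_sub (y := P) (isUnit_of_two_dvd_sub_one h2A) with hu | hu
  · exact ⟨b, rfl, hb, P, hP, hu⟩
  · refine ⟨-b, neg_sq b, hb.neg, A - P, ?_, hu⟩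
    rw [map_sub, ← hA, ← hP, ← map_sub]
    congr 1
    ring

end HalfSums

/-- There is a solution of the quadrics whose coordinates are `2`-adically `2 ^ (-m)` times integers
congruent to `1` modulo `2`. -/
def HasSolution (m : ℕ) : Prop :=
  ∃ a b c, OnQuadrics I sqrt17 a b c ∧ HasPoleOrder m a ∧ HasPoleOrder m b ∧ HasPoleOrder m c

section Step

variable {j : ℕ} {a b c : K} {A P Q A₁ P₁ Q₁ : O₂}

lemma isUnit_or_hasTwoAdicForm_norm {X P κ : O₂} {k : ℕ} {r : ZMod 8} (hX : IsUnit X)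
    (hκ : HasTwoAdicForm (QuadraticAlgebra.norm κ) k r) (h : P * (X - P) = κ) :
    IsUnit P ∨ ∃ s, HasTwoAdicForm (QuadraticAlgebra.norm P) k s := by
  refine (isUnit_or_isUnit_sub hX).imp_right fun hu ↦ ?_
  obtain ⟨Y, hY⟩ := hu.exists_right_inv
  have hP : P = κ * Y := by rw [← h, mul_assoc, hY, mul_one]
  have hYu : IsUnit Y := IsUnit.of_mul_eq_one (X - P) ((mul_comm _ _).trans hY)
  have hform := hκ.mul (hasTwoAdicForm_norm_of_isUnit hYu)
  rw [← map_mul, ← hP] at hform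
  exact ⟨_, hform⟩

lemma norm_ofNat (n : ℕ) [n.AtLeastTwo] :
    QuadraticAlgebra.norm (OfNat.ofNat n : O₂) = OfNat.ofNat n ^ 2 := by
  rw [norm_eq_sq_add_sq]
  simp

lemma hasTwoAdicForm_norm_four_pow_mul {ε : O₂} (hε : IsUnit ε) (j : ℕ) :
    HasTwoAdicForm (QuadraticAlgebra.norm (4 ^ j * (4 * ε))) (4 * j + 4)
      (mod8 (QuadraticAlgebra.norm ε)) := by
  refine ⟨_, isUnit_iff_isUnit_norm.1 hε, ?_, rfl⟩
  rw [map_mul, map_mul, map_pow, norm_ofNat, pow_add, pow_mul]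
  norm_num [mul_assoc]

lemma hasTwoAdicForm_norm_four_pow_mul_ϖ {ε : O₂} (hε : IsUnit ε) (j : ℕ) :
    HasTwoAdicForm (QuadraticAlgebra.norm (4 ^ j * (2 * ϖ * ε))) (4 * j + 3)
      (mod8 (QuadraticAlgebra.norm ε)) := by
  refine ⟨_, isUnit_iff_isUnit_norm.1 hε, ?_, rfl⟩
  rw [map_mul, map_mul, map_mul, map_pow, norm_ofNat, norm_ofNat, norm_ϖ, pow_add, pow_mul]
  norm_num [mul_assoc]

lemma hasPoleOrder_div_of_sq_eq {w x : K} (m : ℕ) (hx : x ^ 2 = w)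
    (hw : ∀ φ ∈ ({place₀, place₁} : Set (K →+* K₂)), ∃ T, MemU5 T ∧ φ w = incl T) :
    HasPoleOrder m (x / 2 ^ m) := fun φ hφ ↦ by
  obtain ⟨T, hT, hwT⟩ := hw φ hφ
  obtain ⟨X, hX, rfl⟩ := exists_incl_eq_of_sq_eq (x := φ x) (by rw [← map_pow, hx, hwT])
  exact ⟨X, by rw [hX, mul_div_cancel₀ x (pow_ne_zero m two_ne_zero)],
    two_dvd_sub_one_of_memU5_sq hT⟩

lemma HasSolution.exists_halfSums (h : HasSolution (j + 2)) :
    ∃ a b c A P Q A₁ P₁ Q₁, OnQuadrics I sqrt17 a b c ∧ HalfSums place₀ j a b c A P Q ∧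
      HalfSums place₁ j a b c A₁ P₁ Q₁ ∧ IsUnit P₁ ∧ IsUnit Q₁ := by
  obtain ⟨a, b, c, hE, ha, hb, hc⟩ := h
  have h₁ : place₁ ∈ ({place₀, place₁} : Set (K →+* K₂)) := .inr rfl
  obtain ⟨A₁, hA₁, h2A₁⟩ := ha place₁ h₁
  obtain ⟨b', hbb', hb', P₁, hP₁, hPu⟩ := hb.exists_sign h₁ hA₁ h2A₁
  obtain ⟨c', hcc', hc', Q₁, hQ₁, hQu⟩ := hc.exists_sign h₁ hA₁ h2A₁
  obtain ⟨A, P, Q, h₀⟩ := ha.exists_halfSums (.inl rfl) hb' hc'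
  exact ⟨a, b', c', A, P, Q, A₁, P₁, Q₁, hE.of_sq_eq hbb' hcc', h₀, ⟨hA₁, h2A₁, hP₁, hQ₁⟩, hPu, hQu⟩

-- The product formula for `w` excludes the second alternative.
lemma isUnit_of_isUnit_or_odd {w : K} {x y T : O₂} {k : ℕ} {r : ZMod 8}
    (hw : EvenOutside {2, 4 - I} w) (hw₀ : place₀ w = incl (x * y)) (hw₁ : place₁ w = incl T)
    (hT : MemU5 T) (hk : Even k) (hx : HasTwoAdicForm (QuadraticAlgebra.norm x) k r)
    (hy : IsUnit y ∨ ∃ s, HasTwoAdicForm (QuadraticAlgebra.norm y) (4 * j + 3) s) : IsUnit y := by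
  refine hy.resolve_right fun ⟨s, hs⟩ ↦ ?_
  have hxy := hx.mul hs
  rw [← map_mul] at hxy
  have heven := (hw.even_and_mul_eq_one hw₀ hw₁ hxy hT.hasTwoAdicForm_norm).1
  rw [add_zero, Nat.even_add, iff_true_left hk] at heven
  exact Nat.not_even_iff_odd.2 ⟨2 * j + 1, by ring⟩ heven

variable (hE : OnQuadrics I sqrt17 a b c)
include hE

lemma OnQuadrics.evenOutside_fst_mul (x : K) :
    EvenOutside {2, 4 - I} (x * (a + b) * (x * (a + c))) := fun v hv ↦ by
  rw [mul_mul_mul_comm, ← pow_two, map_mul]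
  exact (evenOutside_sq x v hv).mul
    (hE.isSquare_map_fst_mul v I_sq sqrt17_sq (hv 2 (.inl rfl)) (hv (4 - I) (.inr rfl)))

lemma OnQuadrics.evenOutside_snd_mul (x : K) :
    EvenOutside {2, 4 - I} (x * (a + b) * (x * (b + c))) := fun v hv ↦ by
  rw [mul_mul_mul_comm, ← pow_two, map_mul]
  exact (evenOutside_sq x v hv).mul
    (hE.isSquare_map_snd_mul v I_sq sqrt17_sq (hv 2 (.inl rfl)) (hv (4 - I) (.inr rfl)))

lemma OnQuadrics.of_sq_eq_mul {x y z : K} (hx : x ^ 2 = (a + b) * (a + c))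
    (hy : y ^ 2 = (a + b) * (b + c)) (hz : z ^ 2 = (a + c) * (b + c)) :
    OnQuadrics I sqrt17 x y z :=
  ⟨by rw [hx, hy, ← hE.sq_sub_sq_snd]; ring, by rw [hx, hz, ← hE.sq_sub_sq_trd]; ring⟩

namespace HalfSums

lemma memU5_place₁ (h₁ : HalfSums place₁ j a b c A₁ P₁ Q₁) (hP₁ : IsUnit P₁) (hQ₁ : IsUnit Q₁) :
    MemU5 (P₁ * Q₁) ∧ MemU5 (P₁ * (P₁ + Q₁ - A₁)) ∧ MemU5 (Q₁ * (P₁ + Q₁ - A₁)) := by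
  obtain ⟨κ, hdκ, hκ⟩ := hE.exists_place₁_fst_sub_snd
  obtain ⟨κ', hdκ', hκ'⟩ := hE.exists_place₁_fst_sub_trd
  exact h₁.memU5 hP₁ hQ₁ hκ hκ' (hdκ.mul_left _) (hdκ'.mul_left _)

variable (h₀ : HalfSums place₀ j a b c A P Q)
include h₀

lemma exists_even_hasTwoAdicForm_norm :
    ∃ k r, Even k ∧ HasTwoAdicForm (QuadraticAlgebra.norm P) k r := by
  obtain ⟨ε, hε, hκ⟩ := hE.exists_place₀_fst_sub_snd
  rcases isUnit_or_hasTwoAdicForm_norm (isUnit_of_two_dvd_sub_one h₀.two_dvd)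
    (hasTwoAdicForm_norm_four_pow_mul hε j)
    (mul_sub_eq_of_map_sq_sub_sq_eq h₀.map_fst h₀.map_fst_add_snd hκ) with hP | ⟨s, hs⟩
  · exact ⟨0, _, Even.zero, hasTwoAdicForm_norm_of_isUnit hP⟩
  · exact ⟨_, s, ⟨2 * j + 2, by ring⟩, hs⟩

lemma isUnit_or_odd_trd :
    IsUnit Q ∨ ∃ s, HasTwoAdicForm (QuadraticAlgebra.norm Q) (4 * j + 3) s := by
  obtain ⟨ε, hε, hκ⟩ := hE.exists_place₀_fst_sub_trd
  exact isUnit_or_hasTwoAdicForm_norm (isUnit_of_two_dvd_sub_one h₀.two_dvd)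
    (hasTwoAdicForm_norm_four_pow_mul_ϖ hε j)
    (mul_sub_eq_of_map_sq_sub_sq_eq h₀.map_fst h₀.map_fst_add_trd hκ)

lemma isUnit_or_odd_snd_add_trd : IsUnit (P + Q - A) ∨
    ∃ s, HasTwoAdicForm (QuadraticAlgebra.norm (P + Q - A)) (4 * j + 3) s := by
  obtain ⟨ε, hε, hκ⟩ := hE.exists_place₀_snd_sub_trd
  exact isUnit_or_hasTwoAdicForm_norm (isUnit_of_two_dvd_sub_one h₀.two_dvd_snd)
    (hasTwoAdicForm_norm_four_pow_mul_ϖ hε j)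
    (mul_sub_eq_of_map_sq_sub_sq_eq h₀.map_snd h₀.map_snd_add_trd hκ)

variable (h₁ : HalfSums place₁ j a b c A₁ P₁ Q₁) (hP₁ : IsUnit P₁) (hQ₁ : IsUnit Q₁)
include h₁ hP₁ hQ₁

lemma isUnit_place₀ : IsUnit P ∧ IsUnit Q := by
  obtain ⟨hPQ₁, hPR₁, -⟩ := memU5_place₁ hE h₁ hP₁ hQ₁
  obtain ⟨k, r, hk, hP⟩ := exists_even_hasTwoAdicForm_norm hE h₀
  have hQ : IsUnit Q := isUnit_of_isUnit_or_odd (hE.evenOutside_fst_mul _) h₀.map_fst_mul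
    h₁.map_fst_mul hPQ₁ hk hP (isUnit_or_odd_trd hE h₀)
  have hR : IsUnit (P + Q - A) := isUnit_of_isUnit_or_odd (hE.evenOutside_snd_mul _)
    h₀.map_snd_mul h₁.map_snd_mul hPR₁ hk hP (isUnit_or_odd_snd_add_trd hE h₀)
  refine ⟨?_, hQ⟩
  convert isUnit_add_sub (isUnit_of_two_dvd_sub_one h₀.two_dvd) hR hQ using 1
  ring

-- For `j = 0`, the norm of `P * Q` is `5` modulo `8`, against the product formula.
lemma ne_zero : j ≠ 0 := by
  rintro rfl
  obtain ⟨hPQ₁, -, -⟩ := memU5_place₁ hE h₁ hP₁ hQ₁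
  obtain ⟨hP, hQ⟩ := isUnit_place₀ hE h₀ h₁ hP₁ hQ₁
  obtain ⟨ε, -, hκ⟩ := hE.exists_place₀_fst_sub_snd
  obtain ⟨ε', hε', hκ'⟩ := hE.exists_place₀_fst_sub_trd
  have hPA := mul_sub_eq_of_map_sq_sub_sq_eq h₀.map_fst h₀.map_fst_add_snd hκ
  have hQA := mul_sub_eq_of_map_sq_sub_sq_eq h₀.map_fst h₀.map_fst_add_trd hκ'
  rw [pow_zero, one_mul] at hPA hQA
  have h4 : 4 ∣ A - P := hP.dvd_mul_left.1 (hPA ▸ dvd_mul_right 4 ε)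
  obtain ⟨Y, hY⟩ := hQ.exists_right_inv
  have h2ϖ : A - Q = 2 * ϖ * (Y * ε') := by linear_combination Y * hQA - (A - Q) * hY
  have hYε' : IsUnit (Y * ε') := (IsUnit.of_mul_eq_one Q ((mul_comm _ _).trans hY)).mul hε'
  have h5 := mod8_norm_mul_eq_five h₀.two_dvd h4 h2ϖ hYε'
  have h1 := ((hE.evenOutside_fst_mul _).even_and_mul_eq_one h₀.map_fst_mul h₁.map_fst_mul
    (hasTwoAdicForm_norm_of_isUnit (hP.mul hQ)) hPQ₁.hasTwoAdicForm_norm).2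
  rw [h5] at h1
  exact absurd h1 (by decide)

lemma memU5_place₀ : MemU5 (P * Q) ∧ MemU5 (P * (P + Q - A)) ∧ MemU5 (Q * (P + Q - A)) := by
  obtain ⟨hP, hQ⟩ := isUnit_place₀ hE h₀ h₁ hP₁ hQ₁
  obtain ⟨ε, -, hκ⟩ := hE.exists_place₀_fst_sub_snd
  obtain ⟨ε', -, hκ'⟩ := hE.exists_place₀_fst_sub_trd
  obtain ⟨i, rfl⟩ := Nat.exists_eq_succ_of_ne_zero (ne_zero hE h₀ h₁ hP₁ hQ₁)
  refine h₀.memU5 hP hQ hκ hκ' ⟨4 ^ i * (1 - I₂) * 2 * ε, ?_⟩ ⟨4 ^ i * 2 * ε', ?_⟩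
  · rw [pow_succ]
    linear_combination 4 ^ i * 8 * ε * two_eq_ϖ_mul
  · rw [pow_succ]
    ring

lemma hasSolution : HasSolution (j + 1) := by
  obtain ⟨hPQ₁, hPR₁, hQR₁⟩ := memU5_place₁ hE h₁ hP₁ hQ₁
  obtain ⟨hPQ, hPR, hQR⟩ := memU5_place₀ hE h₀ h₁ hP₁ hQ₁
  have hD : (2 : K) ^ (j + 1) ≠ 0 := pow_ne_zero _ two_ne_zero
  have hne : ∀ {w : K} {T : O₂}, MemU5 T → place₀ w = incl T → w ≠ 0 := by
    rintro w T hT hw rfl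
    exact incl_ne_zero hT.isUnit.ne_zero (hw ▸ map_zero place₀)
  have hne₁ := hne hPQ h₀.map_fst_mul
  obtain ⟨x, hx⟩ := (hE.evenOutside_fst_mul _).isSquare hne₁ h₀.map_fst_mul h₁.map_fst_mul hPQ hPQ₁
  obtain ⟨y, hy⟩ := (hE.evenOutside_snd_mul _).isSquare (hne hPR h₀.map_snd_mul) h₀.map_snd_mul
    h₁.map_snd_mul hPR hPR₁
  have hab : a + b ≠ 0 := right_ne_zero_of_mul (left_ne_zero_of_mul hne₁)
  set D : K := 2 ^ (j + 1)
  have hz : (x * y / (D * (a + b))) ^ 2 = D * (a + c) * (D * (b + c)) := by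
    rw [div_pow, mul_pow, pow_two x, pow_two y, ← hx, ← hy]
    field_simp
  refine ⟨x / D, y / D, x * y / (D * (a + b)) / D, hE.of_sq_eq_mul ?_ ?_ ?_,
    hasPoleOrder_div_of_sq_eq _ ((pow_two x).trans hx.symm) ?_,
    hasPoleOrder_div_of_sq_eq _ ((pow_two y).trans hy.symm) ?_, hasPoleOrder_div_of_sq_eq _ hz ?_⟩
  · rw [div_pow, pow_two x, ← hx]
    field_simp
  · rw [div_pow, pow_two y, ← hy]
    field_simp
  · rw [div_pow, hz]
    field_simp
  · rintro φ (rfl | rfl)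
    exacts [⟨_, hPQ, h₀.map_fst_mul⟩, ⟨_, hPQ₁, h₁.map_fst_mul⟩]
  · rintro φ (rfl | rfl)
    exacts [⟨_, hPR, h₀.map_snd_mul⟩, ⟨_, hPR₁, h₁.map_snd_mul⟩]
  · rintro φ (rfl | rfl)
    exacts [⟨_, hQR, h₀.map_trd_mul⟩, ⟨_, hQR₁, h₁.map_trd_mul⟩]

end HalfSums

end Step

lemma HasSolution.ne_zero_and_pred {j : ℕ} (h : HasSolution (j + 2)) :
    j ≠ 0 ∧ HasSolution (j + 1) := by
  obtain ⟨a, b, c, A, P, Q, A₁, P₁, Q₁, hE, h₀, h₁, hP₁, hQ₁⟩ := h.exists_halfSums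
  exact ⟨HalfSums.ne_zero hE h₀ h₁ hP₁ hQ₁, HalfSums.hasSolution hE h₀ h₁ hP₁ hQ₁⟩

lemma not_hasSolution (j : ℕ) : ¬ HasSolution (j + 2) := by
  induction j with
  | zero => exact fun h ↦ h.ne_zero_and_pred.1 rfl
  | succ j ih => exact fun h ↦ ih h.ne_zero_and_pred.2

/-! ### Square roots of the four factors -/

-- `(g₁g₂ + g₃g₄)² - (g₁g₃ + g₂g₄)² = (g₁² - g₄²)(g₂² - g₃²)`, as for the resolvent of a quartic.
lemma onQuadrics_of_sq_eq {a b g₁ g₂ g₃ g₄ : K} (hb : b ≠ 0) (h₁ : g₁ ^ 2 = a + I * b)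
    (h₂ : g₂ ^ 2 = a - (4 + sqrt17) * b) (h₃ : g₃ ^ 2 = a - (4 - sqrt17) * b)
    (h₄ : g₄ ^ 2 = a + (1 + sqrt17) / 4 * b) :
    OnQuadrics I sqrt17 ((g₁ * g₂ + g₃ * g₄) / b) ((g₁ * g₃ + g₂ * g₄) / b)
      ((g₁ * g₄ + g₂ * g₃) / b) := by
  constructor
  · have hres : (g₁ * g₂ + g₃ * g₄) ^ 2 - (g₁ * g₃ + g₂ * g₄) ^ 2 =
        (g₁ ^ 2 - g₄ ^ 2) * (g₂ ^ 2 - g₃ ^ 2) := by ring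
    rw [div_pow, div_pow, ← sub_div, div_eq_iff (pow_ne_zero 2 hb), hres, h₁, h₂, h₃, h₄]
    ring
  · have hres : (g₁ * g₂ + g₃ * g₄) ^ 2 - (g₁ * g₄ + g₂ * g₃) ^ 2 =
        (g₁ ^ 2 - g₃ ^ 2) * (g₂ ^ 2 - g₄ ^ 2) := by ring
    rw [div_pow, div_pow, ← sub_div, div_eq_iff (pow_ne_zero 2 hb), hres, h₁, h₂, h₃, h₄]
    linear_combination b ^ 2 * (1 + (I - sqrt17) / 4) * sqrt17_sq

/-- `x` is integral at the place `φ` above `2`, and congruent to `η` modulo `4` there. -/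
def CongrModFour (φ : K →+* K₂) (x : K) (η : O₂) : Prop :=
  ∃ X, φ x = incl X ∧ 4 ∣ X - η

namespace CongrModFour

variable {φ : K →+* K₂} {x y : K} {η θ : O₂}

lemma add (hx : CongrModFour φ x η) (hy : CongrModFour φ y θ) :
    CongrModFour φ (x + y) (η + θ) := by
  obtain ⟨X, hX, hX4⟩ := hx
  obtain ⟨Y, hY, hY4⟩ := hy
  exact ⟨X + Y, by rw [map_add, map_add, hX, hY], add_sub_add_comm X Y η θ ▸ dvd_add hX4 hY4⟩

lemma mul (hx : CongrModFour φ x η) (hy : CongrModFour φ y θ) :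
    CongrModFour φ (x * y) (η * θ) := by
  obtain ⟨X, hX, hX4⟩ := hx
  obtain ⟨Y, hY, hY4⟩ := hy
  exact ⟨X * Y, by rw [map_mul, map_mul, hX, hY], dvd_mul_sub_mul hX4 hY4⟩

lemma trans (hx : CongrModFour φ x η) (h : 4 ∣ η - θ) : CongrModFour φ x θ := by
  obtain ⟨X, hX, hX4⟩ := hx
  exact ⟨X, hX, sub_add_sub_cancel X η θ ▸ dvd_add hX4 h⟩

lemma exists_map_div {b : K} {k : ℕ} {β : O₂} (hx : CongrModFour φ x (2 * η)) (hη : 2 ∣ η - 1)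
    (hb : φ b = incl (2 ^ (k + 1) * β)) (hβ : 2 ∣ β - 1) :
    ∃ A, φ (2 ^ k * (x / b)) = incl A ∧ 2 ∣ A - 1 := by
  obtain ⟨X, hX, p, hp⟩ := hx
  obtain ⟨q, hq⟩ := hη
  obtain ⟨β', hβ'⟩ := (isUnit_of_two_dvd_sub_one hβ).exists_right_inv
  obtain ⟨r, hr⟩ := hβ
  refine ⟨(η + 2 * p) * β', ?_, β' * (q + p - r), by linear_combination β' * (hq - hr) + hβ'⟩
  have hb0 : φ b ≠ 0 := by
    rw [hb]
    exact incl_ne_zero (mul_ne_zero (pow_ne_zero _ two_ne_zero) (left_ne_zero_of_mul_eq_one hβ'))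
  rw [← mul_div_assoc, map_div₀, div_eq_iff hb0, map_mul, hX, hb, map_pow, map_ofNat,
    ← map_ofNat incl 2, ← map_pow, ← map_mul, ← map_mul]
  congr 1
  rw [pow_succ]
  linear_combination 2 ^ k * hp - 2 * (η + 2 * p) * 2 ^ k * hβ'

end CongrModFour

lemma congrModFour_intCast (φ : K →+* K₂) (x : ℤ) : CongrModFour φ x x :=
  ⟨x, by rw [map_intCast, map_intCast], by rw [sub_self]; exact dvd_zero 4⟩

lemma congrModFour_place₀_sqrt17 : CongrModFour place₀ sqrt17 1 := by
  obtain ⟨u, hu⟩ := exists_mk_root17_eq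
  exact ⟨_, place₀_sqrt17, 2 + 8 * u, by rw [hu]; ring⟩

lemma congrModFour_place₁_sqrt17 : CongrModFour place₁ sqrt17 (-1) := by
  obtain ⟨u, hu⟩ := exists_mk_root17_eq
  exact ⟨_, place₁_sqrt17_eq_incl, -(2 + 8 * u), by rw [hu]; ring⟩

lemma congrModFour_I {φ : K →+* K₂} (hI : φ I = incl I₂) : CongrModFour φ I I₂ :=
  ⟨I₂, hI, by rw [sub_self]; exact dvd_zero 4⟩

/-- Integers describing square roots `m + n i`, `c + d √17`, `ε (c - d √17)` and `c' + d' √17` of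
`a + r b` for `r = i`, `-4 - √17`, `-4 + √17` and `(1 + √17) / 4`, where `a = m ^ 2 - n ^ 2` and
`b = 2 m n`. The roots are `1` modulo `4` at the first place above `2`, and they are `1`, `ε`, `ε`
and `ε'` modulo `4` at the second one. -/
structure RootData where
  (k : ℕ) (m n c d c' d' ε ε' β : ℤ)
  mul_eq : m * n = 2 ^ (k + 3) * β
  two_dvd : 2 ∣ β - 1
  sq_add_sq : c ^ 2 + 17 * d ^ 2 = m ^ 2 - n ^ 2 - 8 * m * n
  mul_eq_neg : c * d = -(m * n)
  sq_add_sq' : 2 * (c' ^ 2 + 17 * d' ^ 2) = 2 * (m ^ 2 - n ^ 2) + m * n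
  four_mul_eq : 4 * c' * d' = m * n
  four_dvd : 4 ∣ m - 1
  four_dvd_add : 4 ∣ c + d - 1
  four_dvd_sub : 4 ∣ c - d - ε
  four_dvd_add' : 4 ∣ c' + d' - 1
  four_dvd_sub' : 4 ∣ c' - d' - ε'
  sign : ε = 1 ∨ ε = -1
  sign' : ε' = 1 ∨ ε' = -1

namespace RootData

variable (D : RootData)

lemma eight_dvd : 8 ∣ D.n := by
  have hm : Odd D.m := by
    obtain ⟨x, hx⟩ := D.four_dvd
    exact ⟨2 * x, by lia⟩
  refine ((Int.isCoprime_two_left.2 hm).pow_left (m := 3)).dvd_of_dvd_mul_left ?_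
  rw [D.mul_eq, pow_add, mul_assoc]
  exact (dvd_mul_right (2 ^ 3) D.β).mul_left _

lemma m_mul_n_ne_zero : D.m * D.n ≠ 0 := by
  have hβ : D.β ≠ 0 := by
    have := D.two_dvd
    lia
  rw [D.mul_eq]
  exact mul_ne_zero (pow_ne_zero _ two_ne_zero) hβ

/-- The square root of `a + i b`. -/
noncomputable def root₁ : K := D.m + D.n * I

/-- The square root of `a - (4 + √17) b`. -/
noncomputable def root₂ : K := D.c + D.d * sqrt17

/-- The square root of `a - (4 - √17) b`. -/
noncomputable def root₃ : K := D.ε * (D.c + -D.d * sqrt17)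

/-- The square root of `a + (1 + √17) / 4 * b`. -/
noncomputable def root₄ : K := D.c' + D.d' * sqrt17

lemma two_mul_ne_zero : (2 * D.m * D.n : K) ≠ 0 := by
  rw [mul_assoc]
  exact mul_ne_zero two_ne_zero (mod_cast D.m_mul_n_ne_zero)

lemma onQuadrics : OnQuadrics I sqrt17
    ((D.root₁ * D.root₂ + D.root₃ * D.root₄) / (2 * D.m * D.n))
    ((D.root₁ * D.root₃ + D.root₂ * D.root₄) / (2 * D.m * D.n))
    ((D.root₁ * D.root₄ + D.root₂ * D.root₃) / (2 * D.m * D.n)) := by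
  have hε : (D.ε : K) ^ 2 = 1 := mod_cast sq_eq_one_iff.2 D.sign
  have hc : (D.c : K) ^ 2 + 17 * D.d ^ 2 = D.m ^ 2 - D.n ^ 2 - 8 * D.m * D.n :=
    mod_cast D.sq_add_sq
  have hcd : (D.c : K) * D.d = -(D.m * D.n) := mod_cast D.mul_eq_neg
  have hc' : 2 * ((D.c' : K) ^ 2 + 17 * D.d' ^ 2) = 2 * (D.m ^ 2 - D.n ^ 2) + D.m * D.n :=
    mod_cast D.sq_add_sq'
  have hcd' : 4 * (D.c' : K) * D.d' = D.m * D.n := mod_cast D.four_mul_eq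
  refine onQuadrics_of_sq_eq (a := D.m ^ 2 - D.n ^ 2) D.two_mul_ne_zero ?_ ?_ ?_ ?_
  · rw [root₁]
    linear_combination (D.n : K) ^ 2 * I_sq
  · rw [root₂]
    linear_combination hc + 2 * sqrt17 * hcd + (D.d : K) ^ 2 * sqrt17_sq
  · rw [root₃]
    linear_combination (D.c - D.d * sqrt17) ^ 2 * hε + hc - 2 * sqrt17 * hcd +
      (D.d : K) ^ 2 * sqrt17_sq
  · rw [root₄]
    linear_combination hc' / 2 + sqrt17 / 2 * hcd' + (D.d' : K) ^ 2 * sqrt17_sq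

section Congruences

variable {φ : K →+* K₂}

lemma congrModFour_root₁ (hI : φ I = incl I₂) : CongrModFour φ D.root₁ 1 := by
  refine ((congrModFour_intCast φ D.m).add
    ((congrModFour_intCast φ D.n).mul (congrModFour_I hI))).trans ?_
  have hm : (4 : O₂) ∣ D.m - 1 := mod_cast Int.cast_dvd_cast (α := O₂) _ _ D.four_dvd
  have hn : (4 : O₂) ∣ D.n := mod_cast
    Int.cast_dvd_cast (α := O₂) _ _ ((show (4 : ℤ) ∣ 8 by norm_num).trans D.eight_dvd)
  rw [add_sub_right_comm]
  exact dvd_add hm (hn.mul_right I₂)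

lemma congrModFour_add_mul_sqrt17 {x y s η : ℤ} (hs : CongrModFour φ sqrt17 s)
    (h : 4 ∣ x + y * s - η) : CongrModFour φ (x + y * sqrt17) η := by
  refine ((congrModFour_intCast φ x).add ((congrModFour_intCast φ y).mul hs)).trans ?_
  exact mod_cast Int.cast_dvd_cast (α := O₂) _ _ h

lemma exists_congrModFour_root (hφ : φ ∈ ({place₀, place₁} : Set (K →+* K₂))) :
    ∃ η : ℤ, (η = 1 ∨ η = -1) ∧ CongrModFour φ D.root₁ 1 ∧ CongrModFour φ D.root₂ η ∧
      CongrModFour φ D.root₃ η ∧ (D.ε' = 1 → CongrModFour φ D.root₄ 1) := by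
  have hε : D.ε * D.ε = 1 := by rcases D.sign with h | h <;> rw [h] <;> rfl
  rcases hφ with rfl | rfl
  · have hs : CongrModFour place₀ sqrt17 (1 : ℤ) := mod_cast congrModFour_place₀_sqrt17
    refine ⟨1, .inl rfl, D.congrModFour_root₁ place₀_I, ?_, ?_, fun _ ↦ ?_⟩
    · exact congrModFour_add_mul_sqrt17 hs (by simpa only [mul_one] using D.four_dvd_add)
    · have h := (congrModFour_intCast place₀ D.ε).mul (congrModFour_add_mul_sqrt17
        (x := D.c) (y := -D.d) (η := D.ε) hs (by simpa [← sub_eq_add_neg] using D.four_dvd_sub))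
      rw [← Int.cast_mul, hε] at h
      simpa [root₃] using h
    · simpa [root₄] using congrModFour_add_mul_sqrt17 (η := 1) hs
        (by simpa only [mul_one] using D.four_dvd_add')
  · have hs : CongrModFour place₁ sqrt17 (-1 : ℤ) := mod_cast congrModFour_place₁_sqrt17
    refine ⟨D.ε, D.sign, D.congrModFour_root₁ place₁_I, ?_, ?_, fun h1 ↦ ?_⟩
    · exact congrModFour_add_mul_sqrt17 hs
        (by simpa only [mul_neg_one, ← sub_eq_add_neg] using D.four_dvd_sub)
    · have h := (congrModFour_intCast place₁ D.ε).mul (congrModFour_add_mul_sqrt17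
        (x := D.c) (y := -D.d) (η := 1) hs (by simpa using D.four_dvd_add))
      rw [Int.cast_one, mul_one] at h
      simpa [root₃] using h
    · have hsub := D.four_dvd_sub'
      rw [h1] at hsub
      simpa [root₄] using congrModFour_add_mul_sqrt17 (η := 1) hs
        (by simpa only [mul_neg_one, ← sub_eq_add_neg] using hsub)

lemma exists_map_div {x : K} {η : ℤ} (hη : η = 1 ∨ η = -1) (hx : CongrModFour φ x (2 * η)) :
    ∃ A, φ (2 ^ (D.k + 3) * (x / (2 * D.m * D.n))) = incl A ∧ 2 ∣ A - 1 := by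
  refine hx.exists_map_div (β := D.β) ?_ ?_ ?_
  · rcases hη with rfl | rfl <;> norm_num
  · have hb : (2 * D.m * D.n : K) = ((2 ^ (D.k + 3 + 1) * D.β : ℤ) : K) := by
      rw [pow_succ', mul_assoc 2, mul_assoc 2, ← D.mul_eq]
      push_cast
      ring
    rw [hb, map_intCast, ← map_intCast incl]
    push_cast
    rfl
  · exact mod_cast Int.cast_dvd_cast (α := O₂) _ _ D.two_dvd

end Congruences

lemma hasSolution (h : D.ε' = 1) : HasSolution (D.k + 3) := by
  refine ⟨_, _, _, D.onQuadrics, fun φ hφ ↦ ?_, fun φ hφ ↦ ?_, fun φ hφ ↦ ?_⟩ <;>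
  obtain ⟨η, hη, h₁, h₂, h₃, h₄⟩ := D.exists_congrModFour_root hφ
  · refine D.exists_map_div hη ?_
    convert (h₁.mul h₂).add (h₃.mul (h₄ h)) using 1
    ring
  · refine D.exists_map_div hη ?_
    convert (h₁.mul h₃).add (h₂.mul (h₄ h)) using 1
    ring
  · refine D.exists_map_div (.inl rfl) ?_
    convert (h₁.mul (h₄ h)).add (h₂.mul h₃) using 1
    rcases hη with rfl | rfl <;> norm_num

lemma sign'_eq_neg_one : D.ε' = -1 :=
  D.sign'.resolve_left fun h ↦ not_hasSolution (D.k + 1) (D.hasSolution h)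

end RootData

/-! ### The sign at the second place -/

lemma hasTwoAdicForm_sq_add_sq_of_four_dvd {x n : ℤ_[2]} (hx : 4 ∣ x - 2) (hn : 8 ∣ n) :
    HasTwoAdicForm (x ^ 2 + n ^ 2) 2 1 := by
  obtain ⟨p, hp⟩ := hx
  obtain ⟨q, rfl⟩ := hn
  obtain rfl : x = 2 + 4 * p := by linear_combination hp
  refine ⟨1 + 2 * (2 * p ^ 2 + 2 * p + 8 * q ^ 2), isUnit_one_add_two_mul _, by ring, ?_⟩
  simp only [map_add, map_mul, map_pow, map_one, map_ofNat]
  generalize mod8 p = r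
  generalize mod8 q = s
  revert r s
  decide

lemma exists_eq_two_pow_mul_of_mul_eq {x y o : ℤ_[2]} {k : ℕ} (ho : IsUnit o)
    (h : x * y = 2 ^ (k + 1) * o) (hy : 4 ∣ y - 2) : ∃ u, IsUnit u ∧ x = 2 ^ k * u := by
  obtain ⟨p, hp⟩ := hy
  obtain rfl : y = 2 * (1 + 2 * p) := by linear_combination hp
  obtain ⟨w, hw⟩ := (isUnit_one_add_two_mul p).exists_right_inv
  refine ⟨o * w, ho.mul (IsUnit.of_mul_eq_one _ ((mul_comm _ _).trans hw)), ?_⟩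
  apply mul_left_cancel₀ (two_ne_zero (α := ℤ_[2]))
  rw [pow_succ] at h
  linear_combination w * h - 2 * x * hw

section Forms

variable {x n u ν : ℤ_[2]} {k : ℕ} (hu : IsUnit u) (hν : IsUnit ν) (hn : n = 2 ^ k * ν)
include hu hν hn

lemma hasTwoAdicForm_sq_add_sq_five (hx : x = 2 ^ (k + 1) * u) :
    HasTwoAdicForm (x ^ 2 + n ^ 2) (2 * k) 5 := by
  obtain ⟨q, hq⟩ := exists_eq_one_add_two_mul_of_isUnit hν
  refine ⟨4 * u ^ 2 + ν ^ 2, ?_, by rw [hx, hn, mul_comm 2 k, pow_mul]; ring, ?_⟩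
  · convert isUnit_one_add_two_mul (2 * u ^ 2 + 2 * q + 2 * q ^ 2) using 1
    rw [hq]
    ring
  · rw [map_add, map_mul, map_pow, map_pow, mod8_sq_of_isUnit hu, mod8_sq_of_isUnit hν,
      map_ofNat]
    decide

lemma exists_hasTwoAdicForm_sq_add_sq_odd (hx : x = 2 ^ k * u) :
    ∃ r, HasTwoAdicForm (x ^ 2 + n ^ 2) (2 * k + 1) r := by
  obtain ⟨p, rfl⟩ := exists_eq_one_add_two_mul_of_isUnit hu
  obtain ⟨q, rfl⟩ := exists_eq_one_add_two_mul_of_isUnit hν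
  refine ⟨_, _, isUnit_one_add_two_mul (p ^ 2 + p + q ^ 2 + q), ?_, rfl⟩
  rw [hx, hn, mul_comm 2 k]
  ring

end Forms

lemma exists_hasTwoAdicForm_norm_mul {x₁ x₂ y₁ y₂ n : ℤ_[2]} {k l : ℕ} {r s : ZMod 8}
    (hy₁ : y₁ ≠ 0) (hy₂ : y₂ ≠ 0) (h₁ : HasTwoAdicForm (x₁ ^ 2 + n ^ 2) k r)
    (h₂ : HasTwoAdicForm (x₂ ^ 2 + n ^ 2) l s) :
    ∃ j, HasTwoAdicForm (QuadraticAlgebra.norm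
      ((⟨x₁, n⟩ * ⟨y₁, 0⟩ * (⟨x₂, n⟩ * ⟨y₂, 0⟩) : O₂))) (k + l + 2 * j) (r * s) := by
  obtain ⟨i, hi⟩ := exists_hasTwoAdicForm_sq hy₁
  obtain ⟨j, hj⟩ := exists_hasTwoAdicForm_sq hy₂
  refine ⟨i + j, ?_⟩
  convert (h₁.mul hi).mul (h₂.mul hj) using 1
  · simp only [map_mul, norm_eq_sq_add_sq]
    ring
  · ring
  · ring

namespace RootData

variable (D : RootData)

/-- The product `(s + t) (s + u)` attached to a point `(s, t, u)` of the two quadrics, up to the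
square of `2 m n`. -/
noncomputable def product : K :=
  (D.root₁ + D.root₄) * (D.root₂ + D.root₃) * ((D.root₁ + D.root₃) * (D.root₂ + D.root₄))

/-- The image of `product` at a place above `2` sending `√17` to `T`. -/
noncomputable def localProduct (T : ℤ_[2]) : O₂ :=
  ⟨D.m + (D.c' + D.d' * T), D.n⟩ * ⟨D.c + D.d * T + D.ε * (D.c - D.d * T), 0⟩ *
    (⟨D.m + D.ε * (D.c - D.d * T), D.n⟩ * ⟨D.c + D.d * T + (D.c' + D.d' * T), 0⟩)

lemma evenOutside_product : EvenOutside {2, 4 - I} D.product := by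
  convert D.onQuadrics.evenOutside_fst_mul (2 * D.m * D.n) using 1
  have hb := D.two_mul_ne_zero
  rw [← add_div, ← add_div, mul_div_cancel₀ _ hb, mul_div_cancel₀ _ hb, product]
  ring

lemma map_product {T : ℤ_[2]} {φ : K →+* K₂} (hI : φ I = incl I₂) (hT : φ sqrt17 = incl ⟨T, 0⟩) :
    φ D.product = incl (D.localProduct T) := by
  have hlin : ∀ x y : ℤ, φ (x + y * sqrt17) = incl ⟨x + y * T, 0⟩ := fun x y ↦ by
    have h : (⟨x + y * T, 0⟩ : O₂) = x + y * ⟨T, 0⟩ := by ext <;> simp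
    simp only [h, map_add, map_mul, map_intCast, hT]
  have h₁ : φ D.root₁ = incl ⟨D.m, D.n⟩ := by
    have h : (⟨D.m, D.n⟩ : O₂) = D.m + D.n * I₂ := by ext <;> simp [I₂]
    simp only [root₁, h, map_add, map_mul, map_intCast, hI]
  have h₂ : φ D.root₂ = incl ⟨D.c + D.d * T, 0⟩ := hlin _ _
  have h₃ : φ D.root₃ = incl ⟨D.ε * (D.c - D.d * T), 0⟩ := by
    have h : (⟨D.ε * (D.c - D.d * T), 0⟩ : O₂) = D.ε * ⟨D.c + (-D.d : ℤ) * T, 0⟩ := by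
      ext <;> simp [sub_eq_add_neg]
    rw [h, root₃, map_mul, map_intCast, ← Int.cast_neg, hlin, map_mul, map_intCast]
  have h₄ : φ D.root₄ = incl ⟨D.c' + D.d' * T, 0⟩ := hlin _ _
  have hadd : ∀ x y z : ℤ_[2], incl ⟨x, y⟩ + incl ⟨z, 0⟩ = incl ⟨x + z, y⟩ := fun x y z ↦ by
    rw [← map_add]
    congr 1
    ext <;> simp
  simp only [product, localProduct, map_mul, map_add, h₁, h₂, h₃, h₄, hadd]

lemma cast_mul_eq : (D.m : ℤ_[2]) * D.n = 2 ^ (D.k + 3) * D.β := mod_cast D.mul_eq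

lemma cast_sq_add_sq :
    (D.c : ℤ_[2]) ^ 2 + 17 * D.d ^ 2 = D.m ^ 2 - D.n ^ 2 - 8 * D.m * D.n := mod_cast D.sq_add_sq

lemma cast_mul_eq_neg : (D.c : ℤ_[2]) * D.d = -(D.m * D.n) := mod_cast D.mul_eq_neg

lemma cast_sq_add_sq' : 2 * ((D.c' : ℤ_[2]) ^ 2 + 17 * D.d' ^ 2) =
    2 * (D.m ^ 2 - D.n ^ 2) + D.m * D.n := mod_cast D.sq_add_sq'

lemma cast_four_mul_eq : 4 * (D.c' : ℤ_[2]) * D.d' = D.m * D.n := mod_cast D.four_mul_eq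

lemma four_dvd_cast_m_sub_one : (4 : ℤ_[2]) ∣ D.m - 1 :=
  mod_cast Int.cast_dvd_cast (α := ℤ_[2]) _ _ D.four_dvd

lemma eight_dvd_cast_n : (8 : ℤ_[2]) ∣ D.n :=
  mod_cast Int.cast_dvd_cast (α := ℤ_[2]) _ _ D.eight_dvd

lemma isUnit_cast_β : IsUnit (D.β : ℤ_[2]) :=
  isUnit_iff_two_dvd_sub_one.2 (mod_cast Int.cast_dvd_cast (α := ℤ_[2]) _ _ D.two_dvd)

lemma exists_cast_n_eq : ∃ ν : ℤ_[2], IsUnit ν ∧ (D.n : ℤ_[2]) = 2 ^ (D.k + 3) * ν := by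
  obtain ⟨x, hx⟩ := D.four_dvd_cast_m_sub_one
  have hm : (D.m : ℤ_[2]) = 1 + 2 * (2 * x) := by linear_combination hx
  obtain ⟨w, hw⟩ := (isUnit_one_add_two_mul (2 * x)).exists_right_inv
  refine ⟨D.β * w, D.isUnit_cast_β.mul (IsUnit.of_mul_eq_one _ ((mul_comm _ _).trans hw)), ?_⟩
  have h := D.cast_mul_eq
  rw [hm] at h
  linear_combination w * h - D.n * hw

lemma root₂_add_root₃_ne_zero {T : ℤ_[2]} (hT : T ^ 2 = 17) :
    D.c + D.d * T + D.ε * (D.c - D.d * T) ≠ 0 := by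
  have hb : (34 * (D.m * D.n) : ℤ_[2]) ≠ 0 :=
    mul_ne_zero (by norm_num) (mod_cast D.m_mul_n_ne_zero)
  intro h
  rcases D.sign with hε | hε <;> rw [hε] at h <;> push_cast at h
  · exact hb (by linear_combination -17 * D.d * h + 34 * D.cast_mul_eq_neg)
  · exact hb (by linear_combination -D.c * T * h + 34 * D.cast_mul_eq_neg + 2 * D.c * D.d * hT)

lemma root₂_add_root₄_ne_zero {T : ℤ_[2]} (hT : T ^ 2 = 17) :
    D.c + D.d * T + (D.c' + D.d' * T) ≠ 0 := by
  intro h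
  have hb : (D.m * D.n : ℤ_[2]) ≠ 0 := mod_cast D.m_mul_n_ne_zero
  have hbT : (D.m * D.n : ℤ_[2]) * (17 + 5 * T) = 0 := by
    linear_combination -2 * (D.c + D.d * T - (D.c' + D.d' * T)) * h +
      2 * D.cast_sq_add_sq + 4 * T * D.cast_mul_eq_neg - D.cast_sq_add_sq' -
      T * D.cast_four_mul_eq + (2 * D.d ^ 2 - 2 * D.d' ^ 2 : ℤ_[2]) * hT
  have hT' := (mul_eq_zero.1 hbT).resolve_left hb
  have h136 : (136 : ℤ_[2]) ≠ 0 := by norm_num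
  exact h136 (by linear_combination -(17 - 5 * T) * hT' - 25 * hT)

lemma exists_hasTwoAdicForm_norm_localProduct {T : ℤ_[2]} {k l : ℕ} {r s : ZMod 8}
    (hT : T ^ 2 = 17) (h₁ : HasTwoAdicForm ((D.m + (D.c' + D.d' * T)) ^ 2 + D.n ^ 2 : ℤ_[2]) k r)
    (h₂ : HasTwoAdicForm ((D.m + D.ε * (D.c - D.d * T)) ^ 2 + D.n ^ 2 : ℤ_[2]) l s) :
    ∃ j, HasTwoAdicForm (QuadraticAlgebra.norm (D.localProduct T)) (k + l + 2 * j) (r * s) :=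
  exists_hasTwoAdicForm_norm_mul (D.root₂_add_root₃_ne_zero hT) (D.root₂_add_root₄_ne_zero hT) h₁ h₂

lemma hasTwoAdicForm_sq_add_sq {z : ℤ_[2]} (hz : 4 ∣ z - 1) :
    HasTwoAdicForm ((D.m + z) ^ 2 + D.n ^ 2) 2 1 := by
  refine hasTwoAdicForm_sq_add_sq_of_four_dvd ?_ D.eight_dvd_cast_n
  convert dvd_add D.four_dvd_cast_m_sub_one hz using 1
  ring

lemma four_dvd_add_mul_sub {x y s η : ℤ} {T : ℤ_[2]} (hT : 4 ∣ T - s) (h : 4 ∣ x + y * s - η) :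
    4 ∣ (x + y * T - η : ℤ_[2]) := by
  have h' : (4 : ℤ_[2]) ∣ x + y * s - η := mod_cast Int.cast_dvd_cast (α := ℤ_[2]) _ _ h
  convert dvd_add h' (hT.mul_left y) using 1
  ring

lemma four_dvd_root17_sub_one : (4 : ℤ_[2]) ∣ root17 - 1 := by
  obtain ⟨u, hu⟩ := exists_root17_eq
  exact ⟨2 + 8 * u, by rw [hu]; ring⟩

lemma four_dvd_neg_root17_sub : (4 : ℤ_[2]) ∣ -root17 - (-1 : ℤ) := by
  convert four_dvd_root17_sub_one.neg_right using 1
  push_cast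
  ring

lemma exists_hasTwoAdicForm_norm_localProduct_root17 :
    ∃ j, HasTwoAdicForm (QuadraticAlgebra.norm (D.localProduct root17)) (2 * j) 1 := by
  have hs : (4 : ℤ_[2]) ∣ root17 - (1 : ℤ) := by simpa using four_dvd_root17_sub_one
  have h₄ : (4 : ℤ_[2]) ∣ D.c' + D.d' * root17 - 1 := by
    simpa using four_dvd_add_mul_sub hs (η := 1) (by simpa using D.four_dvd_add')
  have h₃ : (4 : ℤ_[2]) ∣ D.ε * (D.c - D.d * root17) - 1 := by
    have h := four_dvd_add_mul_sub hs (x := D.c) (y := -D.d) (η := D.ε)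
      (by simpa [← sub_eq_add_neg] using D.four_dvd_sub)
    convert h.mul_left (D.ε : ℤ_[2]) using 1
    have hε : (D.ε : ℤ_[2]) ^ 2 = 1 := mod_cast sq_eq_one_iff.2 D.sign
    push_cast
    linear_combination hε
  obtain ⟨j, hj⟩ := D.exists_hasTwoAdicForm_norm_localProduct root17_sq
    (D.hasTwoAdicForm_sq_add_sq h₄) (D.hasTwoAdicForm_sq_add_sq h₃)
  exact ⟨2 + j, by simpa [mul_add] using hj⟩

-- The element `m + (c' - d' √17)` is multiplied by its conjugate `m - (c' - d' √17)`, which is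
-- exactly divisible by `2`.
lemma hasTwoAdicForm_root₁_add_root₄ (h : D.ε' = -1) :
    HasTwoAdicForm ((D.m + (D.c' + D.d' * -root17)) ^ 2 + D.n ^ 2 : ℤ_[2])
      (2 * (D.k + 3)) 5 := by
  obtain ⟨u, hu⟩ := exists_root17_eq
  obtain ⟨ν, hν, hn⟩ := D.exists_cast_n_eq
  obtain ⟨q, hq⟩ := exists_eq_one_add_two_mul_of_isUnit D.isUnit_cast_β
  have hmul : (D.m + (D.c' + D.d' * -root17)) * (D.m - (D.c' + D.d' * -root17)) =
      2 ^ (D.k + 3 + 1 + 1) * (1 + 2 * (q + 2 * D.β * u + 2 ^ D.k * ν ^ 2)) := by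
    apply mul_left_cancel₀ (two_ne_zero (α := ℤ_[2]))
    have hconj : 2 * ((D.m + (D.c' + D.d' * -root17)) * (D.m - (D.c' + D.d' * -root17))) =
        2 * (D.n : ℤ_[2]) ^ 2 + D.m * D.n * (8 + 32 * u) := by
      linear_combination -D.cast_sq_add_sq' + root17 * D.cast_four_mul_eq -
        2 * D.d' ^ 2 * root17_sq + D.m * D.n * hu
    rw [hconj, hn, ← hn, D.cast_mul_eq, hn]
    linear_combination 2 ^ (D.k + 6) * hq
  have hy : (4 : ℤ_[2]) ∣ D.m - (D.c' + D.d' * -root17) - 2 := by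
    have h' := four_dvd_add_mul_sub four_dvd_neg_root17_sub (x := D.c') (y := D.d') (η := -1)
      (by simpa [← sub_eq_add_neg, h] using D.four_dvd_sub')
    convert dvd_sub D.four_dvd_cast_m_sub_one h' using 1
    push_cast
    ring
  obtain ⟨o, ho, hx⟩ := exists_eq_two_pow_mul_of_mul_eq (isUnit_one_add_two_mul _) hmul hy
  exact hasTwoAdicForm_sq_add_sq_five ho hν hn hx

lemma four_dvd_add_mul_neg_root17_sub_one : (4 : ℤ_[2]) ∣ D.c - D.d * -root17 - 1 := by
  have h := four_dvd_add_mul_sub four_dvd_neg_root17_sub (x := D.c) (y := -D.d) (η := 1)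
    (by simpa using D.four_dvd_add)
  simpa using h

lemma exists_hasTwoAdicForm_root₁_add_root₃ (h : D.ε = -1) :
    ∃ r, HasTwoAdicForm ((D.m + D.ε * (D.c - D.d * -root17)) ^ 2 + D.n ^ 2 : ℤ_[2])
      (2 * (D.k + 3) + 1) r := by
  obtain ⟨u, hu⟩ := exists_root17_eq
  obtain ⟨ν, hν, hn⟩ := D.exists_cast_n_eq
  obtain ⟨q, hq⟩ := exists_eq_one_add_two_mul_of_isUnit D.isUnit_cast_β
  rw [h, Int.cast_neg, Int.cast_one, neg_one_mul, ← sub_eq_add_neg]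
  have hmul : (D.m - (D.c - D.d * -root17)) * (D.m + (D.c - D.d * -root17)) =
      2 ^ (D.k + 3 + 1) * (1 + 2 * (q + D.β * (6 + 16 * u) + 2 ^ (D.k + 1) * ν ^ 2)) := by
    have hconj : (D.m - (D.c - D.d * -root17)) * (D.m + (D.c - D.d * -root17)) =
        (D.n : ℤ_[2]) ^ 2 + 2 * (D.m * D.n) * (13 + 32 * u) := by
      linear_combination -D.cast_sq_add_sq - 2 * root17 * D.cast_mul_eq_neg -
        D.d ^ 2 * root17_sq + 2 * D.m * D.n * hu
    rw [hconj, D.cast_mul_eq, hn]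
    linear_combination 2 ^ (D.k + 4) * hq
  have hy : (4 : ℤ_[2]) ∣ D.m + (D.c - D.d * -root17) - 2 := by
    convert dvd_add D.four_dvd_cast_m_sub_one D.four_dvd_add_mul_neg_root17_sub_one using 1
    ring
  obtain ⟨o, ho, hx⟩ := exists_eq_two_pow_mul_of_mul_eq (isUnit_one_add_two_mul _) hmul hy
  exact exists_hasTwoAdicForm_sq_add_sq_odd ho hν hn hx

lemma even_and_mul_eq_one {l : ℕ} {s : ZMod 8} (h : D.ε' = -1) (h₃ : HasTwoAdicForm
      ((D.m + D.ε * (D.c - D.d * -root17)) ^ 2 + D.n ^ 2 : ℤ_[2]) l s) :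
    Even l ∧ 5 * s = 1 := by
  obtain ⟨i, hi⟩ := D.exists_hasTwoAdicForm_norm_localProduct_root17
  obtain ⟨j, hj⟩ := D.exists_hasTwoAdicForm_norm_localProduct (by rw [neg_sq, root17_sq])
    (D.hasTwoAdicForm_root₁_add_root₄ h) h₃
  have hT : place₁ sqrt17 = incl ⟨-root17, 0⟩ := by
    rw [place₁_sqrt17_eq_incl]
    congr 1
  obtain ⟨heven, hmod⟩ := D.evenOutside_product.even_and_mul_eq_one
    (D.map_product place₀_I place₀_sqrt17) (D.map_product place₁_I hT) hi hj
  refine ⟨?_, by rwa [one_mul] at hmod⟩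
  rw [Nat.even_iff] at heven ⊢
  omega

lemma isEmpty : IsEmpty RootData := by
  refine ⟨fun D ↦ ?_⟩
  have hε' := D.sign'_eq_neg_one
  rcases D.sign with hε | hε
  · have h₃ : (4 : ℤ_[2]) ∣ D.ε * (D.c - D.d * -root17) - 1 := by
      rw [hε, Int.cast_one, one_mul]
      exact D.four_dvd_add_mul_neg_root17_sub_one
    exact absurd (D.even_and_mul_eq_one hε' (D.hasTwoAdicForm_sq_add_sq h₃)).2 (by decide)
  · obtain ⟨r, hr⟩ := D.exists_hasTwoAdicForm_root₁_add_root₃ hε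
    exact Nat.not_even_two_mul_add_one _ (D.even_and_mul_eq_one hε' hr).1

end RootData

/-! ### Square roots in `ℤ[√17]` -/

lemma sq_emod_four_or_emod_eight (x : ℤ) :
    x ^ 2 % 4 = 0 ∧ x % 2 = 0 ∨ x ^ 2 % 8 = 1 ∧ x % 2 = 1 := by
  rcases Int.even_or_odd x with h | h
  · exact .inl ⟨Int.emod_eq_zero_of_dvd (pow_dvd_pow_of_dvd h.two_dvd 2), Int.even_iff.1 h⟩
  · have := Int.eight_dvd_sq_sub_one_of_odd h
    exact .inr ⟨by lia, Int.odd_iff.1 h⟩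

lemma exists_sq_of_mul_eq_sq {p q r : ℤ} (hco : IsCoprime p q) (hp : 0 ≤ p) (hq : 0 ≤ q)
    (h : p * q = r ^ 2) : ∃ α β : ℤ, p = α ^ 2 ∧ q = β ^ 2 ∧ r = α * β := by
  have hsq : ∀ {x y : ℤ}, IsCoprime x y → 0 ≤ x → x * y = r ^ 2 → ∃ z, x = z ^ 2 := by
    intro x y hco hx hxy
    obtain ⟨z, rfl | hz⟩ := Int.sq_of_isCoprime hco hxy
    · exact ⟨z, rfl⟩
    · exact ⟨0, by nlinarith⟩
  obtain ⟨α, rfl⟩ := hsq hco hp h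
  obtain ⟨β, rfl⟩ := hsq hco.symm hq (by rwa [mul_comm])
  rcases sq_eq_sq_iff_eq_or_eq_neg.1 (h.symm.trans (mul_pow α β 2).symm) with hr | hr
  · exact ⟨α, β, rfl, rfl, hr⟩
  · exact ⟨-α, β, (neg_sq α).symm, rfl, by rw [hr, neg_mul]⟩

lemma exists_sq_add_sq_of_mul_eq {s t B : ℤ} (h17 : 17 ∣ s) (hco : IsCoprime s t)
    (h : s * t = 17 * B ^ 2) (h4 : (s + t) % 4 = 1) :
    ∃ c d : ℤ, c ^ 2 + 17 * d ^ 2 = s + t ∧ c * d = B := by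
  obtain ⟨s', rfl⟩ := h17
  have hB : s' * t = B ^ 2 := by linarith
  have hco' : IsCoprime s' t := hco.of_mul_left_right
  rcases mul_nonneg_iff.1 (hB ▸ sq_nonneg B) with ⟨hs, ht⟩ | ⟨hs, ht⟩
  · obtain ⟨d, c, rfl, rfl, rfl⟩ := exists_sq_of_mul_eq_sq hco' hs ht hB
    exact ⟨c, d, add_comm _ _, mul_comm c d⟩
  · obtain ⟨d, c, hd, hc, -⟩ := exists_sq_of_mul_eq_sq hco'.neg_neg (by lia) (by lia)
      ((neg_mul_neg s' t).trans hB)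
    have hc4 := sq_emod_four_or_emod_eight c
    have hd4 := sq_emod_four_or_emod_eight d
    lia

lemma isCoprime_of_mul_eq {s t B : ℤ} (hco : IsCoprime (s + t) B) (h : s * t = 17 * B ^ 2)
    (hne : s + t ≠ 0) : IsCoprime s t := by
  refine isCoprime_of_prime_dvd ?_ fun l hl hs ht ↦ ?_
  · rintro ⟨rfl, rfl⟩
    exact hne (add_zero 0)
  have hlB : IsCoprime (l ^ 2) (B ^ 2) := (hco.of_isCoprime_of_dvd_left (dvd_add hs ht)).pow
  have hl17 : l ^ 2 ∣ 17 := hlB.dvd_of_dvd_mul_right (by rw [← h, sq]; exact mul_dvd_mul hs ht)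
  have h17 : Prime (17 : ℤ) := by norm_num
  exact hl.not_isUnit (h17.squarefree l (by rwa [← sq]))

-- The norm of `A + 2 B √17` is a square, hence so is `A + 2 B √17` itself, as `(c + d √17) ^ 2`.
lemma exists_sqrt {A B y : ℤ} (hA : A % 4 = 1) (h : A ^ 2 - 17 * (2 * B) ^ 2 = y ^ 2)
    (hco : IsCoprime A B) : ∃ c d : ℤ, c ^ 2 + 17 * d ^ 2 = A ∧ c * d = B := by
  have hy : y % 2 = 1 := by
    have hy := sq_emod_four_or_emod_eight y
    have hA := sq_emod_four_or_emod_eight A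
    lia
  obtain ⟨s, hs⟩ : ∃ s, A - y = 2 * s := ⟨(A - y) / 2, by lia⟩
  obtain ⟨t, rfl⟩ : ∃ t, y = t - s := ⟨y + s, by ring⟩
  obtain rfl : A = s + t := by linarith
  have hst : s * t = 17 * B ^ 2 := by linarith
  have hcop : IsCoprime s t := isCoprime_of_mul_eq hco hst (by lia)
  have h17 : Prime (17 : ℤ) := by norm_num
  rcases h17.dvd_or_dvd ⟨_, hst⟩ with hs | ht
  · exact exists_sq_add_sq_of_mul_eq hs hcop hst hA
  · rw [add_comm] at hA ⊢
    exact exists_sq_add_sq_of_mul_eq ht hcop.symm (by rwa [mul_comm]) hA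

lemma exists_sign_four_dvd_sub {x : ℤ} (hx : x % 2 = 1) :
    ∃ ε : ℤ, (ε = 1 ∨ ε = -1) ∧ 4 ∣ x - ε := by
  rcases (by lia : x % 4 = 1 ∨ x % 4 = 3) with h | h
  · exact ⟨1, .inl rfl, by lia⟩
  · exact ⟨-1, .inr rfl, by lia⟩

lemma exists_normalized_sqrt {A B y : ℤ} (hA : A % 4 = 1)
    (h : A ^ 2 - 17 * (2 * B) ^ 2 = y ^ 2) (hco : IsCoprime A B) :
    ∃ c d ε : ℤ, c ^ 2 + 17 * d ^ 2 = A ∧ c * d = B ∧ 4 ∣ c + d - 1 ∧ 4 ∣ c - d - ε ∧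
      (ε = 1 ∨ ε = -1) := by
  obtain ⟨c, d, hcd, hB⟩ := exists_sqrt hA h hco
  have hc := sq_emod_four_or_emod_eight c
  have hd := sq_emod_four_or_emod_eight d
  obtain ⟨ε, hε, hsub⟩ := exists_sign_four_dvd_sub (x := c - d) (by lia)
  rcases (by lia : 4 ∣ c + d - 1 ∨ 4 ∣ -c + -d - 1) with hadd | hadd
  · exact ⟨c, d, ε, hcd, hB, hadd, hsub, hε⟩
  · exact ⟨-c, -d, -ε, by rwa [neg_sq, neg_sq], by rwa [neg_mul_neg], hadd, by lia, by lia⟩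

/-! ### Integral points -/

lemma sixteen_dvd {a b x y : ℤ} (ha : a % 2 = 1) (hx : x ^ 2 = a ^ 2 - 8 * a * b - b ^ 2)
    (hy : 2 * y ^ 2 = 2 * a ^ 2 + a * b - 2 * b ^ 2) : 16 ∣ b := by
  have hdvd : ∀ {z : ℤ}, 2 ∣ a * z → 2 ∣ z :=
    (Int.isCoprime_two_left.2 (Int.odd_iff.2 ha)).dvd_of_dvd_mul_left
  have ha8 := sq_emod_four_or_emod_eight a
  have hx4 := sq_emod_four_or_emod_eight x
  have hy4 := sq_emod_four_or_emod_eight y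
  obtain ⟨k, rfl⟩ := hdvd (z := b) (by lia)
  obtain ⟨l, rfl⟩ : 2 ∣ k := by
    have hk4 := sq_emod_four_or_emod_eight k
    rw [mul_pow] at hx
    lia
  obtain ⟨p, rfl⟩ := hdvd (z := l) (by lia)
  obtain ⟨q, rfl⟩ := hdvd (z := p) (by lia)
  exact ⟨q, by ring⟩

lemma exists_pythagorean_parametrization {a b z : ℤ} (ha : a % 4 = 1)
    (hco : IsCoprime a b) (h : z ^ 2 = a ^ 2 + b ^ 2) :
    ∃ m n : ℤ, a = m ^ 2 - n ^ 2 ∧ b = 2 * m * n ∧ 4 ∣ m - 1 := by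
  obtain ⟨m, n, hab, -, -, -⟩ := PythagoreanTriple.coprime_classification.1
    ⟨show a * a + b * b = z * z by linarith, Int.isCoprime_iff_gcd_eq_one.1 hco⟩
  obtain ⟨ham, hbm⟩ := hab.resolve_right fun h ↦ by lia
  have hm := sq_emod_four_or_emod_eight m
  have hn := sq_emod_four_or_emod_eight n
  rcases (by lia : 4 ∣ m - 1 ∨ 4 ∣ -m - 1) with h4 | h4
  · exact ⟨m, n, ham, hbm, h4⟩
  · exact ⟨-m, -n, by rw [ham, neg_sq, neg_sq], by rw [hbm]; ring, h4⟩

lemma eq_zero_of_emod_four_eq_one {a b x y z : ℤ} (ha : a % 4 = 1) (hco : IsCoprime a b)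
    (hx : x ^ 2 = a ^ 2 - 8 * a * b - b ^ 2) (hy : 2 * y ^ 2 = 2 * a ^ 2 + a * b - 2 * b ^ 2)
    (hz : z ^ 2 = a ^ 2 + b ^ 2) : b = 0 := by
  by_contra hb0
  obtain ⟨b', rfl⟩ := sixteen_dvd (by lia) hx hy
  obtain ⟨k, β, rfl, hβ⟩ : ∃ (k : ℕ) (β : ℤ), b' = 2 ^ k * β ∧ 2 ∣ β - 1 := by
    obtain ⟨β, hb', hβ⟩ := (Int.finiteMultiplicity_iff (a := 2) (b := b')
      |>.2 ⟨by decide, by lia⟩).exists_eq_pow_mul_and_not_dvd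
    exact ⟨_, β, hb', by lia⟩
  set b' := 2 ^ k * β
  obtain ⟨m, n, ham, hbm, hm⟩ := exists_pythagorean_parametrization ha hco hz
  obtain ⟨c, d, ε, hc, hcd, hadd, hsub, hε⟩ := exists_normalized_sqrt (A := a - 4 * (16 * b'))
    (B := -8 * b') (y := x) (by lia) (by rw [hx]; ring) (by
      have h : IsCoprime a (-8 * b') := hco.of_isCoprime_of_dvd_right ⟨-2, by ring⟩
      rw [show a - 4 * (16 * b') = a + -8 * b' * 8 by ring]
      exact h.add_mul_left_left 8)
  obtain ⟨c', d', ε', hc', hcd', hadd', hsub', hε'⟩ := exists_normalized_sqrt (A := a + 4 * b')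
    (B := 2 * b') (y := y) (by lia) (by linarith) (by
      have h : IsCoprime a (2 * b') := hco.of_isCoprime_of_dvd_right ⟨8, by ring⟩
      rw [show a + 4 * b' = a + 2 * b' * 2 by ring]
      exact h.add_mul_left_left 2)
  exact RootData.isEmpty.false
    { k, m, n, c, d, c', d', ε, ε', β
      mul_eq := by rw [pow_add]; linarith
      two_dvd := hβ
      sq_add_sq := by linarith
      mul_eq_neg := by linarith
      sq_add_sq' := by linarith
      four_mul_eq := by linarith
      four_dvd := hm
      four_dvd_add := hadd
      four_dvd_sub := hsub
      four_dvd_add' := hadd'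
      four_dvd_sub' := hsub'
      sign := hε
      sign' := hε' }

lemma eq_zero_of_sq_eq {a b x y z : ℤ} (hco : IsCoprime a b) (hx1 : x % 2 = 1)
    (hx : x ^ 2 = a ^ 2 - 8 * a * b - b ^ 2) (hy : 2 * y ^ 2 = 2 * a ^ 2 + a * b - 2 * b ^ 2)
    (hz : z ^ 2 = a ^ 2 + b ^ 2) : b = 0 := by
  have ha : a % 2 = 1 := by
    have ha := sq_emod_four_or_emod_eight a
    have := sq_emod_four_or_emod_eight b
    have hx4 := sq_emod_four_or_emod_eight x
    have hz4 := sq_emod_four_or_emod_eight z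
    lia
  rcases (by lia : a % 4 = 1 ∨ -a % 4 = 1) with h | h
  · exact eq_zero_of_emod_four_eq_one h hco hx hy hz
  · exact neg_eq_zero.1 (eq_zero_of_emod_four_eq_one (x := x) (y := y) (z := z) h hco.neg_neg
      (by linarith) (by linarith) (by linarith))

lemma false_of_seventeen_mul_sq_eq {a b x y z : ℤ} (hco : IsCoprime a b)
    (hx : 17 * x ^ 2 = b ^ 2 - a ^ 2 + 8 * (a * b))
    (hy : 17 * y ^ 2 = 4 * (b ^ 2 - a ^ 2) - 2 * (a * b)) (hz : 17 * z ^ 2 = a ^ 2 + b ^ 2) :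
    False := by
  have hmod : ∀ a b x y z : ZMod 3, 17 * x ^ 2 = b ^ 2 - a ^ 2 + 8 * (a * b) →
      17 * y ^ 2 = 4 * (b ^ 2 - a ^ 2) - 2 * (a * b) → 17 * z ^ 2 = a ^ 2 + b ^ 2 →
      a = 0 ∧ b = 0 := by
    decide
  have h := hmod a b x y z (mod_cast congrArg (Int.cast : ℤ → ZMod 3) hx)
    (mod_cast congrArg (Int.cast : ℤ → ZMod 3) hy) (mod_cast congrArg (Int.cast : ℤ → ZMod 3) hz)
  rw [ZMod.intCast_zmod_eq_zero_iff_dvd, ZMod.intCast_zmod_eq_zero_iff_dvd] at h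
  exact Int.prime_three.not_isUnit (hco.isUnit_of_dvd' h.1 h.2)

section Factors

variable {e p q r X Y : ℤ} (hco : IsCoprime X Y) (hr : p * q = r ^ 2)
  (hX : e * X ^ 2 = q - p + 8 * r) (hY : e * Y ^ 2 = 4 * (q - p) - 2 * r)
include hco hr hX hY

lemma prime_dvd_of_dvd {l : ℤ} (hl : Prime l) (hp : l ∣ p) (hq : l ∣ q) : l ∣ e := by
  by_contra he
  have hlr : l ∣ r := hl.dvd_of_dvd_pow (hr ▸ hp.mul_right q)
  have hqp : l ∣ q - p := dvd_sub hq hp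
  have hlX : l ∣ e * X ^ 2 := hX ▸ dvd_add hqp (hlr.mul_left 8)
  have hlY : l ∣ e * Y ^ 2 := hY ▸ dvd_sub (hqp.mul_left 4) (hlr.mul_left 2)
  exact hl.not_isUnit (hco.isUnit_of_dvd'
    (hl.dvd_of_dvd_pow ((hl.dvd_or_dvd hlX).resolve_left he))
    (hl.dvd_of_dvd_pow ((hl.dvd_or_dvd hlY).resolve_left he)))

lemma exists_sq_of_not_dvd (hpos : 0 < p + q)
    (h : ∀ l : ℤ, Prime l → l ∣ p → l ∣ q → ¬l ∣ e) :
    ∃ α β : ℤ, IsCoprime α β ∧ p = α ^ 2 ∧ q = β ^ 2 ∧ r = α * β := by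
  have hpq : IsCoprime p q := isCoprime_of_prime_dvd (by rintro ⟨rfl, rfl⟩; simp at hpos)
    fun l hl hp hq ↦ h l hl hp hq (prime_dvd_of_dvd hco hr hX hY hl hp hq)
  have hnonneg : 0 ≤ p ∧ 0 ≤ q := by
    rcases mul_nonneg_iff.1 (hr ▸ sq_nonneg r) with h | h
    · exact h
    · lia
  obtain ⟨α, β, rfl, rfl, rfl⟩ := exists_sq_of_mul_eq_sq hpq hnonneg.1 hnonneg.2 hr
  exact ⟨α, β, (IsCoprime.pow_iff two_pos two_pos).1 hpq, rfl, rfl, rfl⟩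

end Factors

section Solution

variable {X Y Z : ℤ} (hco : IsCoprime X Y)
include hco

lemma sq_eq_of_mul_eq_sq {p q r : ℤ} (hX1 : X % 2 = 1) (hY0 : Y % 2 = 0) (hr : p * q = r ^ 2)
    (hX : X ^ 2 = q - p + 8 * r) (hY : Y ^ 2 = 4 * (q - p) - 2 * r) (hZ : Z ^ 2 = p + q)
    (hZ0 : Z ≠ 0) : X ^ 2 = Z ^ 2 ∧ Y ^ 2 = 4 * Z ^ 2 := by
  obtain ⟨α, β, hαβ, rfl, rfl, rfl⟩ := exists_sq_of_not_dvd (e := 1) hco hr (by rwa [one_mul])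
    (by rwa [one_mul]) (by rw [← hZ]; positivity)
    fun l hl _ _ h ↦ hl.not_isUnit (isUnit_of_dvd_one h)
  obtain ⟨y, rfl⟩ : 2 ∣ Y := by lia
  obtain rfl : α = 0 := neg_eq_zero.1 (eq_zero_of_sq_eq (x := X) (y := y) (z := Z) (a := β)
    hαβ.symm.neg_right hX1 (by linarith) (by linarith) (by linarith))
  constructor <;> linarith

lemma seventeen_dvd_of_mul_eq_sq {p q r : ℤ} (hr : p * q = r ^ 2)
    (hX : 17 * X ^ 2 = q - p + 8 * r) (hY : 17 * Y ^ 2 = 4 * (q - p) - 2 * r)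
    (hZ : 17 * Z ^ 2 = p + q) (hZ0 : Z ≠ 0) : 17 ∣ p ∧ 17 ∣ q := by
  by_contra h17
  obtain ⟨α, β, hαβ, rfl, rfl, rfl⟩ := exists_sq_of_not_dvd hco hr hX hY
    (by rw [← hZ]; positivity) fun l hl hp hq h ↦ by
      have hdvd := (hl.associated_of_dvd (by norm_num) h).symm.dvd
      exact h17 ⟨hdvd.trans hp, hdvd.trans hq⟩
  exact false_of_seventeen_mul_sq_eq hαβ hX hY hZ

-- With `2 p = 17 Z ^ 2 - 4 Y ^ 2 - X ^ 2` and `2 q = 17 Z ^ 2 + 4 Y ^ 2 + X ^ 2`, the product `p q`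
-- is the square of `r = (4 X ^ 2 - Y ^ 2) / 2`, so `p / 17` and `q / 17` are squares.
lemma sq_eq_of_odd (h : X ^ 4 + Y ^ 4 = 17 * Z ^ 4) (hX1 : X % 2 = 1) (hY0 : Y % 2 = 0) :
    X ^ 2 = Z ^ 2 ∧ Y ^ 2 = 4 * Z ^ 2 := by
  obtain ⟨y, rfl⟩ : 2 ∣ Y := by lia
  have hX8 := sq_emod_four_or_emod_eight X
  have hX4 := sq_emod_four_or_emod_eight (X ^ 2)
  have hZ8 := sq_emod_four_or_emod_eight Z
  have hZ4 := sq_emod_four_or_emod_eight (Z ^ 2)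
  rw [← pow_mul] at hX4 hZ4
  rw [mul_pow] at h
  have hZ0 : Z ≠ 0 := by
    rintro rfl
    lia
  obtain ⟨p, hp⟩ : ∃ p, 17 * Z ^ 2 - 16 * y ^ 2 - X ^ 2 = 2 * p :=
    ⟨(17 * Z ^ 2 - 16 * y ^ 2 - X ^ 2) / 2, by lia⟩
  obtain ⟨q, hq⟩ : ∃ q, q = p + 16 * y ^ 2 + X ^ 2 := ⟨_, rfl⟩
  obtain ⟨r, hr⟩ : ∃ r, r = 2 * X ^ 2 - 2 * y ^ 2 := ⟨_, rfl⟩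
  have hpq : p * q = r ^ 2 := by
    apply mul_left_cancel₀ (four_ne_zero (α := ℤ))
    rw [hr, hq]
    linear_combination -(2 * p + 17 * Z ^ 2 + 16 * y ^ 2 + X ^ 2) * hp - 17 * h
  have hX17 : 17 * X ^ 2 = q - p + 8 * r := by linarith
  have hY17 : 17 * (2 * y) ^ 2 = 4 * (q - p) - 2 * r := by linarith
  obtain ⟨⟨p, rfl⟩, q, rfl⟩ := seventeen_dvd_of_mul_eq_sq hco hpq hX17 hY17 (by linarith) hZ0
  obtain ⟨r, rfl⟩ : 17 ∣ r :=
    Prime.dvd_of_dvd_pow (n := 2) (by norm_num) (hpq ▸ (dvd_mul_right 17 p).mul_right _)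
  exact sq_eq_of_mul_eq_sq hco hX1 hY0 (p := p) (q := q) (r := r) (by linarith) (by linarith)
    (by linarith) (by linarith) hZ0

lemma sq_eq_or_sq_eq (h : X ^ 4 + Y ^ 4 = 17 * Z ^ 4) :
    X ^ 2 = Z ^ 2 ∧ Y ^ 2 = 4 * Z ^ 2 ∨ X ^ 2 = 4 * Z ^ 2 ∧ Y ^ 2 = Z ^ 2 := by
  have hX4 := sq_emod_four_or_emod_eight (X ^ 2)
  have hY4 := sq_emod_four_or_emod_eight (Y ^ 2)
  have hZ4 := sq_emod_four_or_emod_eight (Z ^ 2)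
  have hX := sq_emod_four_or_emod_eight X
  have hY := sq_emod_four_or_emod_eight Y
  simp only [← pow_mul] at hX4 hY4 hZ4
  have hne : ¬(X % 2 = 0 ∧ Y % 2 = 0) := fun h ↦ Int.prime_two.not_isUnit
    (hco.isUnit_of_dvd' (Int.dvd_of_emod_eq_zero h.1) (Int.dvd_of_emod_eq_zero h.2))
  rcases (by lia : X % 2 = 1 ∧ Y % 2 = 0 ∨ X % 2 = 0 ∧ Y % 2 = 1) with hpar | hpar
  · exact .inl (sq_eq_of_odd hco h hpar.1 hpar.2)
  · exact .inr (sq_eq_of_odd hco.symm (by rwa [add_comm]) hpar.2 hpar.1).symm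

end Solution

/-! ### Rational points -/

lemma den_eq_den {x y : ℚ} {n : ℕ} {N : ℤ} (hn : n ≠ 0) (h : x ^ n + y ^ n = N) :
    x.den = y.den := by
  apply Nat.pow_left_injective hn
  change x.den ^ n = y.den ^ n
  rw [← Rat.den_pow, ← Rat.den_pow, eq_sub_of_add_eq h, Rat.intCast_sub_den]

lemma exists_isCoprime_of_pow_add_pow_eq {x y : ℚ} (h : x ^ 4 + y ^ 4 = 17) :
    ∃ X Y Z : ℤ, IsCoprime X Y ∧ Z ≠ 0 ∧ x = X / Z ∧ y = Y / Z ∧ X ^ 4 + Y ^ 4 = 17 * Z ^ 4 := by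
  have hden : x.den = y.den := den_eq_den (N := 17) four_ne_zero (mod_cast h)
  have hy : y = y.num / (x.den : ℤ) := by
    rw [hden]
    exact (Rat.num_div_den y).symm
  have hnum : x.num ^ 4 + y.num ^ 4 = 17 * (x.den : ℤ) ^ 4 := by
    have hx0 : (x.den : ℚ) ≠ 0 := mod_cast x.den_ne_zero
    rw [← Rat.num_div_den x, hy, Int.cast_natCast] at h
    field_simp at h
    rw [mul_comm] at h
    exact_mod_cast h
  refine ⟨x.num, y.num, x.den, ?_, mod_cast x.den_ne_zero, (Rat.num_div_den x).symm, hy, hnum⟩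
  refine isCoprime_of_prime_dvd ?_ fun l hl hlx hly ↦ ?_
  · rintro ⟨hx0, hy0⟩
    rw [hx0, hy0] at hnum
    have := pow_ne_zero 4 (Int.natCast_ne_zero.2 x.den_ne_zero)
    lia
  have hlz : IsCoprime (l ^ 4) ((x.den : ℤ) ^ 4) :=
    (x.isCoprime_num_den.of_isCoprime_of_dvd_left hlx).pow
  have hl17 : l ^ 4 ∣ 17 := hlz.dvd_of_dvd_mul_right
    (hnum ▸ dvd_add (pow_dvd_pow_of_dvd hlx 4) (pow_dvd_pow_of_dvd hly 4))
  have h17 : Prime (17 : ℤ) := by norm_num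
  have hsq : l * l ∣ l ^ 4 := pow_two l ▸ pow_dvd_pow l (by lia)
  exact hl.not_isUnit (h17.squarefree l (hsq.trans hl17))

lemma sq_eq_one_and_sq_eq_four {x y : ℚ} (h : x ^ 4 + y ^ 4 = 17) :
    x ^ 2 = 1 ∧ y ^ 2 = 4 ∨ x ^ 2 = 4 ∧ y ^ 2 = 1 := by
  obtain ⟨X, Y, Z, hco, hZ, rfl, rfl, hXYZ⟩ := exists_isCoprime_of_pow_add_pow_eq h
  have hZ2 : (Z : ℚ) ^ 2 ≠ 0 := pow_ne_zero 2 (mod_cast hZ)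
  simp only [div_pow, div_eq_iff hZ2, one_mul]
  exact_mod_cast sq_eq_or_sq_eq hco hXYZ

end QuarticSeventeen

/-- The rational points on the curve `x⁴ + y⁴ = 17` are exactly `(±2, ±1)` and `(±1, ±2)`. -/
theorem rational_points_x4_y4_eq_seventeen :
    {P : ℚ × ℚ | P.1 ^ 4 + P.2 ^ 4 = 17} =
      {((2 : ℚ), (1 : ℚ)), ((2 : ℚ), (-1 : ℚ)), ((-2 : ℚ), (1 : ℚ)), ((-2 : ℚ), (-1 : ℚ)),
       ((1 : ℚ), (2 : ℚ)), ((1 : ℚ), (-2 : ℚ)), ((-1 : ℚ), (2 : ℚ)), ((-1 : ℚ), (-2 : ℚ))} := by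
  ext ⟨x, y⟩
  simp only [Set.mem_ofPred_eq, Set.mem_insert_iff, Set.mem_singleton_iff, Prod.mk.injEq]
  have h₁ : ∀ z : ℚ, z ^ 2 = 1 ↔ z = 1 ∨ z = -1 := fun z ↦ sq_eq_one_iff
  have h₄ : ∀ z : ℚ, z ^ 2 = 4 ↔ z = 2 ∨ z = -2 := fun z ↦ by
    rw [← sq_eq_sq_iff_eq_or_eq_neg]
    norm_num
  constructor
  · intro h
    have hxy := QuarticSeventeen.sq_eq_one_and_sq_eq_four h
    rw [h₁, h₁, h₄, h₄] at hxy
    tauto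
  · rintro (⟨rfl, rfl⟩ | ⟨rfl, rfl⟩ | ⟨rfl, rfl⟩ | ⟨rfl, rfl⟩ | ⟨rfl, rfl⟩ | ⟨rfl, rfl⟩ |
      ⟨rfl, rfl⟩ | ⟨rfl, rfl⟩) <;> norm_num
end

section
/- Let p be a prime and let 𝔽̄_p be an algebraic closure of the field 𝔽_p with p elements. The Frobenius automorphism Frob_p : x ↦ x^p is an automorphism of 𝔽̄_p fixing 𝔽_p, and the subgroup of the absolute Galois group Gal(𝔽̄_p/𝔽_p) generated by Frob_p is dense with respect to the Krull topology; that is, the closure of ⟨Frob_p⟩ in Gal(𝔽̄_p/𝔽_p) is the whole group. -/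
/-!
By the infinite Galois correspondence a subgroup of a Galois group is dense as soon as its fixed
field is the base field. The elements fixed by the `q`-power Frobenius are the roots of `X ^ q - X`,
and the elements of a field with `q` elements already account for all of these.
-/

open IntermediateField Polynomial

section DenseSubgroup

variable {K L : Type*} [Field K] [Field L] [Algebra K L]

theorem fixingSubgroup_fixedField_eq_topologicalClosure [IsGalois K L] (H : Subgroup Gal(L/K)) :
    (fixedField H).fixingSubgroup = H.topologicalClosure := by
  apply le_antisymm
  · calc (fixedField H).fixingSubgroup
        ≤ (fixedField H.topologicalClosure).fixingSubgroup :=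
          fixingSubgroup_antitone (fixedField_antitone H.le_topologicalClosure)
      _ = H.topologicalClosure :=
          InfiniteGalois.fixingSubgroup_fixedField
            ⟨H.topologicalClosure, H.isClosed_topologicalClosure⟩
  · exact H.topologicalClosure_minimal ((le_iff_le H _).mp le_rfl)
      (InfiniteGalois.fixingSubgroup_isClosed _)

theorem dense_iff_fixedField_eq_bot [IsGalois K L] (H : Subgroup Gal(L/K)) :
    Dense (H : Set Gal(L/K)) ↔ fixedField H = ⊥ := by
  calc Dense (H : Set Gal(L/K))
      ↔ H.topologicalClosure = ⊤ := by
        rw [dense_iff_closure_eq, ← Subgroup.topologicalClosure_coe, Subgroup.coe_eq_univ]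
    _ ↔ (fixedField H).fixingSubgroup = (⊥ : IntermediateField K L).fixingSubgroup := by
        rw [fixingSubgroup_fixedField_eq_topologicalClosure, fixingSubgroup_bot]
    _ ↔ fixedField H = ⊥ :=
        (Function.LeftInverse.injective fun E : IntermediateField K L ↦
          InfiniteGalois.fixedField_fixingSubgroup E).eq_iff

theorem mem_fixedField_zpowers_iff {σ : Gal(L/K)} {x : L} :
    x ∈ fixedField (Subgroup.zpowers σ) ↔ σ x = x := by
  rw [mem_fixedField_iff]
  refine ⟨fun h ↦ h σ (Subgroup.mem_zpowers σ), fun hx ↦ ?_⟩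
  have : Subgroup.zpowers σ ≤ MulAction.stabilizer Gal(L/K) x := Subgroup.zpowers_le.mpr hx
  exact fun τ hτ ↦ this hτ

end DenseSubgroup

section FiniteBaseField

theorem pow_card_eq_self_iff_mem_range_algebraMap (K : Type*) {R : Type*} [Field K] [Fintype K]
    [CommRing R] [IsDomain R] [Algebra K R] {x : R} :
    x ^ Fintype.card K = x ↔ x ∈ (algebraMap K R).range := by
  constructor
  · intro hx
    have splits : (X ^ Fintype.card K - X : K[X]).Splits := by
      simpa only [Nat.card_eq_fintype_card] using splits_X_pow_nat_card_sub_X (K := K)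
    have ne_zero : (X ^ Fintype.card K - X : K[X]) ≠ 0 :=
      FiniteField.X_pow_card_sub_X_ne_zero K Fintype.one_lt_card
    exact splits.mem_range_of_isRoot ne_zero (by simp [hx])
  · rintro ⟨a, rfl⟩
    rw [← map_pow, FiniteField.pow_card]

variable (K L : Type*) [Field K] [Field L] [Algebra K L] [Algebra.IsAlgebraic K L]

theorem isGalois_of_finite_of_isAlgebraic [Finite K] : IsGalois K L where
  to_normal := normal_iff.mpr fun x ↦ by
    have integral : IsIntegral K x := Algebra.IsIntegral.isIntegral x
    have : FiniteDimensional K K⟮x⟯ := adjoin.finiteDimensional integral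
    have : Finite K⟮x⟯ := Module.finite_of_finite K
    refine ⟨integral, ?_⟩
    have normal : Normal K K⟮x⟯ := inferInstance
    have splits := normal.splits (AdjoinSimple.gen K x)
    rw [minpoly_gen] at splits
    simpa only [Polynomial.map_map, ← IsScalarTower.algebraMap_eq] using
      splits.map (algebraMap K⟮x⟯ L)

variable [Fintype K]

theorem fixedField_zpowers_frobenius_eq_bot :
    fixedField (Subgroup.zpowers (FiniteField.frobeniusAlgEquivOfAlgebraic K L)) = ⊥ := by
  ext x
  rw [mem_fixedField_zpowers_iff, FiniteField.coe_frobeniusAlgEquivOfAlgebraic,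
    pow_card_eq_self_iff_mem_range_algebraMap, mem_bot, RingHom.mem_range, Set.mem_range]

theorem frobenius_generates_dense_subgroup_general :
    Dense (Subgroup.zpowers (FiniteField.frobeniusAlgEquivOfAlgebraic K L) : Set Gal(L/K)) :=
  have := isGalois_of_finite_of_isAlgebraic K L
  (dense_iff_fixedField_eq_bot _).mpr (fixedField_zpowers_frobenius_eq_bot K L)

end FiniteBaseField

/-- The Frobenius automorphism `x ↦ x^p` of an algebraic closure of `𝔽_p` generates a dense
subgroup of the absolute Galois group `Gal(𝔽̄_p/𝔽_p)` for the Krull topology. -/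
theorem frobenius_generates_dense_subgroup (p : ℕ) [Fact p.Prime] :
    ∃ frob : AlgebraicClosure (ZMod p) ≃ₐ[ZMod p] AlgebraicClosure (ZMod p),
      (∀ x : AlgebraicClosure (ZMod p), frob x = x ^ p) ∧
      Dense (↑(Subgroup.zpowers frob) :
        Set (AlgebraicClosure (ZMod p) ≃ₐ[ZMod p] AlgebraicClosure (ZMod p))) :=
  ⟨FiniteField.frobeniusAlgEquivOfAlgebraic _ _, fun x ↦ by simp [ZMod.card],
    frobenius_generates_dense_subgroup_general _ _⟩
end

section
/- Let p be a prime and let ℚ̄_p be an algebraic closure of the field ℚ_p of p-adic numbers. Then ℚ̄_p is generated over ℚ_p by its elements that are algebraic over ℚ; that is, the intermediate field of ℚ̄_p/ℚ_p generated by the set {x ∈ ℚ̄_p : x is algebraic over ℚ} is all of ℚ̄_p. -/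
/-!
Let `L` be a complete nonarchimedean field with a dense subfield `K`, and let `a` be separable over
`L` with minimal polynomial `f`. Approximate `f` by a monic polynomial `g` over `K` of the same
degree. By continuity of roots, `g` has a root `b` closer to `a` than any other conjugate of `a`, so
Krasner's lemma gives `L(a) ⊆ L(b)`, and comparing degrees gives equality. Hence every finite
separable extension of `L` is generated by an element algebraic over `K`.
-/

open Polynomial IntermediateField

theorem exists_pos_forall_isConjRoot_le_norm_sub {L M : Type*} [Field L] [NormedField M]
    [Algebra L M] {a : M} (ha : IsIntegral L a) :
    ∃ δ > 0, ∀ a' : M, IsConjRoot L a a' → a ≠ a' → δ ≤ ‖a - a'‖ := by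
  have hfin : ((minpoly L a).rootSet M \ {a}).Finite := (rootSet_finite _ _).sdiff
  obtain ⟨δ, hδ, hball⟩ := Metric.isOpen_iff.mp hfin.isClosed.isOpen_compl a (by simp)
  refine ⟨δ, hδ, fun a' hconj hne => ?_⟩
  by_contra! hlt
  exact hball (by rwa [Metric.mem_ball', dist_eq_norm])
    ⟨(isConjRoot_iff_mem_minpoly_rootSet ha).mp hconj, hne.symm⟩

section DenseSubfield

variable {K L M : Type*} [Field K]

theorem exists_monic_natDegree_eq_exists_root_norm_sub_lt [NormedField L] [NormedField M]
    [NormedAlgebra L M] [IsAlgClosed M] [Algebra K L] [Algebra K M] [IsScalarTower K L M]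
    (hd : DenseRange (algebraMap K L)) {f : L[X]} (hf : f.Monic) {a : M} (ha : aeval a f = 0)
    {δ : ℝ} (hδ : 0 < δ) :
    ∃ g : K[X], g.Monic ∧ g.natDegree = f.natDegree ∧ ∃ b : M, aeval b g = 0 ∧ ‖a - b‖ < δ := by
  have hdeg : f.natDegree ≠ 0 := fun h => by
    simp [hf.natDegree_eq_zero.mp h] at ha
  have hM : 0 < max ‖a‖ 1 := by positivity
  -- This tolerance makes the bound in the continuity of roots equal to `δ`.
  have hε : 0 < (δ / max ‖a‖ 1) ^ f.natDegree / (f.natDegree + 1) := by positivity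
  obtain ⟨g, gmon, gdeg, gcoeff⟩ :=
    exists_monic_and_natDegree_eq_and_norm_map_algebraMap_coeff_sub_lt hd hf hε
  obtain ⟨b, hb, hab⟩ := exists_aroots_norm_sub_lt_of_norm_coeff_sub_lt hε ha hf (gmon.map _)
    ((g.natDegree_map _).trans gdeg.symm) gcoeff (IsAlgClosed.splits _)
  refine ⟨g, gmon, gdeg.symm, b, ?_, ?_⟩
  · have hroot := (mem_aroots.mp hb).2
    rwa [aeval_map_algebraMap] at hroot
  · rwa [mul_div_cancel₀ _ (by positivity), Real.pow_rpow_inv_natCast (by positivity) hdeg,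
      div_mul_cancel₀ _ hM.ne'] at hab

variable [NontriviallyNormedField L] [CompleteSpace L] [IsUltrametricDist L] [Algebra K L]

theorem exists_isAlgebraic_adjoin_simple_eq_of_isAlgClosed [NormedField M] [NormedAlgebra L M]
    [Algebra.IsAlgebraic L M] [IsAlgClosed M] [Algebra K M] [IsScalarTower K L M]
    (hd : DenseRange (algebraMap K L)) {a : M} (ha : IsSeparable L a) :
    ∃ b : M, IsAlgebraic K b ∧ L⟮b⟯ = L⟮a⟯ := by
  obtain ⟨δ, hδ, hsep⟩ := exists_pos_forall_isConjRoot_le_norm_sub ha.isIntegral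
  obtain ⟨g, gmon, gdeg, b, hgb, hab⟩ := exists_monic_natDegree_eq_exists_root_norm_sub_lt hd
    (minpoly.monic ha.isIntegral) (minpoly.aeval L a) hδ
  have hb : IsIntegral L b := Algebra.IsIntegral.isIntegral b
  have hmem : a ∈ L⟮b⟯ := IsKrasner.krasner ha (IsAlgClosed.splits _) hb
    fun a' hconj hne => hab.trans_le (hsep a' hconj hne)
  have hdeg : (minpoly L b).natDegree ≤ (minpoly L a).natDegree := by
    rw [← gdeg, ← g.natDegree_map (algebraMap K L)]
    refine natDegree_le_of_dvd (minpoly.dvd L b ?_) (gmon.map _).ne_zero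
    rwa [aeval_map_algebraMap]
  have := adjoin.finiteDimensional hb
  have hle : Module.finrank L L⟮b⟯ ≤ Module.finrank L L⟮a⟯ := by
    rwa [adjoin.finrank hb, adjoin.finrank ha.isIntegral]
  exact ⟨b, ⟨g, gmon.ne_zero, hgb⟩,
    (eq_of_le_of_finrank_le (adjoin_simple_le_iff.mpr hmem) hle).symm⟩

variable [Field M] [Algebra L M] [Algebra K M] [IsScalarTower K L M]

theorem exists_isAlgebraic_adjoin_simple_eq [Algebra.IsAlgebraic L M]
    (hd : DenseRange (algebraMap K L)) {a : M} (ha : IsSeparable L a) :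
    ∃ b : M, IsAlgebraic K b ∧ L⟮b⟯ = L⟮a⟯ := by
  let C := AlgebraicClosure L
  let : NormedField C := spectralNorm.normedField L C
  let : NormedAlgebra L C := spectralNorm.normedAlgebra L C
  let i : M →ₐ[L] C := IsAlgClosed.lift
  have hia : IsSeparable L (i a) := ha.map i i.injective
  obtain ⟨c, hc, hadj⟩ := exists_isAlgebraic_adjoin_simple_eq_of_isAlgClosed hd hia
  have map_adjoin (x : M) : L⟮x⟯.map i = L⟮i x⟯ := by
    rw [adjoin_map, Set.image_singleton]
  obtain ⟨b, -, rfl⟩ : c ∈ L⟮a⟯.map i :=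
    map_adjoin a ▸ hadj ▸ mem_adjoin_simple_self L c
  refine ⟨b, (isAlgebraic_algHom_iff (i.restrictScalars K) i.injective).mp hc, ?_⟩
  exact map_injective i ((map_adjoin b).trans (hadj.trans (map_adjoin a).symm))

theorem padic_algebraic_closure_generated_by_algebraic_numbers_general [Algebra.IsSeparable L M]
    (hd : DenseRange (algebraMap K L)) : adjoin L {x : M | IsAlgebraic K x} = ⊤ := by
  refine eq_top_iff.mpr fun a _ => ?_
  obtain ⟨b, hb, hadj⟩ :=
    exists_isAlgebraic_adjoin_simple_eq hd (Algebra.IsSeparable.isSeparable L a)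
  have ha : a ∈ L⟮b⟯ := hadj ▸ mem_adjoin_simple_self L a
  have hsub : {b} ⊆ {x : M | IsAlgebraic K x} := Set.singleton_subset_iff.mpr hb
  exact adjoin.mono _ _ _ hsub ha

end DenseSubfield

/-- An algebraic closure of `ℚ_p` is generated over `ℚ_p` by its elements that are algebraic
over `ℚ`. -/
theorem padic_algebraic_closure_generated_by_algebraic_numbers
    (p : ℕ) [Fact p.Prime] :
    IntermediateField.adjoin ℚ_[p]
      {x : AlgebraicClosure ℚ_[p] | IsAlgebraic ℚ x} = ⊤ :=
  padic_algebraic_closure_generated_by_algebraic_numbers_general (Padic.denseRange_ratCast p)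
end
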